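/- arXiv:1207.1582 — 4 statements merged into one kernel-verified Lean document; each statement's English description precedes it below -/
import Mathlib

section
/- Let N ≥ 1 be an integer, c > −1, and α a real number with 1 + 2α(1+c)N > 0. Then ∫_{ℝ^N} exp(−α(∑_{i=1}^N λ_i)² − (1/(2(1+c)))∑_{i=1}^N λ_i²) ∏_{1≤i<j≤N} |λ_j − λ_i| dλ_1⋯dλ_N = N! (2π)^{N/2} (∏_{k=1}^N Γ(k/2)/Γ(1/2)) (1+c)^{N(N+1)/4} / √(1 + 2α(1+c)N). -/
open MeasureTheory Finset Real

namespace MehtaIntegral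

open Polynomial in
/-- Evaluation of the degree-`n` homogenization of `p`. -/
noncomputable def homogEval (n : ℕ) (p : ℝ[X]) (v w : ℝ) : ℝ :=
  ∑ k : Fin (n + 1), v ^ (k : ℕ) * w ^ (k.rev : ℕ) * p.coeff k

open Polynomial in
theorem homogEval_one_right {n : ℕ} {p : ℝ[X]} (hp : p.natDegree ≤ n) (x : ℝ) :
    homogEval n p x 1 = p.eval x := by
  rw [eval_eq_sum_range' (Nat.lt_succ_of_le hp), homogEval, Finset.sum_range]
  exact Finset.sum_congr rfl fun i _ => by simp [mul_comm]

open Polynomial in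
theorem homogEval_one_zero (n : ℕ) (p : ℝ[X]) : homogEval n p 1 0 = p.coeff n := by
  rw [homogEval, Fin.sum_univ_castSucc, Finset.sum_eq_zero]
  · simp
  · intro k _
    have : ((k.castSucc).rev : ℕ) ≠ 0 := by simp [Fin.val_rev]; omega
    rw [zero_pow this, mul_zero, zero_mul]

open Polynomial in
theorem det_homogEval_mul_det {n : ℕ} (p : Fin (n + 1) → ℝ[X]) (v w v' w' : Fin (n + 1) → ℝ) :
    (Matrix.of fun i j => homogEval n (p j) (v i) (w i)).det * (Matrix.projVandermonde v' w').det =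
      (Matrix.of fun i j => homogEval n (p j) (v' i) (w' i)).det *
        (Matrix.projVandermonde v w).det := by
  have key : ∀ v w : Fin (n + 1) → ℝ,
      (Matrix.of fun i j => homogEval n (p j) (v i) (w i)) =
        Matrix.projVandermonde v w * Matrix.of fun k j => (p j).coeff (k : Fin (n + 1)) := by
    intro v w
    ext i j
    simp [Matrix.mul_apply, homogEval, Matrix.projVandermonde_apply]
  rw [key, key, Matrix.det_mul, Matrix.det_mul]
  ring

/-- The Vandermonde product `∏_{i<j} (x j - x i)`. -/
def vdm {n : ℕ} (x : Fin n → ℝ) : ℝ := ∏ i, ∏ j ∈ Ioi i, (x j - x i)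

/-- The product `∏_{k ≠ i} (x i - x k)`. -/
def nodeProd {n : ℕ} (x : Fin n → ℝ) (i : Fin n) : ℝ := ∏ k ∈ univ.erase i, (x i - x k)

theorem vdm_pos {n : ℕ} {x : Fin n → ℝ} (hx : StrictMono x) : 0 < vdm x :=
  prod_pos fun _ _ => prod_pos fun _ hj => sub_pos.2 (hx (mem_Ioi.1 hj))

theorem abs_prod_nodeProd {n : ℕ} (x : Fin n → ℝ) : |∏ i, nodeProd x i| = vdm x ^ 2 := by
  have h1 : ∀ i, |nodeProd x i| = (∏ k ∈ Ioi i, |x k - x i|) * ∏ k ∈ Iio i, |x i - x k| := by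
    intro i
    rw [nodeProd, abs_prod,
      show univ.erase i = Ioi i ∪ Iio i by ext k; simp [lt_or_lt_iff_ne, eq_comm],
      prod_union (disjoint_left.2 fun k hk hk' => lt_asymm (mem_Ioi.1 hk) (mem_Iio.1 hk'))]
    simp_rw [abs_sub_comm (x i)]
  have h2 : ∏ i, ∏ k ∈ Iio i, |x i - x k| = ∏ i, ∏ k ∈ Ioi i, |x k - x i| :=
    prod_comm' (by simp)
  rw [abs_prod, prod_congr rfl fun i _ => h1 i, prod_mul_distrib, h2, ← sq, ← sq_abs (vdm x), vdm,
    abs_prod]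
  simp_rw [abs_prod]

theorem nodeProd_ne_zero {n : ℕ} {x : Fin n → ℝ} (hx : Function.Injective x) (i : Fin n) :
    nodeProd x i ≠ 0 :=
  prod_ne_zero_iff.2 fun _ hk => sub_ne_zero.2 fun h => (mem_erase.1 hk).1 (hx h).symm

theorem nodeProd_eq_prod_succAbove {n : ℕ} (x : Fin (n + 1) → ℝ) (i : Fin (n + 1)) :
    nodeProd x i = ∏ j, (x i - x (i.succAbove j)) := by
  rw [nodeProd, Fin.univ_succAbove n i, cons_eq_insert, erase_insert (by simp), prod_map]
  rfl

theorem abs_det_projVandermonde_cons {m : ℕ} (a : Fin m → ℝ) :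
    |(Matrix.projVandermonde (Fin.cons 1 a : Fin (m + 1) → ℝ) (Fin.cons 0 1)).det| = |vdm a| := by
  rw [Matrix.det_projVandermonde, Fin.prod_univ_succ]
  simp [Fin.Ioi_zero_eq_map, Fin.prod_Ioi_succ, vdm, abs_mul, abs_prod]

theorem det_projVandermonde_one {m : ℕ} (x : Fin m → ℝ) :
    (Matrix.projVandermonde x 1).det = vdm x := by
  simp [Matrix.det_projVandermonde, vdm]

open Polynomial in
theorem natDegree_prod_X_sub_C {n : ℕ} (s : Finset (Fin n)) (x : Fin n → ℝ) :
    (∏ k ∈ s, (X - C (x k))).natDegree = #s := by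
  simp

open Polynomial in
/-- Jacobian of `x ↦ (∑ x, (p_x(a_i))_i)`, `p_x` being the monic polynomial with roots `x`. -/
theorem abs_det_sum_cons_eval {m : ℕ} {x : Fin (m + 1) → ℝ} (hx : StrictMono x) {a : Fin m → ℝ}
    (ha : StrictMono a) :
    |(Matrix.of (Fin.cons (fun _ => 1) fun i j => ∏ k ∈ univ.erase j, (a i - x k) :
      Fin (m + 1) → Fin (m + 1) → ℝ)).det| = vdm x * vdm a := by
  set p : Fin (m + 1) → ℝ[X] := fun j => ∏ k ∈ univ.erase j, (X - C (x k)) with hp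
  have hdeg : ∀ j, (p j).natDegree = m := fun j => by
    simp [hp]
  have hmon : ∀ j, (p j).Monic := fun j => monic_prod_of_monic _ _ fun k _ => monic_X_sub_C _
  have h := det_homogEval_mul_det p (Fin.cons 1 a) (Fin.cons 0 1) x 1
  have e1 : (Matrix.of fun i j => homogEval m (p j) ((Fin.cons 1 a : Fin (m + 1) → ℝ) i)
      ((Fin.cons 0 1 : Fin (m + 1) → ℝ) i)) =
      Matrix.of (Fin.cons (fun _ => 1) fun i j => ∏ k ∈ univ.erase j, (a i - x k)) := by
    ext i j
    refine Fin.cases ?_ (fun i => ?_) i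
    · have := (hmon j).coeff_natDegree
      rw [hdeg] at this
      simp [homogEval_one_zero, this]
    · simp only [Matrix.of_apply, Fin.cons_succ, Pi.one_apply]
      rw [homogEval_one_right (hdeg j).le]
      simp [hp, eval_prod]
  have e2 : (Matrix.of fun i j => homogEval m (p j) (x i) ((1 : Fin (m + 1) → ℝ) i)) =
      Matrix.diagonal (nodeProd x) := by
    ext i j
    rw [Matrix.of_apply, Pi.one_apply, homogEval_one_right (hdeg j).le, Matrix.diagonal_apply]
    split_ifs with hij
    · subst hij
      simp [hp, eval_prod, nodeProd]
    · simp only [hp, eval_prod]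
      exact prod_eq_zero (mem_erase.2 ⟨hij, mem_univ _⟩) (by simp)
  rw [e1, e2, det_projVandermonde_one, Matrix.det_diagonal] at h
  have h' := congrArg abs h
  rw [abs_mul, abs_mul, abs_prod_nodeProd, abs_det_projVandermonde_cons,
    abs_of_pos (vdm_pos hx), abs_of_pos (vdm_pos ha)] at h'
  have := vdm_pos hx
  refine mul_right_cancel₀ this.ne' (h'.trans (by ring))

open Polynomial in
/-- Jacobian of `(t, a) ↦ (t * p_a(x_i))_i`, `p_a` being the monic polynomial with roots `a`. -/
theorem abs_det_scale_eval {m : ℕ} {x : Fin (m + 1) → ℝ} (hx : StrictMono x) {a : Fin m → ℝ}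
    (ha : StrictMono a) {t : ℝ} (ht : 0 < t) :
    |(Matrix.of (fun i => Fin.cons (∏ k, (x i - a k))
        fun j => -t * ∏ k ∈ univ.erase j, (x i - a k) :
      Fin (m + 1) → Fin (m + 1) → ℝ)).det| = t ^ m * (vdm x * vdm a) := by
  set p : Fin (m + 1) → ℝ[X] := Fin.cons (∏ k, (X - C (a k)))
    fun j => C (-t) * ∏ k ∈ univ.erase j, (X - C (a k)) with hp
  have hdeg : ∀ j : Fin m, (∏ k ∈ univ.erase j, (X - C (a k))).natDegree < m := fun j => by
    rw [natDegree_prod_X_sub_C]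
    simpa using j.pos
  have hdeg' : ∀ j, (p j).natDegree ≤ m := fun j => by
    refine Fin.cases ?_ (fun j => ?_) j
    · simp [hp]
    · simpa only [hp, Fin.cons_succ] using (natDegree_C_mul_le _ _).trans (hdeg j).le
  have hmon : (∏ k, (X - C (a k))).Monic := monic_prod_of_monic _ _ fun k _ => monic_X_sub_C _
  have h := det_homogEval_mul_det p x 1 (Fin.cons 1 a) (Fin.cons 0 1)
  have e1 : (Matrix.of fun i j => homogEval m (p j) (x i) ((1 : Fin (m + 1) → ℝ) i)) =
      Matrix.of (fun i => Fin.cons (∏ k, (x i - a k))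
        fun j => -t * ∏ k ∈ univ.erase j, (x i - a k)) := by
    ext i j
    rw [Matrix.of_apply, Pi.one_apply, homogEval_one_right (hdeg' j)]
    refine Fin.cases ?_ (fun j => ?_) j
    · simp [hp, eval_prod]
    · simp [hp, eval_prod]
  have e2 : (Matrix.of fun i j => homogEval m (p j) ((Fin.cons 1 a : Fin (m + 1) → ℝ) i)
      ((Fin.cons 0 1 : Fin (m + 1) → ℝ) i)) =
      Matrix.diagonal (Fin.cons 1 fun i => -t * nodeProd a i) := by
    ext i j
    rw [Matrix.of_apply, Matrix.diagonal_apply]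
    refine Fin.cases ?_ (fun i => ?_) i <;> refine Fin.cases ?_ (fun j => ?_) j
    · have := hmon.coeff_natDegree
      rw [natDegree_prod_X_sub_C, card_univ, Fintype.card_fin] at this
      simp [homogEval_one_zero, hp, this]
    · simp [homogEval_one_zero, hp, coeff_eq_zero_of_natDegree_lt (hdeg j), (Fin.succ_ne_zero _).symm]
    · simp only [Fin.cons_succ, Pi.one_apply, homogEval_one_right (hdeg' _)]
      rw [if_neg (Fin.succ_ne_zero i)]
      simp only [hp, Fin.cons_zero, eval_prod]
      exact prod_eq_zero (mem_univ i) (by simp)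
    · simp only [Fin.cons_succ, Pi.one_apply, homogEval_one_right (hdeg' _), Fin.succ_inj]
      split_ifs with hij
      · subst hij
        simp [hp, eval_prod, nodeProd]
      · simp only [hp, Fin.cons_succ, eval_mul, eval_prod]
        rw [prod_eq_zero (mem_erase.2 ⟨hij, mem_univ _⟩) (by simp), mul_zero]
  rw [e1, e2, det_projVandermonde_one, Matrix.det_diagonal, Fin.prod_univ_succ] at h
  simp only [Fin.cons_zero, Fin.cons_succ, one_mul, prod_mul_distrib, prod_const, card_univ,
    Fintype.card_fin] at h
  have h' := congrArg abs h
  rw [abs_mul, abs_mul, abs_mul, abs_prod_nodeProd, abs_det_projVandermonde_cons, abs_pow, abs_neg,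
    abs_of_pos ht, abs_of_pos (vdm_pos hx), abs_of_pos (vdm_pos ha)] at h'
  have := vdm_pos ha
  refine mul_right_cancel₀ this.ne' (h'.trans (by ring))

/-- `x` and `a` strictly interlace: `x 0 < a 0 < x 1 < ⋯ < a (m - 1) < x m`. -/
def Interlace {m : ℕ} (x : Fin (m + 1) → ℝ) (a : Fin m → ℝ) : Prop :=
  ∀ i, x i.castSucc < a i ∧ a i < x i.succ

namespace Interlace

variable {m : ℕ} {x : Fin (m + 1) → ℝ} {a : Fin m → ℝ}

theorem strictMono_left (h : Interlace x a) : StrictMono x :=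
  Fin.strictMono_iff_lt_succ.2 fun i => (h i).1.trans (h i).2

theorem lt_of_le (h : Interlace x a) {i : Fin m} {j : Fin (m + 1)} (hj : j ≤ i.castSucc) :
    x j < a i :=
  (h.strictMono_left.monotone hj).trans_lt (h i).1

theorem lt_of_lt (h : Interlace x a) {i : Fin m} {j : Fin (m + 1)} (hj : i.castSucc < j) :
    a i < x j :=
  (h i).2.trans_le (h.strictMono_left.monotone (Fin.castSucc_lt_iff_succ_le.1 hj))

theorem strictMono_right (h : Interlace x a) : StrictMono a := fun _ j hij =>
  (h.lt_of_lt (j := j.castSucc) (Fin.castSucc_lt_castSucc_iff.2 hij)).trans (h j).1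

theorem ne (h : Interlace x a) (i : Fin (m + 1)) (j : Fin m) : x i ≠ a j := by
  rcases le_or_gt i j.castSucc with hij | hij
  · exact (h.lt_of_le hij).ne
  · exact (h.lt_of_lt hij).ne'

theorem eq_of_eq {b : Fin m → ℝ} (h : Interlace x a) (hb : Interlace x b) {i j : Fin m}
    (hij : a i = b j) : i = j := by
  rcases lt_trichotomy i j with hlt | heq | hlt
  · have h1 := h.lt_of_lt (i := i) (j := j.castSucc) (Fin.castSucc_lt_castSucc_iff.2 hlt)
    have h2 := (hb j).1
    linarith
  · exact heq
  · have h1 := hb.lt_of_lt (i := j) (j := i.castSucc) (Fin.castSucc_lt_castSucc_iff.2 hlt)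
    have h2 := (h i).1
    linarith

theorem eq_of_eq_left {y : Fin (m + 1) → ℝ} (h : Interlace x a) (hy : Interlace y a)
    {i j : Fin (m + 1)} (hij : x i = y j) : i = j := by
  have key : ∀ {x y : Fin (m + 1) → ℝ}, Interlace x a → Interlace y a → ∀ {i j : Fin (m + 1)},
      i < j → x i < y j := by
    intro x y h hy i j hlt
    have hi : i ≠ Fin.last m := (hlt.trans_le (Fin.le_last j)).ne
    obtain ⟨k, rfl⟩ := Fin.exists_castSucc_eq.2 hi
    exact (h k).1.trans (hy.lt_of_lt hlt)
  rcases lt_trichotomy i j with hlt | heq | hlt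
  · exact absurd hij (key h hy hlt).ne
  · exact heq
  · exact absurd hij (key hy h hlt).ne'

theorem div_nodeProd_pos (h : Interlace x a) (i : Fin (m + 1)) :
    0 < (∏ j, (x i - a j)) / nodeProd x i := by
  rw [nodeProd_eq_prod_succAbove, ← prod_div_distrib]
  refine prod_pos fun j _ => ?_
  rcases le_or_gt i j.castSucc with hij | hij
  · rw [Fin.succAbove_of_le_castSucc _ _ hij]
    exact div_pos_of_neg_of_neg (sub_neg.2 (h.lt_of_le hij))
      (sub_neg.2 (h.strictMono_left (hij.trans_lt j.castSucc_lt_succ)))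
  · rw [Fin.succAbove_of_castSucc_lt _ _ hij]
    exact div_pos (sub_pos.2 (h.lt_of_lt hij)) (sub_pos.2 (h.strictMono_left hij))

theorem neg_div_nodeProd_pos (h : Interlace x a) (i : Fin m) :
    0 < -(∏ j, (a i - x j)) / nodeProd a i := by
  rw [Fin.prod_univ_succAbove _ i.castSucc, ← mul_prod_erase univ _ (mem_univ i), nodeProd,
    Fin.succAbove_of_le_castSucc _ _ le_rfl, ← mul_assoc, ← neg_mul, mul_div_assoc,
    ← prod_div_distrib]
  refine mul_pos ?_ (prod_pos fun k hk => ?_)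
  · rw [← mul_neg]
    exact mul_pos (sub_pos.2 (h i).1) (by linarith [(h i).2])
  · rcases lt_or_gt_of_ne (mem_erase.1 hk).1 with hlt | hlt
    · rw [Fin.succAbove_of_castSucc_lt _ _ (Fin.castSucc_lt_castSucc_iff.2 hlt)]
      exact div_pos (sub_pos.2 (h.lt_of_le (Fin.castSucc_le_castSucc_iff.2 hlt.le)))
        (sub_pos.2 (h.strictMono_right hlt))
    · rw [Fin.succAbove_of_le_castSucc _ _ (Fin.castSucc_le_castSucc_iff.2 hlt.le)]
      refine div_pos_of_neg_of_neg (sub_neg.2 (h.lt_of_lt ?_))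
        (sub_neg.2 (h.strictMono_right hlt))
      exact Fin.castSucc_lt_succ_iff.2 hlt.le

end Interlace

theorem exists_interlace_roots {n : ℕ} {y : Fin (n + 1) → ℝ} (hy : StrictMono y) {f : ℝ → ℝ}
    (hf : Continuous f) (hpos : ∀ i, 0 < f (y i) * nodeProd y i) :
    ∃ r : Fin n → ℝ, Interlace y r ∧ ∀ j, f (r j) = 0 := by
  obtain ⟨r, hr⟩ : ∃ r : Fin n → ℝ, Interlace y r :=
    Classical.skolem.1 fun i => exists_between (hy i.castSucc_lt_succ)
  have hpos' : ∀ i, 0 < f (y i) * ∏ j, (y i - r j) := by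
    intro i
    have h1 := hr.div_nodeProd_pos i
    have h2 := nodeProd_ne_zero hy.injective i
    have := mul_pos (hpos i) h1
    rwa [mul_assoc, mul_div_cancel₀ _ h2] at this
  suffices ∀ j : Fin n, ∃ z, (y j.castSucc < z ∧ z < y j.succ) ∧ f z = 0 by
    obtain ⟨r, hr⟩ := Classical.skolem.1 this
    exact ⟨r, fun j => (hr j).1, fun j => (hr j).2⟩
  intro j
  have hlt := hy j.castSucc_lt_succ
  have hneg : f (y j.castSucc) * f (y j.succ) < 0 := by
    have h1 := mul_pos (hpos' j.castSucc) (hpos' j.succ)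
    rw [mul_mul_mul_comm, ← prod_mul_distrib, ← mul_prod_erase univ _ (mem_univ j)] at h1
    have h2 : 0 < ∏ k ∈ univ.erase j, (y j.castSucc - r k) * (y j.succ - r k) := by
      refine prod_pos fun k hk => ?_
      rcases lt_or_gt_of_ne (mem_erase.1 hk).1 with hkj | hkj
      · exact mul_pos (sub_pos.2 (hr.lt_of_lt (Fin.castSucc_lt_castSucc_iff.2 hkj)))
          (sub_pos.2 (hr.lt_of_lt (Fin.castSucc_lt_succ_iff.2 hkj.le)))
      · refine mul_pos_of_neg_of_neg
          (sub_neg.2 (hr.lt_of_le (Fin.castSucc_le_castSucc_iff.2 hkj.le)))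
          (sub_neg.2 (hr.lt_of_le (Fin.succ_le_castSucc_iff.2 hkj)))
    have h3 : (y j.castSucc - r j) * (y j.succ - r j) < 0 :=
      mul_neg_of_neg_of_pos (sub_neg.2 (hr j).1) (sub_pos.2 (hr j).2)
    rw [← mul_assoc] at h1
    have h4 := pos_of_mul_pos_left h1 h2.le
    nlinarith
  have hc : ContinuousOn f (Set.Icc (y j.castSucc) (y j.succ)) := hf.continuousOn
  rcases mul_neg_iff.1 hneg with ⟨h1, h2⟩ | ⟨h1, h2⟩
  · obtain ⟨z, hz, hz0⟩ := intermediate_value_Ioo' hlt.le hc ⟨h2, h1⟩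
    exact ⟨z, hz, hz0⟩
  · obtain ⟨z, hz, hz0⟩ := intermediate_value_Ioo hlt.le hc ⟨h1, h2⟩
    exact ⟨z, hz, hz0⟩

open Polynomial in
theorem coeff_X_sq_mul_prod {ι : Type*} [DecidableEq ι] (s : Finset ι) (x : ι → ℝ) :
    (X ^ 2 * ∏ i ∈ s, (X - C (x i))).coeff (#s) =
        ((∑ i ∈ s, x i) ^ 2 - ∑ i ∈ s, x i ^ 2) / 2 ∧
      (X ^ 2 * ∏ i ∈ s, (X - C (x i))).coeff (#s + 1) = -∑ i ∈ s, x i ∧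
      (X ^ 2 * ∏ i ∈ s, (X - C (x i))).coeff (#s + 2) = 1 := by
  induction s using Finset.induction_on with
  | empty => simp [coeff_X_pow]
  | insert b s hb ih =>
    obtain ⟨h0, h1, h2⟩ := ih
    have h3 : (X ^ 2 * ∏ i ∈ s, (X - C (x i))).coeff (#s + 3) = 0 := by
      rw [show #s + 3 = (#s + 1) + 2 by ring, coeff_X_pow_mul]
      exact coeff_eq_zero_of_natDegree_lt (by simp)
    have hstep : ∀ k, (X ^ 2 * ∏ i ∈ insert b s, (X - C (x i))).coeff (k + 1) =
        (X ^ 2 * ∏ i ∈ s, (X - C (x i))).coeff k -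
          x b * (X ^ 2 * ∏ i ∈ s, (X - C (x i))).coeff (k + 1) := by
      intro k
      rw [prod_insert hb, show X ^ 2 * ((X - C (x b)) * ∏ i ∈ s, (X - C (x i))) =
        X * (X ^ 2 * ∏ i ∈ s, (X - C (x i))) - C (x b) * (X ^ 2 * ∏ i ∈ s, (X - C (x i))) by ring,
        coeff_sub, coeff_X_mul, coeff_C_mul]
    rw [card_insert_of_notMem hb, hstep, hstep, hstep, h0, h1, h2, h3, sum_insert hb, sum_insert hb]
    refine ⟨by ring, by ring, by ring⟩

open Polynomial in
theorem sum_scale_div_nodeProd {m : ℕ} {x : Fin (m + 1) → ℝ} (hx : Function.Injective x)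
    (t : ℝ) (a : Fin m → ℝ) : ∑ i, t * (∏ j, (x i - a j)) / nodeProd x i = t := by
  have hmon : (∏ k, (X - C (a k))).Monic := monic_prod_of_monic _ _ fun k _ => monic_X_sub_C _
  have hdeg : (∏ k, (X - C (a k))).natDegree = m := by simp
  have h := Lagrange.coeff_eq_sum (s := univ) (v := x) hx.injOn (P := C t * ∏ k, (X - C (a k)))
    (by
      refine (degree_le_of_natDegree_le ((natDegree_C_mul_le _ _).trans hdeg.le)).trans_lt ?_
      simp only [card_univ, Fintype.card_fin]
      exact_mod_cast Nat.lt_succ_self m)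
  have hc := hmon.coeff_natDegree
  rw [hdeg] at hc
  simpa [eval_prod, hc, nodeProd] using h.symm

open Polynomial in
theorem sum_sq_eq {m : ℕ} (x : Fin (m + 1) → ℝ) {a : Fin m → ℝ} (ha : Function.Injective a) :
    ∑ j, x j ^ 2 = ∑ i, a i ^ 2 + (∑ j, x j - ∑ i, a i) ^ 2 +
      2 * ∑ i, -(∏ j, (a i - x j)) / nodeProd a i := by
  obtain ⟨x0, x1, x2⟩ := coeff_X_sq_mul_prod univ x
  obtain ⟨a0, a1, a2⟩ := coeff_X_sq_mul_prod univ a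
  rw [card_univ, Fintype.card_fin] at x0 x1 x2 a0 a1 a2
  set P := ∏ j, (X - C (x j)) with hP
  set A := ∏ i, (X - C (a i)) with hA
  set d := ∑ j, x j - ∑ i, a i with hd
  set R := P - (X - C d) * A with hR
  have hPd : P.natDegree = m + 1 := by simp [hP]
  have hAd : A.natDegree = m := by simp [hA]
  have hXR : ∀ k, (X ^ 2 * R).coeff (k + 1) =
      (X ^ 2 * P).coeff (k + 1) - (X ^ 2 * A).coeff k + d * (X ^ 2 * A).coeff (k + 1) := by
    intro k
    rw [hR, show X ^ 2 * (P - (X - C d) * A) = X ^ 2 * P - X * (X ^ 2 * A) + C d * (X ^ 2 * A) by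
      ring, coeff_add, coeff_sub, coeff_X_mul, coeff_C_mul]
  have a3 : (X ^ 2 * A).coeff (m + 2 + 1) = 0 := by
    rw [show m + 2 + 1 = (m + 1) + 2 by ring, coeff_X_pow_mul]
    exact coeff_eq_zero_of_natDegree_lt (by omega)
  have r1 : R.coeff (m + 1) = 0 := by
    rw [← coeff_X_pow_mul _ 2, hXR (m + 2), a3, a2, x2]
    ring
  have r0 : R.coeff m = 0 := by
    rw [← coeff_X_pow_mul _ 2, hXR (m + 1), a2, a1, x1, hd]
    ring
  have hRdeg : R.degree < m := by
    rw [degree_lt_iff_coeff_zero]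
    intro k hk
    rcases Nat.lt_or_ge (m + 1) k with h | h
    · refine coeff_eq_zero_of_natDegree_lt (lt_of_le_of_lt ?_ h)
      refine (natDegree_sub_le _ _).trans (max_le hPd.le ?_)
      refine natDegree_mul_le.trans ?_
      rw [natDegree_X_sub_C, hAd, add_comm]
    · rcases (show k = m ∨ k = m + 1 by omega) with rfl | rfl
      exacts [r0, r1]
  have hsum : (X ^ 2 * R).coeff (m + 1) = ∑ i, (∏ j, (a i - x j)) / nodeProd a i := by
    have h := Lagrange.coeff_eq_sum (s := univ) (v := a) ha.injOn (P := R) (by simpa using hRdeg)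
    have hev : ∀ i, R.eval (a i) = ∏ j, (a i - x j) := by
      intro i
      have : ∏ j, (a i - a j) = 0 := prod_eq_zero (mem_univ i) (sub_self _)
      simp [hR, hP, hA, eval_prod, this]
    simp only [hev] at h
    rw [card_univ, Fintype.card_fin] at h
    refine Eq.trans ?_ h
    cases m with
    | zero =>
      have : R = 0 := by simpa using hRdeg
      simp [this]
    | succ m => exact coeff_X_pow_mul R 2 m
  rw [hXR, a0, a1, x0] at hsum
  simp only [neg_div, sum_neg_distrib]
  rw [← hsum, hd]
  ring

theorem hasFDerivAt_of_apply {ι κ : Type*} [Fintype ι] [Fintype κ] [DecidableEq ι]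
    {f : (ι → ℝ) → κ → ℝ}
    {x : ι → ℝ} {M : Matrix κ ι ℝ}
    (h : ∀ i, HasFDerivAt (fun y => f y i)
      (∑ j, M i j • ContinuousLinearMap.proj (R := ℝ) (φ := fun _ : ι => ℝ) j) x) :
    HasFDerivAt f (Matrix.toLin' M).toContinuousLinearMap x := by
  rw [hasFDerivAt_pi']
  intro i
  convert! h i using 1
  ext v
  simp [Matrix.mulVec, dotProduct]

theorem det_toContinuousLinearMap_toLin' {ι : Type*} [Fintype ι] [DecidableEq ι] (M : Matrix ι ι ℝ) :
    (Matrix.toLin' M).toContinuousLinearMap.det = M.det := by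
  rw [ContinuousLinearMap.det, LinearMap.coe_toContinuousLinearMap, LinearMap.det_toLin']

/-- The map `(t, a) ↦ (t * ∏ j, (x i - a j) / ∏ k ≠ i, (x i - x k))_i`. -/
noncomputable def scaleMap {m : ℕ} (x y : Fin (m + 1) → ℝ) (i : Fin (m + 1)) : ℝ :=
  y 0 * (∏ j, (x i - Fin.tail y j)) / nodeProd x i

/-- The map `x ↦ (∑ x - ∑ a, (- ∏ j, (a i - x j) / ∏ k ≠ i, (a i - a k))_i)`. -/
noncomputable def sumMap {m : ℕ} (a : Fin m → ℝ) (x : Fin (m + 1) → ℝ) : Fin (m + 1) → ℝ :=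
  Fin.cons (∑ j, x j - ∑ i, a i) fun i => -(∏ j, (a i - x j)) / nodeProd a i

theorem hasFDerivAt_scaleMap {m : ℕ} (x y : Fin (m + 1) → ℝ) :
    HasFDerivAt (scaleMap x) (Matrix.toLin' (Matrix.of fun i j => (nodeProd x i)⁻¹ *
      Matrix.of (fun i => Fin.cons (∏ k, (x i - Fin.tail y k))
        fun j => -y 0 * ∏ k ∈ univ.erase j, (x i - Fin.tail y k)) i j)).toContinuousLinearMap y := by
  refine hasFDerivAt_of_apply fun i => ?_
  have h0 : HasFDerivAt (fun y : Fin (m + 1) → ℝ => y 0)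
    (ContinuousLinearMap.proj (R := ℝ) (φ := fun _ => ℝ) 0) y := hasFDerivAt_apply 0 y
  have h1 := HasFDerivAt.finsetProd (u := univ)
    (g := fun (j : Fin m) (y : Fin (m + 1) → ℝ) => x i - y j.succ) (x := y)
    (g' := fun j => -ContinuousLinearMap.proj (R := ℝ) (φ := fun _ => ℝ) j.succ)
    fun j _ => (hasFDerivAt_apply j.succ y).const_sub (x i)
  have h2 := (h0.mul h1).mul_const (nodeProd x i)⁻¹
  convert! h2 using 1
  ext v
  simp only [Fin.tail, Matrix.of_apply, Fin.sum_univ_succ, _root_.add_apply, _root_.smul_apply,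
    _root_.sum_apply, ContinuousLinearMap.proj_apply, Fin.cons_zero, Fin.cons_succ, smul_eq_mul,
    _root_.neg_apply, mul_sum, mul_add]
  rw [add_comm]
  congr 1
  · exact sum_congr rfl fun j _ => by ring
  · ring

theorem hasFDerivAt_sumMap {m : ℕ} (a : Fin m → ℝ) (x : Fin (m + 1) → ℝ) :
    HasFDerivAt (sumMap a) (Matrix.toLin' (Matrix.of fun i j =>
      (Fin.cons 1 (fun i => (nodeProd a i)⁻¹) : Fin (m + 1) → ℝ) i *
      (Matrix.of (Fin.cons (fun _ => 1) fun i j => ∏ k ∈ univ.erase j, (a i - x k) :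
      Fin (m + 1) → Fin (m + 1) → ℝ)) i j)).toContinuousLinearMap x := by
  refine hasFDerivAt_of_apply fun i => ?_
  refine Fin.cases ?_ (fun i => ?_) i
  · have h := HasFDerivAt.fun_sum (u := univ)
      (A := fun (j : Fin (m + 1)) (y : Fin (m + 1) → ℝ) => y j) (x := x)
      (A' := fun j => ContinuousLinearMap.proj (R := ℝ) (φ := fun _ => ℝ) j)
      fun j _ => hasFDerivAt_apply j x
    convert! h.sub_const (∑ i, a i) using 1
    ext v
    simp
  · have h1 := HasFDerivAt.finsetProd (u := univ)
      (g := fun (j : Fin (m + 1)) (y : Fin (m + 1) → ℝ) => a i - y j) (x := x)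
      (g' := fun j => -ContinuousLinearMap.proj (R := ℝ) (φ := fun _ => ℝ) j)
      fun j _ => (hasFDerivAt_apply j x).const_sub (a i)
    have h2 := h1.neg.mul_const (nodeProd a i)⁻¹
    convert! h2 using 1
    ext v
    simp only [Matrix.of_apply, _root_.smul_apply,
      _root_.sum_apply, ContinuousLinearMap.proj_apply, Fin.cons_succ, smul_eq_mul,
      _root_.neg_apply, mul_sum, mul_neg, sum_neg_distrib, neg_neg]
    exact sum_congr rfl fun j _ => by ring

theorem abs_prod_inv_nodeProd {n : ℕ} (x : Fin n → ℝ) :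
    |∏ i, (nodeProd x i)⁻¹| = (vdm x ^ 2)⁻¹ := by
  rw [prod_inv_distrib, abs_inv, abs_prod_nodeProd]

theorem abs_det_fderiv_scaleMap {m : ℕ} {x y : Fin (m + 1) → ℝ} (h : Interlace x (Fin.tail y))
    (hy : 0 < y 0) :
    |(Matrix.toLin' (Matrix.of fun i j => (nodeProd x i)⁻¹ *
      Matrix.of (fun i => Fin.cons (∏ k, (x i - Fin.tail y k))
        fun j => -y 0 * ∏ k ∈ univ.erase j, (x i - Fin.tail y k)) i j)).toContinuousLinearMap.det| =
      y 0 ^ m * vdm (Fin.tail y) / vdm x := by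
  rw [det_toContinuousLinearMap_toLin', Matrix.det_mul_column, abs_mul, abs_prod_inv_nodeProd,
    abs_det_scale_eval h.strictMono_left h.strictMono_right hy]
  have := vdm_pos h.strictMono_left
  field_simp

theorem abs_det_fderiv_sumMap {m : ℕ} {a : Fin m → ℝ} {x : Fin (m + 1) → ℝ} (h : Interlace x a) :
    |(Matrix.toLin' (Matrix.of fun i j =>
      (Fin.cons 1 (fun i => (nodeProd a i)⁻¹) : Fin (m + 1) → ℝ) i *
      (Matrix.of (Fin.cons (fun _ => 1) fun i j => ∏ k ∈ univ.erase j, (a i - x k) :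
      Fin (m + 1) → Fin (m + 1) → ℝ)) i j)).toContinuousLinearMap.det| = vdm x / vdm a := by
  rw [det_toContinuousLinearMap_toLin', Matrix.det_mul_column, abs_mul, Fin.prod_univ_succ]
  simp only [Fin.cons_zero, Fin.cons_succ, one_mul]
  rw [abs_prod_inv_nodeProd, abs_det_sum_cons_eval h.strictMono_left h.strictMono_right]
  have := vdm_pos h.strictMono_right
  field_simp

open Polynomial in
theorem degree_prod_sub_prod_lt {n : ℕ} (x y : Fin n → ℝ) :
    (∏ i, (X - C (x i)) - ∏ i, (X - C (y i))).degree < (n : WithBot ℕ) := by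
  have hmon : ∀ x : Fin n → ℝ, (∏ k, (X - C (x k))).Monic :=
    fun x => monic_prod_of_monic _ _ fun k _ => monic_X_sub_C _
  have hdeg : ∀ x : Fin n → ℝ, (∏ k, (X - C (x k))).degree = (n : WithBot ℕ) := fun x => by
    rw [degree_eq_natDegree (hmon x).ne_zero]; simp
  rw [← hdeg x]
  exact degree_sub_lt_left (by rw [hdeg, hdeg]) (hmon x).ne_zero
    ((hmon x).leadingCoeff.trans (hmon y).leadingCoeff.symm)

open Polynomial in
theorem injOn_scaleMap {m : ℕ} {x : Fin (m + 1) → ℝ} :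
    Set.InjOn (scaleMap x) {y | 0 < y 0 ∧ Interlace x (Fin.tail y)} := by
  rintro y ⟨hy0, hy⟩ z ⟨hz0, hz⟩ hyz
  have hx := hy.strictMono_left.injective
  have h0 : y 0 = z 0 := by
    rw [← sum_scale_div_nodeProd hx (y 0) (Fin.tail y),
      ← sum_scale_div_nodeProd hx (z 0) (Fin.tail z)]
    exact sum_congr rfl fun i _ => congrFun hyz i
  have heval : ∀ i, ∏ j, (x i - Fin.tail y j) = ∏ j, (x i - Fin.tail z j) := fun i => by
    have h := congrFun hyz i
    simp only [scaleMap] at h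
    rw [div_left_inj' (nodeProd_ne_zero hx i), h0] at h
    exact mul_left_cancel₀ hz0.ne' h
  have hP := Polynomial.eq_zero_of_degree_lt_of_eval_index_eq_zero univ hx.injOn
    (f := ∏ j, (X - C (Fin.tail y j)) - ∏ j, (X - C (Fin.tail z j)))
    ((degree_prod_sub_prod_lt _ _).trans (by simp; exact_mod_cast Nat.lt_succ_self m))
    fun i _ => by simp [eval_prod, heval]
  have ht : Fin.tail y = Fin.tail z := by
    funext i
    have h1 := congrArg (eval (Fin.tail y i)) (sub_eq_zero.1 hP)
    simp only [eval_prod, eval_sub, eval_X, eval_C] at h1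
    rw [prod_eq_zero (mem_univ i) (sub_self _)] at h1
    obtain ⟨j, -, hj⟩ := prod_eq_zero_iff.1 h1.symm
    have hij := sub_eq_zero.1 hj
    rw [hij, hy.eq_of_eq hz hij]
  rw [← Fin.cons_self_tail y, ← Fin.cons_self_tail z, h0, ht]

open Polynomial in
theorem injOn_sumMap {m : ℕ} {a : Fin m → ℝ} :
    Set.InjOn (sumMap a) {x | Interlace x a} := by
  intro x hx y hy hxy
  simp only [Set.mem_ofPred_eq] at hx hy
  have ha := hx.strictMono_right.injective
  have hsum : ∑ j, x j = ∑ j, y j := by simpa [sumMap] using congrFun hxy 0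
  have heval : ∀ i, ∏ j, (a i - x j) = ∏ j, (a i - y j) := fun i => by
    have h := congrFun hxy i.succ
    simp only [sumMap, Fin.cons_succ] at h
    rw [div_left_inj' (nodeProd_ne_zero ha i)] at h
    exact neg_injective h
  set R := ∏ j, (X - C (x j)) - ∏ j, (X - C (y j)) with hR
  have hRm : R.coeff m = 0 := by
    have h1 := (coeff_X_sq_mul_prod univ x).2.1
    have h2 := (coeff_X_sq_mul_prod univ y).2.1
    rw [card_univ, Fintype.card_fin, coeff_X_pow_mul] at h1 h2
    rw [hR, coeff_sub, h1, h2, hsum, sub_self]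
  have hRdeg : R.degree < m := by
    rw [degree_lt_iff_coeff_zero]
    intro k hk
    rcases hk.eq_or_lt with rfl | hk
    · exact hRm
    · exact (degree_lt_iff_coeff_zero _ _).1 (degree_prod_sub_prod_lt x y) k hk
  have hP := Polynomial.eq_zero_of_degree_lt_of_eval_index_eq_zero univ ha.injOn
    (f := R) (by simpa using hRdeg) fun i _ => by simp [hR, eval_prod, heval]
  funext i
  have h1 := congrArg (eval (x i)) (sub_eq_zero.1 hP)
  simp only [eval_prod, eval_sub, eval_X, eval_C] at h1
  rw [prod_eq_zero (mem_univ i) (sub_self _)] at h1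
  obtain ⟨j, -, hj⟩ := prod_eq_zero_iff.1 h1.symm
  have hij := sub_eq_zero.1 hj
  rw [hij, hx.eq_of_eq_left hy hij]

open Polynomial in
theorem image_scaleMap {m : ℕ} {x : Fin (m + 1) → ℝ} (hx : StrictMono x) :
    scaleMap x '' {y | 0 < y 0 ∧ Interlace x (Fin.tail y)} = {w | ∀ i, 0 < w i} := by
  ext w
  constructor
  · rintro ⟨y, ⟨hy0, hy⟩, rfl⟩ i
    rw [scaleMap, mul_div_assoc]
    exact mul_pos hy0 (hy.div_nodeProd_pos i)
  · intro hw
    set Q := Lagrange.interpolate univ x fun i => w i * nodeProd x i with hQ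
    have hQx : ∀ i, Q.eval (x i) = w i * nodeProd x i := fun i =>
      Lagrange.eval_interpolate_at_node _ hx.injective.injOn (mem_univ i)
    have hn := nodeProd_ne_zero hx.injective
    obtain ⟨a, ha, hQa⟩ := exists_interlace_roots hx (f := fun z => Q.eval z) Q.continuous
      fun i => by
        rw [hQx, mul_assoc]
        exact mul_pos (hw i) (mul_self_pos.2 (hn i))
    have hane : ∏ j, (x 0 - a j) ≠ 0 :=
      prod_ne_zero_iff.2 fun j _ => sub_ne_zero.2 (ha.ne 0 j)
    set t := w 0 * nodeProd x 0 / ∏ j, (x 0 - a j) with ht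
    have htpos : 0 < t := by
      have h := div_pos (hw 0) (ha.div_nodeProd_pos 0)
      rwa [div_div_eq_mul_div] at h
    have hinj : Function.Injective (Fin.cons (x 0) a : Fin (m + 1) → ℝ) := by
      rw [Fin.cons_injective_iff]
      exact ⟨fun ⟨j, hj⟩ => ha.ne 0 j hj.symm, ha.strictMono_right.injective⟩
    have hdeg : (∏ j, (X - C (a j))).natDegree = m := by simp
    have hQ' : Q = C t * ∏ j, (X - C (a j)) := by
      refine Polynomial.eq_of_degrees_lt_of_eval_index_eq univ hinj.injOn
        (Lagrange.degree_interpolate_lt _ hx.injective.injOn) ?_ fun i _ => ?_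
      · refine (degree_le_of_natDegree_le ((natDegree_C_mul_le _ _).trans hdeg.le)).trans_lt ?_
        simp only [card_univ, Fintype.card_fin]
        exact_mod_cast Nat.lt_succ_self m
      · refine Fin.cases ?_ (fun i => ?_) i
        · rw [Fin.cons_zero, hQx]
          simp only [eval_mul, eval_C, eval_prod, eval_sub, eval_X]
          rw [ht, div_mul_cancel₀ _ hane]
        · rw [Fin.cons_succ, hQa]
          simp only [eval_mul, eval_C, eval_prod, eval_sub, eval_X]
          rw [prod_eq_zero (mem_univ i) (sub_self _), mul_zero]
    refine ⟨Fin.cons t a, ⟨by simpa using htpos, by simpa using ha⟩, ?_⟩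
    funext i
    have h := hQx i
    rw [hQ'] at h
    simp only [eval_mul, eval_C, eval_prod, eval_sub, eval_X] at h
    rw [scaleMap, Fin.cons_zero, Fin.tail_cons, h, mul_div_cancel_right₀ _ (hn i)]

theorem nodeProd_eq_prod_ite {n : ℕ} (x : Fin n → ℝ) (i : Fin n) :
    nodeProd x i = ∏ k, if k = i then 1 else x i - x k := by
  rw [nodeProd, ← prod_erase univ (a := i) (f := fun k => if k = i then 1 else x i - x k) (by simp)]
  exact prod_congr rfl fun k hk => by rw [if_neg (mem_erase.1 hk).1]

theorem nodeProd_cons_zero {n : ℕ} (u : ℝ) (z : Fin n → ℝ) :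
    nodeProd (Fin.cons u z : Fin (n + 1) → ℝ) 0 = ∏ j, (u - z j) := by
  simp [nodeProd_eq_prod_ite, Fin.prod_univ_succ]

theorem nodeProd_cons_succ {n : ℕ} (u : ℝ) (z : Fin n → ℝ) (i : Fin n) :
    nodeProd (Fin.cons u z : Fin (n + 1) → ℝ) i.succ = (z i - u) * nodeProd z i := by
  simp [nodeProd_eq_prod_ite, Fin.prod_univ_succ, (Fin.succ_ne_zero i).symm]

theorem nodeProd_snoc_last {n : ℕ} (z : Fin n → ℝ) (u : ℝ) :
    nodeProd (Fin.snoc z u : Fin (n + 1) → ℝ) (Fin.last n) = ∏ j, (u - z j) := by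
  simp [nodeProd_eq_prod_ite, Fin.prod_univ_castSucc]

theorem nodeProd_snoc_castSucc {n : ℕ} (z : Fin n → ℝ) (u : ℝ) (i : Fin n) :
    nodeProd (Fin.snoc z u : Fin (n + 1) → ℝ) i.castSucc = nodeProd z i * (z i - u) := by
  simp [nodeProd_eq_prod_ite, Fin.prod_univ_castSucc, (Fin.castSucc_ne_last i).symm]

theorem strictMono_cons {n : ℕ} {u : ℝ} {z : Fin n → ℝ} (hz : StrictMono z) (hu : ∀ i, u < z i) :
    StrictMono (Fin.cons u z : Fin (n + 1) → ℝ) := by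
  intro i j
  refine Fin.cases (Fin.cases (by simp) (fun j _ => by simpa using hu j) j) (fun i => ?_) i
  refine Fin.cases (by simp) (fun j h => ?_) j
  simpa using hz (Fin.succ_lt_succ_iff.1 h)

theorem strictMono_snoc {n : ℕ} {u : ℝ} {z : Fin n → ℝ} (hz : StrictMono z) (hu : ∀ i, z i < u) :
    StrictMono (Fin.snoc z u : Fin (n + 1) → ℝ) := by
  intro i j
  refine Fin.lastCases (fun h => absurd h (Fin.le_last j).not_gt) (fun i => ?_) i
  refine Fin.lastCases (fun _ => by simpa using hu i) (fun j h => ?_) j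
  simpa using hz (Fin.castSucc_lt_castSucc_iff.1 h)

open Polynomial in
/-- The characteristic polynomial of the arrow matrix with diagonal `(d, a)` and squared
border `w`. -/
noncomputable def arrowPoly {m : ℕ} (a : Fin m → ℝ) (d : ℝ) (w : Fin m → ℝ) : ℝ[X] :=
  (X - C d) * ∏ j, (X - C (a j)) - ∑ i, C (w i) * ∏ j ∈ univ.erase i, (X - C (a j))

open Polynomial in
theorem eval_arrowPoly_node {m : ℕ} (a : Fin m → ℝ) (d : ℝ) (w : Fin m → ℝ) (i : Fin m) :
    (arrowPoly a d w).eval (a i) = -(w i * nodeProd a i) := by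
  simp only [arrowPoly, eval_sub, eval_mul, eval_prod, eval_finsetSum, eval_X, eval_C]
  rw [prod_eq_zero (mem_univ i) (sub_self _), mul_zero, zero_sub, sum_eq_single i]
  · rfl
  · exact fun j _ hj => by
      rw [prod_eq_zero (mem_erase.2 ⟨hj.symm, mem_univ _⟩) (sub_self _), mul_zero]
  · simp

open Polynomial in
theorem eval_arrowPoly {m : ℕ} (a : Fin m → ℝ) (d : ℝ) (w : Fin m → ℝ) {z : ℝ}
    (hz : ∀ i, z ≠ a i) :
    (arrowPoly a d w).eval z = (z - d - ∑ i, w i / (z - a i)) * ∏ j, (z - a j) := by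
  simp only [arrowPoly, eval_sub, eval_mul, eval_prod, eval_finsetSum, eval_X, eval_C]
  rw [sub_mul (z - d), sum_mul]
  congr 1
  refine sum_congr rfl fun i _ => ?_
  rw [← mul_prod_erase univ (fun j => z - a j) (mem_univ i)]
  have := sub_ne_zero.2 (hz i)
  field_simp

open Polynomial in
theorem degree_arrowPoly_sub_lt {m : ℕ} (a : Fin m → ℝ) (d : ℝ) (w : Fin m → ℝ)
    (x : Fin (m + 1) → ℝ) :
    (arrowPoly a d w - ∏ j, (X - C (x j))).degree < ((m + 1 : ℕ) : WithBot ℕ) := by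
  have h := degree_prod_sub_prod_lt (Fin.cons d a : Fin (m + 1) → ℝ) x
  rw [Fin.prod_univ_succ] at h
  simp only [Fin.cons_zero, Fin.cons_succ] at h
  rw [arrowPoly, sub_right_comm]
  refine (degree_sub_le _ _).trans_lt (max_lt h ?_)
  refine (degree_sum_le _ _).trans_lt ((Finset.sup_lt_iff (WithBot.bot_lt_coe _)).2 fun i _ => ?_)
  refine (degree_le_of_natDegree_le ((natDegree_C_mul_le _ _).trans
    (natDegree_prod_X_sub_C _ a).le)).trans_lt ?_
  rw [card_erase_of_mem (mem_univ i), card_univ, Fintype.card_fin]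
  exact_mod_cast (Nat.sub_le m 1).trans_lt (Nat.lt_succ_self m)

open Polynomial in
theorem coeff_arrowPoly {m : ℕ} (a : Fin m → ℝ) (d : ℝ) (w : Fin m → ℝ) :
    (arrowPoly a d w).coeff m = -(d + ∑ i, a i) := by
  have h := (coeff_X_sq_mul_prod univ (Fin.cons d a : Fin (m + 1) → ℝ)).2.1
  rw [card_univ, Fintype.card_fin, coeff_X_pow_mul, Fin.prod_univ_succ, Fin.sum_univ_succ] at h
  simp only [Fin.cons_zero, Fin.cons_succ] at h
  rw [arrowPoly, coeff_sub, h, finsetSum_coeff, sub_eq_self]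
  refine sum_eq_zero fun i _ => ?_
  refine coeff_eq_zero_of_natDegree_lt ((natDegree_C_mul_le _ _).trans_lt ?_)
  rw [natDegree_prod_X_sub_C, card_erase_of_mem (mem_univ i), card_univ, Fintype.card_fin]
  exact Nat.sub_lt i.pos one_pos

open Polynomial in
theorem exists_interlace_arrowPoly {m : ℕ} {a : Fin m → ℝ} (ha : StrictMono a) (d : ℝ)
    {w : Fin m → ℝ} (hw : ∀ i, 0 < w i) :
    ∃ x : Fin (m + 1) → ℝ, Interlace x a ∧ arrowPoly a d w = ∏ j, (X - C (x j)) := by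
  set M : ℝ := 1 + |d| + ∑ i, w i + ∑ i, |a i| with hM
  have hsw : 0 ≤ ∑ i, w i := sum_nonneg fun i _ => (hw i).le
  have hsa : 0 ≤ ∑ i, |a i| := sum_nonneg fun i _ => abs_nonneg _
  have hai : ∀ i, |a i| + 1 ≤ M := fun i => by
    have := single_le_sum (fun j _ => abs_nonneg (a j)) (mem_univ i)
    linarith [abs_nonneg d]
  have hai1 : ∀ i, 1 ≤ M - a i := fun i => by linarith [hai i, le_abs_self (a i)]
  have hai2 : ∀ i, 1 ≤ M + a i := fun i => by linarith [hai i, neg_abs_le (a i)]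
  have hMpos : 0 < M := by linarith [abs_nonneg d]
  set y : Fin (m + 1 + 1) → ℝ := Fin.cons (-M) (Fin.snoc a M : Fin (m + 1) → ℝ) with hy
  have hymono : StrictMono y := by
    refine strictMono_cons (strictMono_snoc ha fun i => by linarith [hai1 i]) fun i => ?_
    refine Fin.lastCases ?_ (fun i => ?_) i
    · rw [Fin.snoc_last]; linarith
    · rw [Fin.snoc_castSucc]; linarith [hai2 i]
  obtain ⟨x, hx, hx0⟩ := exists_interlace_roots hymono (f := fun z => (arrowPoly a d w).eval z)
    (arrowPoly a d w).continuous fun i => by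
      refine Fin.cases ?_ (fun i => ?_) i
      · rw [hy, nodeProd_cons_zero, Fin.cons_zero, Fin.prod_univ_castSucc,
          eval_arrowPoly _ _ _ fun i => by linarith [hai2 i]]
        simp only [Fin.snoc_castSucc, Fin.snoc_last]
        have h1 : (∏ j, (-M - a j)) ≠ 0 :=
          prod_ne_zero_iff.2 fun j _ => by linarith [hai2 j]
        have h2 : ∑ i, w i / (M + a i) ≤ ∑ i, w i :=
          sum_le_sum fun i _ => div_le_self (hw i).le (hai2 i)
        have h3 : ∑ i, w i / (-M - a i) = -∑ i, w i / (M + a i) := by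
          rw [← sum_neg_distrib]
          exact sum_congr rfl fun i _ => by
            rw [show -M - a i = -(M + a i) by ring, div_neg]
        rw [h3]
        have h4 : -M - d - -∑ i, w i / (M + a i) < 0 := by linarith [neg_abs_le d]
        have := mul_pos (mul_pos_of_neg_of_neg h4 (show -M - M < 0 by linarith))
          (mul_self_pos.2 h1)
        linarith
      · rw [hy, nodeProd_cons_succ, Fin.cons_succ]
        refine Fin.lastCases ?_ (fun i => ?_) i
        · rw [nodeProd_snoc_last, Fin.snoc_last, eval_arrowPoly _ _ _ fun i => by linarith [hai1 i]]
          have h1 : (∏ j, (M - a j)) ≠ 0 :=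
            prod_ne_zero_iff.2 fun j _ => by linarith [hai1 j]
          have h2 : ∑ i, w i / (M - a i) ≤ ∑ i, w i :=
            sum_le_sum fun i _ => div_le_self (hw i).le (hai1 i)
          have h4 : 0 < M - d - ∑ i, w i / (M - a i) := by linarith [le_abs_self d]
          have := mul_pos (mul_pos h4 (show 0 < M - -M by linarith)) (mul_self_pos.2 h1)
          linarith
        · rw [nodeProd_snoc_castSucc, Fin.snoc_castSucc, eval_arrowPoly_node]
          have h1 := nodeProd_ne_zero ha.injective i
          have := mul_pos (mul_pos (hw i) (mul_self_pos.2 h1))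
            (mul_pos (show 0 < a i + M by linarith [hai2 i]) (show 0 < M - a i by linarith [hai1 i]))
          linarith
  refine ⟨x, fun i => ?_, ?_⟩
  · have h1 := (hx i.castSucc).2
    have h2 := (hx i.succ).1
    rw [← Fin.succ_castSucc] at h2
    simp only [hy, Fin.cons_succ, Fin.snoc_castSucc] at h1 h2
    exact ⟨h1, h2⟩
  · rw [← sub_eq_zero]
    refine Polynomial.eq_zero_of_degree_lt_of_eval_index_eq_zero univ (v := x)
      hx.strictMono_right.injective.injOn ?_ fun i _ => ?_
    · rw [card_univ, Fintype.card_fin]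
      exact degree_arrowPoly_sub_lt a d w x
    · rw [eval_sub, hx0, eval_prod, prod_eq_zero (mem_univ i) (by simp), sub_zero]

open Polynomial in
theorem image_sumMap {m : ℕ} {a : Fin m → ℝ} (ha : StrictMono a) :
    sumMap a '' {x | Interlace x a} = {w | ∀ i : Fin m, 0 < w i.succ} := by
  ext w
  constructor
  · rintro ⟨x, hx, rfl⟩ i
    exact hx.neg_div_nodeProd_pos i
  · intro hw
    obtain ⟨x, hx, hP⟩ := exists_interlace_arrowPoly ha (w 0) (w := Fin.tail w) hw
    refine ⟨x, hx, ?_⟩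
    funext i
    refine Fin.cases ?_ (fun i => ?_) i
    · have h1 := (coeff_X_sq_mul_prod univ x).2.1
      rw [card_univ, Fintype.card_fin, coeff_X_pow_mul, ← hP, coeff_arrowPoly] at h1
      simp only [sumMap, Fin.cons_zero]
      linarith
    · have h1 := eval_arrowPoly_node a (w 0) (Fin.tail w) i
      rw [hP] at h1
      simp only [eval_prod, eval_sub, eval_X, eval_C] at h1
      simp only [sumMap, Fin.cons_succ]
      rw [h1, neg_neg, mul_div_cancel_right₀ _ (nodeProd_ne_zero ha.injective i)]
      rfl

theorem setLIntegral_eq_of_forall_notMem_eq_zero {E : Type*} [MeasurableSpace E] {μ : Measure E}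
    {s : Set E} (f : E → ENNReal) (hs : MeasurableSet s) (h : ∀ x, x ∉ s → f x = 0) :
    ∫⁻ x in s, f x ∂μ = ∫⁻ x, f x ∂μ := by
  rw [← lintegral_indicator hs, Set.indicator_eq_self.2 (Function.support_subset_iff'.2 h)]

theorem lintegral_fin_succ {n : ℕ} {F : (Fin (n + 1) → ℝ) → ENNReal} (hF : Measurable F) :
    ∫⁻ w, F w = ∫⁻ t : ℝ, ∫⁻ z : Fin n → ℝ, F (Fin.cons t z) := by
  have h := (volume_preserving_piFinSuccAbove (fun _ : Fin (n + 1) => ℝ) 0).symm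
  rw [← h.lintegral_comp hF]
  have h1 : ∀ p : ℝ × (Fin n → ℝ), (MeasurableEquiv.piFinSuccAbove (fun _ => ℝ) 0).symm p =
      (Fin.cons p.1 p.2 : Fin (n + 1) → ℝ) := fun p => by
    simp [MeasurableEquiv.piFinSuccAbove, Fin.insertNthEquiv]
  exact lintegral_prod _ ((hF.comp h.measurable).aemeasurable) |>.trans
    (by simp only [Function.comp_apply, h1])

theorem lintegral_fin_prod {h : ℝ → ENNReal} (hh : Measurable h) (n : ℕ) :
    ∫⁻ w : Fin n → ℝ, ∏ i, h (w i) = (∫⁻ t, h t) ^ n := by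
  induction n with
  | zero => simp [volume_pi, lintegral_unique]
  | succ n ih =>
    rw [lintegral_fin_succ (by fun_prop)]
    simp only [Fin.prod_univ_succ, Fin.cons_zero, Fin.cons_succ]
    simp_rw [lintegral_const_mul _ (show Measurable fun z : Fin n → ℝ => ∏ i, h (z i) by fun_prop), ih]
    rw [lintegral_mul_const _ hh, pow_succ']

theorem lintegral_Gamma {s : ℝ} (hs : 0 < s) :
    ∫⁻ t in Set.Ioi (0 : ℝ), ENNReal.ofReal (exp (-t) * t ^ (s - 1)) = ENNReal.ofReal (Gamma s) := by
  rw [Gamma_eq_integral hs, ofReal_integral_eq_lintegral_ofReal (GammaIntegral_convergent hs)]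
  exact (ae_restrict_iff' measurableSet_Ioi).2 (Filter.Eventually.of_forall fun t ht =>
    mul_nonneg (exp_pos _).le (rpow_nonneg (le_of_lt ht) _))

theorem lintegral_gaussian :
    ∫⁻ t : ℝ, ENNReal.ofReal (exp (-t ^ 2 / 2)) = ENNReal.ofReal √(2 * π) := by
  have h := integral_gaussian (1 / 2)
  have h1 : ∀ t : ℝ, -(1 / 2) * t ^ 2 = -t ^ 2 / 2 := fun t => by ring
  have h2 := integrable_exp_neg_mul_sq (b := 1 / 2) (by norm_num)
  simp only [h1] at h h2
  rw [← ofReal_integral_eq_lintegral_ofReal h2 (Filter.Eventually.of_forall fun _ => (exp_pos _).le),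
    h, div_div_eq_mul_div, div_one, mul_comm]

/-- The density `t ↦ exp (-t) / √t` on the positive half-line. -/
noncomputable def gammaHalf : ℝ → ENNReal :=
  (Set.Ioi 0).indicator fun t => ENNReal.ofReal (exp (-t) * (√t)⁻¹)

theorem measurable_gammaHalf : Measurable gammaHalf :=
  Measurable.indicator (by fun_prop) measurableSet_Ioi

theorem gammaHalf_of_pos {t : ℝ} (ht : 0 < t) :
    gammaHalf t = ENNReal.ofReal (exp (-t) * (√t)⁻¹) := Set.indicator_of_mem (Set.mem_Ioi.2 ht) _

theorem gammaHalf_of_nonpos {t : ℝ} (ht : t ≤ 0) : gammaHalf t = 0 :=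
  Set.indicator_of_notMem (by simpa using ht) _

theorem lintegral_gammaHalf : ∫⁻ t, gammaHalf t = ENNReal.ofReal (Gamma (1 / 2)) := by
  rw [gammaHalf, lintegral_indicator measurableSet_Ioi, ← lintegral_Gamma (by norm_num)]
  refine setLIntegral_congr_fun measurableSet_Ioi fun t ht => ?_
  rw [sqrt_eq_rpow, ← rpow_neg (le_of_lt ht)]
  norm_num

theorem prod_gammaHalf_of_pos {n : ℕ} {w : Fin n → ℝ} (hw : ∀ i, 0 < w i) :
    ∏ i, gammaHalf (w i) = ENNReal.ofReal (exp (-∑ i, w i) * (√(∏ i, w i))⁻¹) := by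
  simp_rw [fun i => gammaHalf_of_pos (hw i)]
  rw [← ENNReal.ofReal_prod_of_nonneg fun i _ => by positivity, prod_mul_distrib, prod_inv_distrib,
    sqrt_prod _ fun i _ => (hw i).le, ← exp_sum, sum_neg_distrib]

/-- The product of all distances `|x i - a j|`. -/
noncomputable def crossProd {m n : ℕ} (x : Fin m → ℝ) (a : Fin n → ℝ) : ℝ := ∏ i, ∏ j, |x i - a j|

theorem crossProd_comm {m n : ℕ} (x : Fin m → ℝ) (a : Fin n → ℝ) :
    crossProd x a = crossProd a x := by
  rw [crossProd, prod_comm]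
  simp only [crossProd, abs_sub_comm]

theorem prod_abs_div_nodeProd {m n : ℕ} (x : Fin m → ℝ) (a : Fin n → ℝ) :
    ∏ i, |(∏ j, (x i - a j)) / nodeProd x i| = crossProd x a / vdm x ^ 2 := by
  simp only [abs_div, prod_div_distrib]
  rw [← abs_prod univ (nodeProd x), abs_prod_nodeProd]
  simp [crossProd, abs_prod]

theorem isOpen_interlace {m : ℕ} :
    IsOpen {p : (Fin (m + 1) → ℝ) × (Fin m → ℝ) | Interlace p.1 p.2} := by
  simp only [Interlace, Set.ofPred_forall]
  refine isOpen_iInter_of_finite fun i => IsOpen.and (isOpen_lt ?_ ?_) (isOpen_lt ?_ ?_) <;> fun_prop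

theorem measurable_vdm {n : ℕ} : Measurable (vdm : (Fin n → ℝ) → ℝ) := by
  unfold vdm
  fun_prop

theorem measurable_crossProd {m n : ℕ} :
    Measurable fun p : (Fin m → ℝ) × (Fin n → ℝ) => crossProd p.1 p.2 := by
  simp only [crossProd]
  fun_prop

theorem lintegral_interlace_left {m : ℕ} {a : Fin m → ℝ} (ha : StrictMono a) :
    ∫⁻ x in {x | Interlace x a},
        ENNReal.ofReal (vdm x * (√(crossProd x a))⁻¹ * exp (-(∑ i, x i ^ 2) / 2)) =
      ENNReal.ofReal (exp (-(∑ i, a i ^ 2) / 2)) *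
        (ENNReal.ofReal √(2 * π) * ENNReal.ofReal (Gamma (1 / 2)) ^ m) := by
  have hS : MeasurableSet {x | Interlace x a} :=
    (isOpen_interlace.preimage (f := fun x => (x, a)) (by fun_prop)).measurableSet
  have hmg := measurable_gammaHalf
  have key := lintegral_image_eq_lintegral_abs_det_fderiv_mul volume hS
    (fun x _ => (hasFDerivAt_sumMap a x).hasFDerivWithinAt) injOn_sumMap
    fun w => ENNReal.ofReal (exp (-(∑ i, a i ^ 2) / 2)) *
      (ENNReal.ofReal (exp (-w 0 ^ 2 / 2)) * ∏ i : Fin m, gammaHalf (w i.succ))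
  rw [image_sumMap ha, setLIntegral_eq_of_forall_notMem_eq_zero _ (by measurability) fun w hw => ?_,
    lintegral_const_mul _ (by fun_prop), lintegral_fin_succ (by fun_prop)] at key
  · simp only [Fin.cons_zero, Fin.cons_succ] at key
    simp_rw [lintegral_const_mul _ (show Measurable fun z : Fin m → ℝ => ∏ i, gammaHalf (z i)
      by fun_prop), lintegral_fin_prod hmg, lintegral_gammaHalf] at key
    rw [lintegral_mul_const _ (by fun_prop), lintegral_gaussian] at key
    rw [key]
    refine setLIntegral_congr_fun hS fun x hx => ?_
    have hw : ∀ i : Fin m, 0 < sumMap a x i.succ := hx.neg_div_nodeProd_pos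
    have hva := vdm_pos ha
    have hvx := vdm_pos hx.strictMono_left
    have hprod : ∏ i : Fin m, sumMap a x i.succ = crossProd x a / vdm a ^ 2 := by
      rw [crossProd_comm, ← prod_abs_div_nodeProd]
      refine prod_congr rfl fun i _ => ?_
      rw [← abs_of_pos (hw i), sumMap, Fin.cons_succ, neg_div, abs_neg]
    have hsum : ∑ i, x i ^ 2 = ∑ i, a i ^ 2 + sumMap a x 0 ^ 2 + 2 * ∑ i : Fin m, sumMap a x i.succ :=
      sum_sq_eq x ha.injective
    rw [abs_det_fderiv_sumMap hx, prod_gammaHalf_of_pos hw, ← ENNReal.ofReal_mul (by positivity),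
      ← ENNReal.ofReal_mul (by positivity), ← ENNReal.ofReal_mul (by positivity), hprod, hsum,
      sqrt_div' _ (sq_nonneg _), sqrt_sq hva.le]
    congr 1
    rw [show -(∑ i, a i ^ 2 + sumMap a x 0 ^ 2 + 2 * ∑ i : Fin m, sumMap a x i.succ) / 2 =
      -(∑ i, a i ^ 2) / 2 + -sumMap a x 0 ^ 2 / 2 + -∑ i : Fin m, sumMap a x i.succ by ring,
      exp_add, exp_add, inv_div]
    field_simp
  · simp only [Set.mem_ofPred_eq, not_forall, not_lt] at hw
    obtain ⟨i, hi⟩ := hw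
    rw [prod_eq_zero (mem_univ i) (gammaHalf_of_nonpos hi), mul_zero, mul_zero]

theorem abs_det_mul_prod_gammaHalf_scaleMap {m : ℕ} {x y : Fin (m + 1) → ℝ}
    (hy : Interlace x (Fin.tail y)) (hy0 : 0 < y 0) :
    ENNReal.ofReal (y 0 ^ m * vdm (Fin.tail y) / vdm x) * ∏ i, gammaHalf (scaleMap x y i) =
      ENNReal.ofReal (exp (-y 0) * y 0 ^ (((m + 1 : ℕ) : ℝ) / 2 - 1)) *
        ENNReal.ofReal (vdm (Fin.tail y) * (√(crossProd x (Fin.tail y)))⁻¹) := by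
  have hx := hy.strictMono_left
  have hw : ∀ i, 0 < scaleMap x y i := fun i => by
    rw [scaleMap, mul_div_assoc]
    exact mul_pos hy0 (hy.div_nodeProd_pos i)
  have hva := vdm_pos hy.strictMono_right
  have hvx := vdm_pos hx
  have hprod : ∏ i, scaleMap x y i = y 0 ^ (m + 1) * (crossProd x (Fin.tail y) / vdm x ^ 2) := by
    rw [← prod_abs_div_nodeProd]
    simp only [scaleMap, mul_div_assoc, prod_mul_distrib, prod_const, card_univ,
      Fintype.card_fin]
    congr 1
    exact prod_congr rfl fun i _ => (abs_of_pos (hy.div_nodeProd_pos i)).symm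
  have hsum : ∑ i, scaleMap x y i = y 0 :=
    sum_scale_div_nodeProd hx.injective (y 0) (Fin.tail y)
  have ht : y 0 ^ (((m + 1 : ℕ) : ℝ) / 2 - 1) = y 0 ^ m * (√(y 0 ^ (m + 1)))⁻¹ := by
    rw [sqrt_eq_rpow, ← rpow_natCast, ← rpow_natCast, ← rpow_mul hy0.le, ← rpow_neg hy0.le,
      ← rpow_add hy0]
    congr 1
    push_cast
    ring
  rw [prod_gammaHalf_of_pos hw,
    ← ENNReal.ofReal_mul (by positivity), ← ENNReal.ofReal_mul (by positivity), hprod, hsum,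
    sqrt_mul (by positivity), sqrt_div' _ (sq_nonneg _), sqrt_sq hvx.le, ht]
  congr 1
  field_simp

theorem lintegral_interlace_right {m : ℕ} {x : Fin (m + 1) → ℝ} (hx : StrictMono x) :
    ENNReal.ofReal (Gamma ((m + 1 : ℕ) / 2)) *
        ∫⁻ a in {a | Interlace x a}, ENNReal.ofReal (vdm a * (√(crossProd x a))⁻¹) =
      ENNReal.ofReal (Gamma (1 / 2)) ^ (m + 1) := by
  have hS' : MeasurableSet {a | Interlace x a} :=
    (isOpen_interlace.preimage (f := fun a => (x, a)) (by fun_prop)).measurableSet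
  have hS : MeasurableSet {y : Fin (m + 1) → ℝ | 0 < y 0 ∧ Interlace x (Fin.tail y)} :=
    (measurableSet_lt measurable_const (measurable_pi_apply 0)).inter
      (hS'.preimage (measurable_pi_iff.2 fun i => measurable_pi_apply i.succ))
  have hmg := measurable_gammaHalf
  have hmv := measurable_vdm (n := m)
  have hmc : Measurable fun a : Fin m → ℝ => crossProd x a := by
    simp only [crossProd]
    fun_prop
  have key := lintegral_image_eq_lintegral_abs_det_fderiv_mul volume hS
    (fun y _ => (hasFDerivAt_scaleMap x y).hasFDerivWithinAt) injOn_scaleMap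
    fun w => ∏ i, gammaHalf (w i)
  rw [image_scaleMap hx, setLIntegral_eq_of_forall_notMem_eq_zero _ (by measurability) fun w hw => ?_,
    lintegral_fin_prod hmg, lintegral_gammaHalf] at key
  · rw [key]
    set G : ℝ → ENNReal := (Set.Ioi 0).indicator fun t =>
      ENNReal.ofReal (exp (-t) * t ^ (((m + 1 : ℕ) : ℝ) / 2 - 1)) with hG
    set H : (Fin m → ℝ) → ENNReal := {a | Interlace x a}.indicator fun a =>
      ENNReal.ofReal (vdm a * (√(crossProd x a))⁻¹) with hH
    have hGm : Measurable G := Measurable.indicator (by fun_prop) measurableSet_Ioi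
    have hHm : Measurable H := Measurable.indicator (by fun_prop) hS'
    have hsplit : ∫⁻ y : Fin (m + 1) → ℝ, G (y 0) * H (Fin.tail y) = (∫⁻ t, G t) * ∫⁻ a, H a := by
      rw [lintegral_fin_succ (by
        exact (hGm.comp (measurable_pi_apply 0)).mul
          (hHm.comp (measurable_pi_iff.2 fun i => measurable_pi_apply i.succ)))]
      simp only [Fin.cons_zero, Fin.tail_cons]
      simp_rw [lintegral_const_mul _ hHm]
      rw [lintegral_mul_const _ hGm]
    rw [hG, hH, lintegral_indicator measurableSet_Ioi, lintegral_indicator hS',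
      lintegral_Gamma (by positivity)] at hsplit
    rw [← hsplit, ← lintegral_indicator hS]
    refine lintegral_congr fun y => ?_
    by_cases hy : 0 < y 0 ∧ Interlace x (Fin.tail y)
    · rw [Set.indicator_of_mem (Set.mem_Ioi.2 hy.1), Set.indicator_of_mem (by exact hy.2),
        Set.indicator_of_mem (by exact hy)]
      rw [abs_det_fderiv_scaleMap hy.2 hy.1]
      exact (abs_det_mul_prod_gammaHalf_scaleMap hy.2 hy.1).symm
    · rw [Set.indicator_of_notMem (s := {y : Fin (m + 1) → ℝ | 0 < y 0 ∧ Interlace x (Fin.tail y)})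
        (by exact hy)]
      rcases not_and_or.1 hy with h | h
      · rw [Set.indicator_of_notMem (s := Set.Ioi 0) (by exact h), zero_mul]
      · rw [Set.indicator_of_notMem (s := {a | Interlace x a}) (by exact h), mul_zero]
  · simp only [Set.mem_ofPred_eq, not_forall, not_lt] at hw
    obtain ⟨i, hi⟩ := hw
    exact prod_eq_zero (mem_univ i) (gammaHalf_of_nonpos hi)

theorem measurableSet_strictMono {n : ℕ} : MeasurableSet {x : Fin n → ℝ | StrictMono x} := by
  simp only [StrictMono, Set.ofPred_forall]
  exact MeasurableSet.iInter fun i => MeasurableSet.iInter fun j => MeasurableSet.iInter fun _ =>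
    measurableSet_lt (measurable_pi_apply i) (measurable_pi_apply j)

/-- The Gaussian integral of the Vandermonde determinant over the ordered chamber. -/
noncomputable def chamberIntegral (n : ℕ) : ENNReal :=
  ∫⁻ x in {x : Fin n → ℝ | StrictMono x}, ENNReal.ofReal (vdm x * exp (-(∑ i, x i ^ 2) / 2))

theorem chamberIntegral_zero : chamberIntegral 0 = 1 := by
  have : {x : Fin 0 → ℝ | StrictMono x} = Set.univ :=
    Set.eq_univ_of_forall fun x => Subsingleton.strictMono x
  simp [chamberIntegral, this, vdm, volume_pi, lintegral_unique]

theorem chamberIntegral_succ (m : ℕ) :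
    ENNReal.ofReal (Gamma (1 / 2)) ^ (m + 1) * chamberIntegral (m + 1) =
      ENNReal.ofReal (Gamma ((m + 1 : ℕ) / 2)) *
        (ENNReal.ofReal √(2 * π) * ENNReal.ofReal (Gamma (1 / 2)) ^ m * chamberIntegral m) := by
  have hmv := measurable_vdm (n := m)
  have hmv' := measurable_vdm (n := m + 1)
  have hmc := measurable_crossProd (m := m + 1) (n := m)
  set F : (Fin (m + 1) → ℝ) × (Fin m → ℝ) → ENNReal := {p | Interlace p.1 p.2}.indicator fun p =>
    ENNReal.ofReal (vdm p.2 * (vdm p.1 * (√(crossProd p.1 p.2))⁻¹ * exp (-(∑ i, p.1 i ^ 2) / 2)))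
    with hF
  have hFm : Measurable F := by
    refine Measurable.indicator ?_ isOpen_interlace.measurableSet
    fun_prop
  have hswap : ∫⁻ x, ∫⁻ a, F (x, a) = ∫⁻ a, ∫⁻ x, F (x, a) :=
    lintegral_lintegral_swap hFm.aemeasurable
  have hleft : ∫⁻ a, ∫⁻ x, F (x, a) =
      ENNReal.ofReal √(2 * π) * ENNReal.ofReal (Gamma (1 / 2)) ^ m * chamberIntegral m := by
    rw [chamberIntegral, ← lintegral_const_mul _ (by fun_prop),
      ← lintegral_indicator measurableSet_strictMono]
    refine lintegral_congr fun a => ?_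
    have h1 : ∫⁻ x, F (x, a) = ∫⁻ x in {x | Interlace x a}, ENNReal.ofReal (vdm a *
        (vdm x * (√(crossProd x a))⁻¹ * exp (-(∑ i, x i ^ 2) / 2))) := by
      exact lintegral_indicator
        (isOpen_interlace.preimage (f := fun x => (x, a)) (by fun_prop)).measurableSet _
    rw [h1]
    by_cases ha : StrictMono a
    · rw [Set.indicator_of_mem (by exact ha)]
      simp_rw [ENNReal.ofReal_mul (vdm_pos ha).le]
      rw [lintegral_const_mul' _ _ ENNReal.ofReal_ne_top, lintegral_interlace_left ha]
      ring
    · rw [Set.indicator_of_notMem (by exact ha)]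
      have h2 : {x | Interlace x a} = ∅ :=
        Set.eq_empty_of_forall_notMem fun x hx => ha (Interlace.strictMono_right hx)
      rw [h2, setLIntegral_empty]
  have hright : ENNReal.ofReal (Gamma ((m + 1 : ℕ) / 2)) * ∫⁻ x, ∫⁻ a, F (x, a) =
      ENNReal.ofReal (Gamma (1 / 2)) ^ (m + 1) * chamberIntegral (m + 1) := by
    rw [chamberIntegral, ← lintegral_const_mul' _ _ ENNReal.ofReal_ne_top,
      ← lintegral_const_mul' _ _ (ENNReal.pow_ne_top ENNReal.ofReal_ne_top),
      ← lintegral_indicator measurableSet_strictMono]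
    refine lintegral_congr fun x => ?_
    have h1 : ∫⁻ a, F (x, a) = ∫⁻ a in {a | Interlace x a}, ENNReal.ofReal (vdm a *
        (vdm x * (√(crossProd x a))⁻¹ * exp (-(∑ i, x i ^ 2) / 2))) := by
      exact lintegral_indicator
        (isOpen_interlace.preimage (f := fun a => (x, a)) (by fun_prop)).measurableSet _
    rw [h1]
    by_cases hx : StrictMono x
    · rw [Set.indicator_of_mem (by exact hx)]
      have h3 : ∀ a : Fin m → ℝ,
          vdm a * (vdm x * (√(crossProd x a))⁻¹ * exp (-(∑ i, x i ^ 2) / 2)) =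
          vdm x * exp (-(∑ i, x i ^ 2) / 2) * (vdm a * (√(crossProd x a))⁻¹) := fun a => by ring
      simp_rw [h3, ENNReal.ofReal_mul (mul_pos (vdm_pos hx) (exp_pos _)).le]
      rw [lintegral_const_mul' _ _ ENNReal.ofReal_ne_top, mul_left_comm,
        lintegral_interlace_right hx, mul_comm]
    · rw [Set.indicator_of_notMem (by exact hx)]
      have h2 : {a | Interlace x a} = ∅ :=
        Set.eq_empty_of_forall_notMem fun a ha => hx (Interlace.strictMono_left ha)
      rw [h2, setLIntegral_empty, mul_zero]
  rw [← hright, hswap, hleft]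

theorem chamberIntegral_eq (n : ℕ) :
    chamberIntegral n = ENNReal.ofReal (√(2 * π) ^ n *
      ∏ k ∈ range n, (Gamma ((k + 1 : ℕ) / 2) / Gamma (1 / 2))) := by
  induction n with
  | zero => simp [chamberIntegral_zero]
  | succ m ih =>
    have hG : 0 < Gamma (1 / 2) := Gamma_pos_of_pos (by norm_num)
    have hGm : 0 < Gamma ((m + 1 : ℕ) / 2) := Gamma_pos_of_pos (by positivity)
    have hP : 0 < ∏ k ∈ range m, (Gamma ((k + 1 : ℕ) / 2) / Gamma (1 / 2)) :=
      prod_pos fun k _ => div_pos (Gamma_pos_of_pos (by positivity)) hG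
    have h := chamberIntegral_succ m
    rw [ih, ← ENNReal.ofReal_pow hG.le, ← ENNReal.ofReal_pow hG.le,
      ← ENNReal.ofReal_mul (by positivity), ← ENNReal.ofReal_mul (by positivity),
      ← ENNReal.ofReal_mul (by positivity)] at h
    have h0 : ENNReal.ofReal (Gamma (1 / 2) ^ (m + 1)) ≠ 0 := by
      simpa using pow_pos hG _
    refine (ENNReal.mul_right_inj h0 ENNReal.ofReal_ne_top).1 (h.trans ?_)
    rw [← ENNReal.ofReal_mul (by positivity), prod_range_succ]
    congr 1
    field_simp
    ring

theorem lintegral_comp_perm {n : ℕ} (σ : Equiv.Perm (Fin n)) (f : (Fin n → ℝ) → ENNReal) :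
    ∫⁻ x : Fin n → ℝ, f (x ∘ σ) = ∫⁻ x, f x := by
  have h : ∀ x : Fin n → ℝ,
      MeasurableEquiv.piCongrLeft (fun _ : Fin n => ℝ) σ.symm x = x ∘ σ := fun x => by
    funext i
    rw [MeasurableEquiv.coe_piCongrLeft]
    nth_rewrite 1 [← σ.symm_apply_apply i]
    exact Equiv.piCongrLeft_apply_apply (fun _ => ℝ) σ.symm x (σ i)
  have h2 := (volume_measurePreserving_piCongrLeft (fun _ : Fin n => ℝ) σ.symm).lintegral_comp_emb
    (MeasurableEquiv.measurableEmbedding _) f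
  simpa only [h] using h2

/-- The integral of a symmetric function vanishing on the diagonals is determined by its integral
over the ordered chamber. -/
theorem lintegral_eq_factorial_mul {n : ℕ} {f : (Fin n → ℝ) → ENNReal} (hf : Measurable f)
    (hsymm : ∀ (σ : Equiv.Perm (Fin n)) x, f (x ∘ σ) = f x)
    (hzero : ∀ x, ¬Function.Injective x → f x = 0) :
    ∫⁻ x, f x = n.factorial * ∫⁻ x in {x | StrictMono x}, f x := by
  set g := {x : Fin n → ℝ | StrictMono x}.indicator f with hg
  have hgm : Measurable g := hf.indicator measurableSet_strictMono
  have hsum : ∀ x, f x = ∑ σ : Equiv.Perm (Fin n), g (x ∘ σ) := fun x => by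
    by_cases hx : Function.Injective x
    · rw [sum_eq_single (Tuple.sort x)]
      · rw [hg, Set.indicator_of_mem, hsymm]
        exact (Tuple.monotone_sort x).strictMono_of_injective (hx.comp (Tuple.sort x).injective)
      · intro σ _ hσ
        refine Set.indicator_of_notMem (fun h => hσ ?_) _
        have := Tuple.unique_monotone (StrictMono.monotone h) (Tuple.monotone_sort x)
        exact Equiv.ext fun i => hx (congrFun this i)
      · simp
    · rw [hzero x hx, eq_comm]
      refine sum_eq_zero fun σ _ => Set.indicator_of_notMem (fun h => hx ?_) _
      have h2 := (StrictMono.injective h).comp σ.symm.injective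
      rwa [Function.comp_assoc, Equiv.self_comp_symm, Function.comp_id] at h2
  rw [lintegral_congr hsum, lintegral_finsetSum _ fun σ _ => by fun_prop]
  simp_rw [lintegral_comp_perm]
  rw [sum_const, card_univ, Fintype.card_perm, Fintype.card_fin, nsmul_eq_mul, hg,
    lintegral_indicator measurableSet_strictMono]

theorem abs_vdm {n : ℕ} (x : Fin n → ℝ) : |vdm x| = ∏ i, ∏ j ∈ Ioi i, |x j - x i| := by
  simp [vdm, abs_prod]

theorem vdm_eq_det {n : ℕ} (x : Fin n → ℝ) : vdm x = (Matrix.vandermonde x).det := by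
  rw [Matrix.det_vandermonde, vdm]

theorem abs_vdm_comp_perm {n : ℕ} (x : Fin n → ℝ) (σ : Equiv.Perm (Fin n)) :
    |vdm (x ∘ σ)| = |vdm x| := by
  rw [vdm_eq_det, vdm_eq_det, show Matrix.vandermonde (x ∘ σ) =
    (Matrix.vandermonde x).submatrix σ id from rfl, Matrix.det_permute, abs_mul]
  rcases Int.units_eq_one_or (Equiv.Perm.sign σ) with h | h <;> simp [h]

theorem vdm_eq_zero {n : ℕ} {x : Fin n → ℝ} (hx : ¬Function.Injective x) : vdm x = 0 := by
  by_contra h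
  rw [vdm_eq_det, ← ne_eq, Matrix.det_vandermonde_ne_zero_iff] at h
  exact hx h

theorem lintegral_abs_vdm_mul_exp (n : ℕ) :
    ∫⁻ x : Fin n → ℝ, ENNReal.ofReal (|vdm x| * exp (-(∑ i, x i ^ 2) / 2)) =
      ENNReal.ofReal (n.factorial * (√(2 * π) ^ n *
        ∏ k ∈ range n, (Gamma ((k + 1 : ℕ) / 2) / Gamma (1 / 2)))) := by
  have hmv := measurable_vdm (n := n)
  rw [lintegral_eq_factorial_mul (by fun_prop) (fun σ x => ?_) (fun x hx => ?_),
    ENNReal.ofReal_mul (Nat.cast_nonneg _), ENNReal.ofReal_natCast, ← chamberIntegral_eq,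
    chamberIntegral]
  · congr 1
    exact setLIntegral_congr_fun measurableSet_strictMono fun x hx => by
      rw [abs_of_pos (vdm_pos hx)]
  · rw [abs_vdm_comp_perm]
    simp only [Function.comp_apply]
    rw [Equiv.sum_comp σ fun i => x i ^ 2]
  · simp [vdm_eq_zero hx]

/-- The linear map `x ↦ s • (x + κ • (∑ x) • 1)`. -/
noncomputable def shiftMatrix (n : ℕ) (s κ : ℝ) : Matrix (Fin n) (Fin n) ℝ :=
  s • (1 + Matrix.of fun _ _ => κ)

theorem shiftMatrix_mulVec {n : ℕ} (s κ : ℝ) (x : Fin n → ℝ) (i : Fin n) :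
    (shiftMatrix n s κ).mulVec x i = s * (x i + κ * ∑ j, x j) := by
  rw [shiftMatrix, Matrix.smul_mulVec, Matrix.add_mulVec, Matrix.one_mulVec, Pi.smul_apply,
    Pi.add_apply, smul_eq_mul, mul_sum]
  rfl

theorem det_shiftMatrix {n : ℕ} (s κ : ℝ) :
    (shiftMatrix n s κ).det = s ^ n * (1 + κ * n) := by
  have h : (Matrix.of fun _ _ => κ : Matrix (Fin n) (Fin n) ℝ) =
      Matrix.replicateCol Unit (fun _ : Fin n => κ) *
        Matrix.replicateRow Unit (fun _ : Fin n => (1 : ℝ)) := by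
    ext i j
    simp [Matrix.mul_apply]
  rw [shiftMatrix, Matrix.det_smul, h, Matrix.det_one_add_replicateCol_mul_replicateRow]
  simp [dotProduct, mul_comm]

theorem vdm_shiftMatrix_mulVec {n : ℕ} (s κ : ℝ) (x : Fin n → ℝ) :
    vdm ((shiftMatrix n s κ).mulVec x) = s ^ (∑ i : Fin n, #(Ioi i)) * vdm x := by
  simp only [vdm, shiftMatrix_mulVec, ← mul_sub, add_sub_add_right_eq_sub, prod_mul_distrib,
    prod_const, prod_pow_eq_pow_sum]

theorem lintegral_comp_mulVec {n : ℕ} {M : Matrix (Fin n) (Fin n) ℝ} (hM : M.det ≠ 0)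
    (f : (Fin n → ℝ) → ENNReal) :
    ∫⁻ x, f x = ENNReal.ofReal |M.det| * ∫⁻ x, f (M.mulVec x) := by
  have hinj : Function.Injective M.mulVec :=
    Matrix.mulVec_injective_iff_isUnit.2 ((Matrix.isUnit_iff_isUnit_det _).2 hM.isUnit)
  have hsurj : Function.Surjective M.mulVec :=
    Matrix.mulVec_surjective_iff_isUnit.2 ((Matrix.isUnit_iff_isUnit_det _).2 hM.isUnit)
  have h := lintegral_image_eq_lintegral_abs_det_fderiv_mul volume MeasurableSet.univ
    (fun x _ => ((Matrix.toLin' M).toContinuousLinearMap.hasFDerivAt (x := x)).hasFDerivWithinAt)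
    (hinj.injOn (s := Set.univ)) f
  rw [det_toContinuousLinearMap_toLin', lintegral_const_mul' _ _ ENNReal.ofReal_ne_top] at h
  rw [Set.image_univ, setLIntegral_univ] at h
  rw [← setLIntegral_univ, ← hsurj.range_eq]
  exact h

theorem card_add_sum_card_Ioi (n : ℕ) :
    ((n + ∑ i : Fin n, #(Ioi i) : ℕ) : ℝ) = n * (n + 1) / 2 := by
  have h : ∑ i : Fin n, #(Ioi i) = ∑ i ∈ range n, i := by
    simp only [Fin.card_Ioi]
    rw [Fin.sum_univ_eq_sum_range fun i => n - 1 - i, sum_range_reflect (fun i => i)]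
  rw [h]
  have h2 : ((∑ i ∈ range n, i : ℕ) : ℝ) = n * (n - 1) / 2 := by
    clear h
    induction n with
    | zero => simp
    | succ n ih => rw [sum_range_succ, Nat.cast_add, ih]; push_cast; ring
  push_cast at h2 ⊢
  rw [h2]
  ring

end MehtaIntegral

open MehtaIntegral

/-- Selberg-type Gaussian integral with a Vandermonde factor and a rank-one
perturbation of the quadratic form. -/
theorem stmt_7 (N : ℕ) (hN : 1 ≤ N) (c : ℝ) (hc : -1 < c) (α : ℝ)
    (hα : 0 < 1 + 2 * α * (1 + c) * N) :
    (∫ lam : Fin N → ℝ,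
        Real.exp (-α * (∑ i, lam i) ^ 2 - (1 / (2 * (1 + c))) * ∑ i, lam i ^ 2)
          * ∏ i, ∏ j ∈ Finset.univ.filter fun j => i < j, |lam j - lam i|)
      = (N.factorial : ℝ) * (2 * π) ^ ((N : ℝ) / 2)
          * (∏ k ∈ Finset.Icc 1 N, Real.Gamma ((k : ℝ) / 2) / Real.Gamma (1 / 2))
          * (1 + c) ^ ((N * (N + 1) : ℝ) / 4)
          / Real.sqrt (1 + 2 * α * (1 + c) * N) := by
  have hs2 : 0 < 1 + c := by linarith
  have hN0 : (N : ℝ) ≠ 0 := by positivity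
  obtain ⟨s, hs, hs0⟩ : ∃ s : ℝ, s = √(1 + c) ∧ 0 < s := ⟨_, rfl, sqrt_pos.2 hs2⟩
  obtain ⟨q, hq, hq0⟩ : ∃ q : ℝ, q = (√(1 + 2 * α * (1 + c) * N))⁻¹ ∧ 0 < q :=
    ⟨_, rfl, inv_pos.2 (sqrt_pos.2 hα)⟩
  have hss : s ^ 2 = 1 + c := by rw [hs, sq_sqrt hs2.le]
  have hqq : q ^ 2 * (1 + 2 * α * (1 + c) * N) = 1 := by
    rw [hq, inv_pow, sq_sqrt hα.le, inv_mul_cancel₀ hα.ne']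
  set κ := (q - 1) / N with hκ
  have hκN : 1 + κ * N = q := by rw [hκ]; field_simp; ring
  have hdet : (shiftMatrix N s κ).det = s ^ N * q := by rw [det_shiftMatrix, hκN]
  have hexp : ∀ x : Fin N → ℝ, -α * (∑ i, (shiftMatrix N s κ).mulVec x i) ^ 2 -
      (1 / (2 * (1 + c))) * ∑ i, (shiftMatrix N s κ).mulVec x i ^ 2 = -(∑ i, x i ^ 2) / 2 := by
    intro x
    set S := ∑ i, x i with hS
    have h1 : ∑ i, (shiftMatrix N s κ).mulVec x i = s * q * S := by
      simp only [shiftMatrix_mulVec, ← mul_sum, sum_add_distrib, sum_const, card_univ,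
        Fintype.card_fin, nsmul_eq_mul, ← hS, ← hκN]
      ring
    have h2 : ∑ i, (shiftMatrix N s κ).mulVec x i ^ 2 =
        s ^ 2 * (∑ i, x i ^ 2 + (2 * κ + κ ^ 2 * N) * S ^ 2) := by
      have h3 : ∀ i, (shiftMatrix N s κ).mulVec x i ^ 2 =
          s ^ 2 * (x i ^ 2 + 2 * κ * S * x i + κ ^ 2 * S ^ 2) := fun i => by
        rw [shiftMatrix_mulVec]; ring
      simp only [h3, ← mul_sum, sum_add_distrib, sum_const, card_univ, Fintype.card_fin,
        nsmul_eq_mul, ← hS]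
      ring
    have h4 : α * s ^ 2 * q ^ 2 + (2 * κ + κ ^ 2 * N) / 2 = 0 := by
      have h5 : N * (α * s ^ 2 * q ^ 2 + (2 * κ + κ ^ 2 * N) / 2) = 0 := by
        rw [hss]
        rw [← hκN] at hqq ⊢
        linear_combination hqq / 2
      exact (mul_eq_zero.1 h5).resolve_left hN0
    rw [h1, h2, hss]
    rw [hss] at h4
    have h6 : s ^ 2 = 1 + c := hss
    field_simp
    linear_combination (-2 * S ^ 2) * h4 + (-2 * α * q ^ 2 * S ^ 2) * h6
  have hfilter : ∀ i : Fin N, (univ.filter fun j => i < j) = Ioi i := fun i => by ext; simp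
  have hmv := measurable_vdm (n := N)
  simp only [hfilter, ← abs_vdm]
  rw [integral_eq_lintegral_of_nonneg_ae (Filter.Eventually.of_forall fun x => by positivity)
    (by fun_prop), lintegral_comp_mulVec (by rw [hdet]; positivity)]
  simp only [hexp, vdm_shiftMatrix_mulVec, hdet]
  have hpt : ∀ x : Fin N → ℝ, ENNReal.ofReal (exp (-(∑ i, x i ^ 2) / 2) *
      |s ^ (∑ i : Fin N, #(Ioi i)) * vdm x|) = ENNReal.ofReal (s ^ (∑ i : Fin N, #(Ioi i))) *
        ENNReal.ofReal (|vdm x| * exp (-(∑ i, x i ^ 2) / 2)) := fun x => by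
    rw [← ENNReal.ofReal_mul (by positivity), abs_mul, abs_of_pos (by positivity : 0 < s ^ _)]
    congr 1
    ring
  have hP : 0 < ∏ k ∈ range N, (Gamma ((k + 1 : ℕ) / 2) / Gamma (1 / 2)) :=
    prod_pos fun k _ => div_pos (Gamma_pos_of_pos (by positivity)) (Gamma_pos_of_pos (by norm_num))
  simp_rw [hpt]
  rw [lintegral_const_mul' _ _ ENNReal.ofReal_ne_top, lintegral_abs_vdm_mul_exp,
    abs_of_pos (by positivity), ← ENNReal.ofReal_mul (by positivity),
    ← ENNReal.ofReal_mul (by positivity), ENNReal.toReal_ofReal (by positivity)]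
  have hprod : ∏ k ∈ Icc 1 N, Gamma ((k : ℝ) / 2) / Gamma (1 / 2) =
      ∏ k ∈ range N, (Gamma ((k + 1 : ℕ) / 2) / Gamma (1 / 2)) := by
    rw [show Icc 1 N = Ico 1 (N + 1) from rfl, prod_Ico_eq_prod_range]
    simp [add_comm]
  have hpi : (2 * π) ^ ((N : ℝ) / 2) = √(2 * π) ^ N := by
    rw [sqrt_eq_rpow, ← rpow_natCast, ← rpow_mul (by positivity)]
    congr 1
    ring
  have hpow : (1 + c) ^ ((N * (N + 1) : ℝ) / 4) = s ^ N * s ^ (∑ i : Fin N, #(Ioi i)) := by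
    rw [← pow_add, ← rpow_natCast, card_add_sum_card_Ioi, hs, sqrt_eq_rpow, ← rpow_mul hs2.le]
    congr 1
    ring
  rw [hprod, hpi, hpow, div_eq_mul_inv _ √(1 + 2 * α * (1 + c) * N), ← hq]
  ring
end

section
/- Let N ≥ 2 be an integer, c > −1, and α a real number with 1 + 2α(1+c)N > 0. Then ∫_{ℝ^N} exp(−α(∑_{i=1}^N λ_i)² − (1/(2(1+c)))∑_{i=1}^N λ_i²) ∏_{2≤i<j≤N} |λ_j − λ_i| dλ_1⋯dλ_N = √(1+c) · (N−1)! (2π)^{N/2} (∏_{k=1}^{N−1} Γ(k/2)/Γ(1/2)) (1+c)^{N(N−1)/4} / √(1 + 2α(1+c)N). -/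
open MeasureTheory Finset Real

/-- The absolute value of the Vandermonde determinant. -/
noncomputable def absVandermonde {n : ℕ} (x : Fin n → ℝ) : ℝ :=
  ∏ i, ∏ j ∈ Ioi i, |x j - x i|

section absVandermonde

variable {n : ℕ}

lemma absVandermonde_nonneg (x : Fin n → ℝ) : 0 ≤ absVandermonde x :=
  prod_nonneg fun _ _ ↦ prod_nonneg fun _ _ ↦ abs_nonneg _

@[fun_prop]
lemma continuous_absVandermonde : Continuous (absVandermonde (n := n)) := by
  unfold absVandermonde
  fun_prop

lemma absVandermonde_eq_abs_det (x : Fin n → ℝ) :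
    absVandermonde x = |(Matrix.vandermonde x).det| := by
  simp_rw [Matrix.det_vandermonde, abs_prod, absVandermonde]

lemma absVandermonde_comp_perm (σ : Equiv.Perm (Fin n)) (x : Fin n → ℝ) :
    absVandermonde (x ∘ σ) = absVandermonde x := by
  have h : Matrix.vandermonde (x ∘ σ) = (Matrix.vandermonde x).submatrix σ id := rfl
  rw [absVandermonde_eq_abs_det, absVandermonde_eq_abs_det, h, Matrix.det_permute, abs_mul]
  simp [← Int.cast_abs]

lemma absVandermonde_eq_mul_removeNth (i : Fin (n + 1)) (x : Fin (n + 1) → ℝ) :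
    absVandermonde x =
      (∏ j, |x i - x (i.succAbove j)|) * absVandermonde (fun j ↦ x (i.succAbove j)) := by
  rw [← absVandermonde_comp_perm i.cycleRange.symm x, absVandermonde, Fin.prod_univ_succ]
  simp only [Fin.prod_Ioi_zero, Fin.prod_Ioi_succ, Function.comp_apply, Fin.cycleRange_symm_zero,
    Fin.cycleRange_symm_succ, abs_sub_comm (x i)]
  rfl

lemma absVandermonde_eq_zero {x : Fin n → ℝ} {i j : Fin n} (hij : i ≠ j) (h : x i = x j) :
    absVandermonde x = 0 := by
  rw [absVandermonde_eq_abs_det, abs_eq_zero, Matrix.det_vandermonde_eq_zero_iff]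
  exact ⟨i, j, h, hij⟩

lemma absVandermonde_smul (r : ℝ) (x : Fin n → ℝ) :
    absVandermonde (r • x) = |r| ^ (∑ i ∈ range n, i) * absVandermonde x := by
  induction n with
  | zero => simp [absVandermonde]
  | succ n ih =>
    rw [absVandermonde_eq_mul_removeNth 0, absVandermonde_eq_mul_removeNth 0 x]
    have h := ih (fun j ↦ x (Fin.succAbove 0 j))
    simp only [Pi.smul_def, smul_eq_mul, ← mul_sub, abs_mul] at h ⊢
    rw [h, prod_mul_distrib, sum_range_succ, pow_add]
    simp
    ring

lemma absVandermonde_add_const (r : ℝ) (x : Fin n → ℝ) :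
    absVandermonde (fun i ↦ x i + r) = absVandermonde x := by
  simp [absVandermonde]

lemma abs_sub_le_one_add_mul (a b : ℝ) : |a - b| ≤ (1 + |a|) * (1 + |b|) := by
  nlinarith [abs_sub a b, mul_nonneg (abs_nonneg a) (abs_nonneg b)]

lemma one_le_one_add_mul (a b : ℝ) : 1 ≤ (1 + |a|) * (1 + |b|) := by
  nlinarith [abs_nonneg a, abs_nonneg b, mul_nonneg (abs_nonneg a) (abs_nonneg b)]

lemma prod_pair_eq (x : Fin n → ℝ) :
    ∏ q : Fin n × Fin n, (1 + |x q.1|) * (1 + |x q.2|) = ∏ i, (1 + |x i|) ^ (2 * n) := by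
  rw [Fintype.prod_prod_type]
  simp only [prod_mul_distrib, prod_const, card_univ, Fintype.card_fin, two_mul, pow_add,
    ← prod_pow]

lemma absVandermonde_eq_prod_pair (x : Fin n → ℝ) :
    absVandermonde x = ∏ q : Fin n × Fin n, if q.1 < q.2 then |x q.2 - x q.1| else 1 := by
  rw [Fintype.prod_prod_type, absVandermonde]
  refine prod_congr rfl fun i _ ↦ ?_
  rw [← prod_filter]
  congr 1
  ext j
  simp

lemma absVandermonde_le (x : Fin n → ℝ) : absVandermonde x ≤ ∏ i, (1 + |x i|) ^ (2 * n) := by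
  rw [absVandermonde_eq_prod_pair, ← prod_pair_eq]
  refine prod_le_prod (fun q _ ↦ by positivity) fun q _ ↦ ?_
  split_ifs
  · rw [mul_comm]; exact abs_sub_le_one_add_mul _ _
  · exact one_le_one_add_mul _ _

lemma absVandermonde_le_mul {i j : Fin n} (hij : i ≠ j) (x : Fin n → ℝ) :
    absVandermonde x ≤ |x i - x j| * ∏ i, (1 + |x i|) ^ (2 * n) := by
  wlog h : i < j generalizing i j
  · rw [abs_sub_comm]
    exact this hij.symm (lt_of_le_of_ne (not_lt.1 h) hij.symm)
  rw [absVandermonde_eq_prod_pair, ← prod_pair_eq, ← mul_prod_erase _ _ (mem_univ (i, j)),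
    ← mul_prod_erase univ (fun q : Fin n × Fin n ↦ (1 + |x q.1|) * (1 + |x q.2|))
      (mem_univ (i, j))]
  simp only [h, if_true]
  rw [abs_sub_comm]
  refine mul_le_mul_of_nonneg_left ?_ (abs_nonneg _)
  refine le_trans (prod_le_prod (fun q _ ↦ by positivity) fun q _ ↦ ?_)
    (le_mul_of_one_le_left (prod_nonneg fun q _ ↦ by positivity) (one_le_one_add_mul _ _))
  split_ifs
  · rw [mul_comm]; exact abs_sub_le_one_add_mul _ _
  · exact one_le_one_add_mul _ _

lemma abs_absVandermonde_div_le {i j : Fin n} (hij : i ≠ j) (x : Fin n → ℝ) :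
    |absVandermonde x / (x i - x j)| ≤ ∏ i, (1 + |x i|) ^ (2 * n) := by
  rw [abs_div, abs_of_nonneg (absVandermonde_nonneg x)]
  refine div_le_of_le_mul₀ (abs_nonneg _) (prod_nonneg fun i _ ↦ by positivity) ?_
  rw [mul_comm]
  exact absVandermonde_le_mul hij x

end absVandermonde

section Integrability

lemma one_add_abs_pow_mul_exp_le (K : ℕ) (t : ℝ) :
    (1 + |t|) ^ K * exp (-(|t| / 2)) ≤ K.factorial * 4 ^ K * exp (1 / 4) * exp (-(|t| / 4)) := by
  have h := Real.pow_div_factorial_le_exp ((1 + |t|) / 4) (by positivity) K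
  rw [div_le_iff₀ (by positivity), div_pow, div_le_iff₀ (by positivity)] at h
  calc (1 + |t|) ^ K * exp (-(|t| / 2))
      ≤ (exp ((1 + |t|) / 4) * K.factorial * 4 ^ K) * exp (-(|t| / 2)) := by gcongr
    _ = K.factorial * 4 ^ K * (exp ((1 + |t|) / 4) * exp (-(|t| / 2))) := by ring
    _ = K.factorial * 4 ^ K * (exp (1 / 4) * exp (-(|t| / 4))) := by
        rw [← exp_add, ← exp_add]; ring_nf
    _ = _ := by ring

lemma integrable_exp_neg_abs_div_four : Integrable (fun t : ℝ ↦ exp (-(|t| / 4))) := by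
  rw [← integrableOn_univ, ← Set.Iic_union_Ioi (a := (0 : ℝ))]
  refine IntegrableOn.union ?_ ?_
  · refine (integrableOn_exp_mul_Iic (a := 1 / 4) (by norm_num) 0).congr_fun (fun t ht ↦ ?_)
      measurableSet_Iic
    simp only [abs_of_nonpos (Set.mem_Iic.1 ht)]
    ring_nf
  · refine (integrableOn_exp_mul_Ioi (a := -(1 / 4)) (by norm_num) 0).congr_fun (fun t ht ↦ ?_)
      measurableSet_Ioi
    simp only [abs_of_pos (Set.mem_Ioi.1 ht)]
    ring_nf

lemma integrable_one_add_abs_pow_mul_exp (K : ℕ) :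
    Integrable (fun t : ℝ ↦ (1 + |t|) ^ K * exp (-(|t| / 2))) := by
  refine (integrable_exp_neg_abs_div_four.const_mul (K.factorial * 4 ^ K * exp (1 / 4))).mono'
    (by fun_prop) (ae_of_all _ fun t ↦ ?_)
  rw [norm_of_nonneg (by positivity)]
  exact one_add_abs_pow_mul_exp_le K t

lemma abs_pow_mul_exp_le (a : ℕ) {t : ℝ} (ht : 0 ≤ t) :
    |t ^ a * exp (-t)| ≤ (1 + |t|) ^ a * exp (-(|t| / 2)) := by
  rw [abs_mul, abs_pow, abs_exp]
  refine mul_le_mul (pow_le_pow_left₀ (abs_nonneg _) (by linarith) _) (exp_le_exp.2 ?_)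
    (exp_nonneg _) (by positivity)
  rw [abs_of_nonneg ht]
  linarith

end Integrability

section OneVariable

variable {n : ℕ}

lemma prod_abs_sub_le (y : Fin n → ℝ) (t : ℝ) :
    ∏ j, |t - y j| ≤ (1 + |t|) ^ n * ∏ j, (1 + |y j|) := by
  calc ∏ j, |t - y j| ≤ ∏ j, (1 + |t|) * (1 + |y j|) :=
        prod_le_prod (fun _ _ ↦ abs_nonneg _) fun j _ ↦ abs_sub_le_one_add_mul _ _
    _ = _ := by simp [prod_mul_distrib]

lemma abs_prod_abs_sub_div_le (y : Fin n → ℝ) (j : Fin n) (t : ℝ) :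
    |(∏ k, |t - y k|) / (t - y j)| ≤ (1 + |t|) ^ n * ∏ k, (1 + |y k|) := by
  rw [abs_div, abs_of_nonneg (prod_nonneg fun _ _ ↦ abs_nonneg _)]
  refine div_le_of_le_mul₀ (abs_nonneg _) (by positivity) ?_
  calc ∏ k, |t - y k| = (∏ k ∈ univ.erase j, |t - y k|) * |t - y j| :=
        (prod_erase_mul _ _ (mem_univ j)).symm
    _ ≤ (∏ k ∈ univ.erase j, (1 + |t|) * (1 + |y k|)) * |t - y j| := by
        gcongr with k _
        exact abs_sub_le_one_add_mul _ _
    _ ≤ (∏ k, (1 + |t|) * (1 + |y k|)) * |t - y j| := by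
        refine mul_le_mul_of_nonneg_right ?_ (abs_nonneg _)
        rw [← prod_erase_mul univ (fun k ↦ (1 + |t|) * (1 + |y k|)) (mem_univ j)]
        exact le_mul_of_one_le_right (by positivity) (one_le_one_add_mul _ _)
    _ = _ := by simp [prod_mul_distrib]

lemma hasDerivAt_prod_abs_sub (y : Fin n → ℝ) {t : ℝ} (ht : t ∉ Set.range y) :
    HasDerivAt (fun t ↦ ∏ j, |t - y j|) (∑ j, (∏ k, |t - y k|) / (t - y j)) t := by
  have hne (j : Fin n) : t - y j ≠ 0 := fun h ↦ ht ⟨j, (sub_eq_zero.1 h).symm⟩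
  have h : HasDerivAt (∏ j, fun t ↦ |t - y j|) _ t :=
    HasDerivAt.finsetProd (u := univ) (f := fun j t ↦ |t - y j|)
      (f' := fun j ↦ |t - y j| / (t - y j)) (x := t) fun j _ ↦ by
      refine HasDerivAt.congr_deriv (f := fun t ↦ |t - y j|)
        ((hasDerivAt_abs (hne j)).comp_sub_const t (y j)) ?_
      rw [eq_comm]
      rcases lt_or_gt_of_ne (hne j) with h | h
      · rw [sign_neg h, abs_of_neg h, neg_div, div_self (hne j)]
        simp
      · rw [sign_pos h, abs_of_pos h, div_self (hne j)]
        simp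
  rw [prod_fn] at h
  refine h.congr_deriv ?_
  · refine sum_congr rfl fun j _ ↦ ?_
    rw [← prod_erase_mul univ _ (mem_univ j), smul_eq_mul, mul_div_assoc]

lemma integrableOn_pow_mul_exp_mul (a K : ℕ) (C : ℝ) {g : ℝ → ℝ} (hg : Measurable g)
    (hle : ∀ t, |g t| ≤ (1 + |t|) ^ K * C) :
    IntegrableOn (fun t ↦ t ^ a * exp (-t) * g t) (Set.Ioi 0) := by
  refine ((integrable_one_add_abs_pow_mul_exp (a + K)).mul_const C).integrableOn.mono'
    (by fun_prop) ((ae_restrict_iff' measurableSet_Ioi).2 (ae_of_all _ fun t ht ↦ ?_))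
  rw [norm_mul, norm_eq_abs, norm_eq_abs]
  calc _ ≤ ((1 + |t|) ^ a * exp (-(|t| / 2))) * ((1 + |t|) ^ K * C) :=
        mul_le_mul (abs_pow_mul_exp_le a (le_of_lt ht)) (hle t) (abs_nonneg _) (by positivity)
    _ = _ := by ring

lemma integral_Ioi_deriv_pow_mul_exp_mul (a : ℕ) (y : Fin n → ℝ) :
    ∫ t in Set.Ioi (0 : ℝ), (a * (t ^ (a - 1) * exp (-t) * ∏ j, |t - y j|)
        - t ^ a * exp (-t) * ∏ j, |t - y j|
        + ∑ j, t ^ a * exp (-t) * ((∏ k, |t - y k|) / (t - y j)))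
      = -((0 : ℝ) ^ a * ∏ j, |y j|) := by
  set g : ℝ → ℝ := fun t ↦ t ^ a * exp (-t) * ∏ j, |t - y j| with hg
  set g' : ℝ → ℝ := fun t ↦ a * (t ^ (a - 1) * exp (-t) * ∏ j, |t - y j|)
        - t ^ a * exp (-t) * ∏ j, |t - y j|
        + ∑ j, t ^ a * exp (-t) * ((∏ k, |t - y k|) / (t - y j)) with hg'
  have hP (b : ℕ) := integrableOn_pow_mul_exp_mul b n (∏ k, (1 + |y k|))
    (g := fun t ↦ ∏ j, |t - y j|) (by fun_prop) fun t ↦ by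
      rw [abs_of_nonneg (prod_nonneg fun _ _ ↦ abs_nonneg _)]
      exact prod_abs_sub_le y t
  have hint : IntegrableOn g' (Set.Ioi 0) := by
    refine (((hP (a - 1)).const_mul _).sub (hP a)).add (integrable_finsetSum _ fun j _ ↦ ?_)
    exact integrableOn_pow_mul_exp_mul a n (∏ k, (1 + |y k|)) (by fun_prop)
      fun t ↦ abs_prod_abs_sub_div_le y j t
  have hderiv (t : ℝ) (ht : t ∉ Set.range y) : HasDerivAt g (g' t) t := by
    refine HasDerivAt.congr_deriv (f := g) ((((hasDerivAt_pow a t).mul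
      (hasDerivAt_id t).neg.exp).mul (hasDerivAt_prod_abs_sub y ht))) ?_
    simp only [hg', ← mul_sum, Pi.mul_apply, Pi.neg_apply, id]
    ring
  have hcont : Continuous g := by fun_prop
  have hlim : Filter.Tendsto g Filter.atTop (nhds 0) := by
    have h0 : Filter.Tendsto (fun t : ℝ ↦ (a + n).factorial * 4 ^ (a + n) * exp (1 / 4)
        * exp (-(t / 4)) * ∏ k, (1 + |y k|)) Filter.atTop (nhds 0) := by
      have h1 : Filter.Tendsto (fun t : ℝ ↦ exp (-(t / 4))) Filter.atTop (nhds 0) :=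
        tendsto_exp_neg_atTop_nhds_zero.comp (Filter.tendsto_id.atTop_div_const (by norm_num))
      simpa using (h1.const_mul _).mul_const _
    refine squeeze_zero_norm' ?_ h0
    filter_upwards [Filter.eventually_ge_atTop 0] with t ht
    rw [norm_mul, norm_eq_abs, norm_eq_abs,
      abs_of_nonneg (prod_nonneg (s := univ) fun j _ ↦ abs_nonneg (t - y j))]
    calc _ ≤ ((1 + |t|) ^ a * exp (-(|t| / 2))) * ((1 + |t|) ^ n * ∏ k, (1 + |y k|)) :=
          mul_le_mul (abs_pow_mul_exp_le a ht) (prod_abs_sub_le y t) (by positivity) (by positivity)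
      _ = ((1 + |t|) ^ (a + n) * exp (-(|t| / 2))) * ∏ k, (1 + |y k|) := by ring
      _ ≤ _ := by
          have := one_add_abs_pow_mul_exp_le (a + n) t
          nth_rw 3 [abs_of_nonneg ht] at this
          gcongr
  have h1 := intervalIntegral_tendsto_integral_Ioi 0 hint Filter.tendsto_id
  have h2 (R : ℝ) (hR : 0 ≤ R) : ∫ t in (0 : ℝ)..R, g' t = g R - g 0 :=
    integral_eq_of_hasDerivAt_off_countable g g' (Set.finite_range y).countable
      hcont.continuousOn (fun t ht ↦ hderiv t ht.2)
      ((intervalIntegrable_iff_integrableOn_Ioc_of_le hR).2 (hint.mono_set Set.Ioc_subset_Ioi_self))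
  have h3 : Filter.Tendsto (fun R ↦ ∫ t in (0 : ℝ)..R, g' t) Filter.atTop (nhds (0 - g 0)) := by
    refine (hlim.sub_const (g 0)).congr' ?_
    filter_upwards [Filter.eventually_ge_atTop 0] with R hR using (h2 R hR).symm
  rw [tendsto_nhds_unique h1 h3]
  simp [hg]

end OneVariable

section Laguerre

variable {n : ℕ}

/-- Lebesgue measure on the open positive orthant. -/
noncomputable def orthantMeasure (n : ℕ) : Measure (Fin n → ℝ) :=
  Measure.pi fun _ ↦ volume.restrict (Set.Ioi 0)

/-- The weight `∏ xₖ ^ pₖ * exp (-xₖ)`. -/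
noncomputable def laguerreWeight (p : Fin n → ℕ) (x : Fin n → ℝ) : ℝ :=
  ∏ k, x k ^ p k * exp (-x k)

/-- The integral of `absVandermonde` against `laguerreWeight p` over the positive orthant. -/
noncomputable def laguerreIntegral (p : Fin n → ℕ) : ℝ :=
  ∫ x, laguerreWeight p x * absVandermonde x ∂orthantMeasure n

/-- The integral of `absVandermonde x / (x i - x j)` against `laguerreWeight p` over the positive
orthant. -/
noncomputable def laguerreDivIntegral (p : Fin n → ℕ) (i j : Fin n) : ℝ :=
  ∫ x, laguerreWeight p x * (absVandermonde x / (x i - x j)) ∂orthantMeasure n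

@[fun_prop]
lemma continuous_laguerreWeight (p : Fin n → ℕ) : Continuous (laguerreWeight p) := by
  unfold laguerreWeight
  fun_prop

lemma ae_orthantMeasure_pos : ∀ᵐ x ∂orthantMeasure n, ∀ i, 0 < x i := by
  rw [orthantMeasure, ae_all_iff]
  intro i
  exact (Measure.tendsto_eval_ae_ae (i := i)).eventually (ae_restrict_mem measurableSet_Ioi)

lemma integrable_laguerreWeight_mul (p : Fin n → ℕ) (K : ℕ) {g : (Fin n → ℝ) → ℝ}
    (hg : Measurable g) (hle : ∀ x, |g x| ≤ ∏ i, (1 + |x i|) ^ K) :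
    Integrable (fun x ↦ laguerreWeight p x * g x) (orthantMeasure n) := by
  have hint : Integrable (fun x : Fin n → ℝ ↦ ∏ i, (1 + |x i|) ^ (p i + K) * exp (-(|x i| / 2)))
      (orthantMeasure n) :=
    Integrable.fintype_prod (f := fun i (t : ℝ) ↦ (1 + |t|) ^ (p i + K) * exp (-(|t| / 2)))
      fun i ↦ (integrable_one_add_abs_pow_mul_exp (p i + K)).restrict
  refine hint.mono' (by fun_prop) ?_
  filter_upwards [ae_orthantMeasure_pos] with x hx
  rw [norm_mul, norm_eq_abs, norm_eq_abs, laguerreWeight, abs_prod]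
  calc _ ≤ (∏ i, (1 + |x i|) ^ p i * exp (-(|x i| / 2))) * ∏ i, (1 + |x i|) ^ K :=
        mul_le_mul (prod_le_prod (fun _ _ ↦ abs_nonneg _)
          fun i _ ↦ abs_pow_mul_exp_le (p i) (hx i).le) (hle x) (abs_nonneg _) (by positivity)
    _ = _ := by
        rw [← prod_mul_distrib]
        exact prod_congr rfl fun i _ ↦ by ring

lemma integrable_laguerreWeight_mul_absVandermonde (p : Fin n → ℕ) :
    Integrable (fun x ↦ laguerreWeight p x * absVandermonde x) (orthantMeasure n) :=
  integrable_laguerreWeight_mul p (2 * n) (by fun_prop) fun x ↦ by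
    rw [abs_of_nonneg (absVandermonde_nonneg x)]
    exact absVandermonde_le x

lemma integrable_laguerreWeight_mul_div (p : Fin n → ℕ) {i j : Fin n} (hij : i ≠ j) :
    Integrable (fun x ↦ laguerreWeight p x * (absVandermonde x / (x i - x j)))
      (orthantMeasure n) :=
  integrable_laguerreWeight_mul p (2 * n) (by fun_prop) fun x ↦ abs_absVandermonde_div_le hij x

lemma integral_orthantMeasure_comp_perm (σ : Equiv.Perm (Fin n)) (f : (Fin n → ℝ) → ℝ) :
    ∫ x, f (x ∘ σ) ∂orthantMeasure n = ∫ x, f x ∂orthantMeasure n := by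
  have h := measurePreserving_piCongrLeft
    (fun _ : Fin n ↦ (volume : Measure ℝ).restrict (Set.Ioi 0)) σ.symm
  rw [orthantMeasure, ← h.integral_comp' f]
  congr! 3 with x
  ext i
  simp [MeasurableEquiv.piCongrLeft, Equiv.piCongrLeft_apply]

lemma laguerreWeight_comp_perm (σ : Equiv.Perm (Fin n)) (p : Fin n → ℕ) (x : Fin n → ℝ) :
    laguerreWeight p (x ∘ σ) = laguerreWeight (p ∘ σ.symm) x := by
  rw [laguerreWeight, laguerreWeight,
    ← Equiv.prod_comp σ fun k ↦ x k ^ (p ∘ σ.symm) k * exp (-x k)]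
  simp

lemma laguerreDivIntegral_eq_zero {p : Fin n → ℕ} {i j : Fin n} (hp : p i = p j) :
    laguerreDivIntegral p i j = 0 := by
  have hps : p ∘ (Equiv.swap i j).symm = p := by
    ext k
    rw [Equiv.symm_swap, Function.comp_apply, Equiv.swap_apply_def]
    split_ifs <;> simp_all
  have h : laguerreDivIntegral p i j = -laguerreDivIntegral p i j := by
    nth_rw 1 [laguerreDivIntegral, ← integral_orthantMeasure_comp_perm (Equiv.swap i j)]
    simp only [laguerreWeight_comp_perm, absVandermonde_comp_perm, hps]
    rw [laguerreDivIntegral, ← integral_neg]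
    congr 1 with x
    simp only [Function.comp_apply, Equiv.swap_apply_left, Equiv.swap_apply_right]
    rw [← mul_neg, ← div_neg, neg_sub]
  linarith

lemma laguerreWeight_update_succ (p : Fin n → ℕ) (i : Fin n) (x : Fin n → ℝ) :
    laguerreWeight (Function.update p i (p i + 1)) x = x i * laguerreWeight p x := by
  rw [laguerreWeight, laguerreWeight, ← mul_prod_erase _ _ (mem_univ i),
    ← mul_prod_erase univ (fun k ↦ x k ^ p k * exp (-x k)) (mem_univ i), Function.update_self,
    pow_succ']
  rw [prod_congr rfl fun k hk ↦ by rw [Function.update_of_ne (ne_of_mem_erase hk)]]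
  ring

lemma laguerreDivIntegral_update {p : Fin n → ℕ} {i j : Fin n} (hij : i ≠ j) (hp : p i = p j) :
    laguerreDivIntegral (Function.update p i (p i + 1)) i j = laguerreIntegral p / 2 := by
  have hps : p ∘ (Equiv.swap i j).symm = p := by
    ext k
    rw [Equiv.symm_swap, Function.comp_apply, Equiv.swap_apply_def]
    split_ifs <;> simp_all
  have h1 := integral_orthantMeasure_comp_perm (Equiv.swap i j)
    fun x ↦ x i * laguerreWeight p x * (absVandermonde x / (x i - x j))
  have hint := integrable_laguerreWeight_mul_div (Function.update p i (p i + 1)) hij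
  have hint' := integrable_laguerreWeight_mul_div (Function.update p j (p j + 1)) hij.symm
  simp only [laguerreWeight_update_succ, laguerreWeight_comp_perm, absVandermonde_comp_perm, hps,
    Function.comp_apply, Equiv.swap_apply_left, Equiv.swap_apply_right] at h1 hint hint'
  have h2 : laguerreIntegral p = laguerreDivIntegral (Function.update p i (p i + 1)) i j
      + laguerreDivIntegral (Function.update p i (p i + 1)) i j := by
    nth_rw 2 [laguerreDivIntegral]
    simp only [laguerreDivIntegral, laguerreWeight_update_succ]
    rw [← h1]
    nth_rw 1 [h1]
    rw [laguerreIntegral, ← integral_add hint hint']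
    congr 1 with x
    by_cases hx : x i = x j
    · simp [absVandermonde_eq_zero hij hx]
    · have h3 : x i - x j ≠ 0 := sub_ne_zero.2 hx
      have h4 : x j - x i ≠ 0 := sub_ne_zero.2 (Ne.symm hx)
      rw [← neg_sub (x i) (x j), div_neg]
      field_simp
      ring
  linarith

end Laguerre

section Recursion

variable {n : ℕ}

lemma laguerreWeight_eq_mul_removeNth (p : Fin (n + 1) → ℕ) (i : Fin (n + 1))
    (x : Fin (n + 1) → ℝ) :
    laguerreWeight p x = x i ^ p i * exp (-x i) *
      laguerreWeight (fun j ↦ p (i.succAbove j)) (fun j ↦ x (i.succAbove j)) := by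
  rw [laguerreWeight, laguerreWeight, i.prod_univ_succAbove]

lemma laguerreWeight_add_one (p : Fin n → ℕ) (x : Fin n → ℝ) :
    laguerreWeight (fun j ↦ p j + 1) x = (∏ j, x j) * laguerreWeight p x := by
  simp only [laguerreWeight, ← prod_mul_distrib]
  exact prod_congr rfl fun j _ ↦ by ring

/-- Integrate `∂ᵢ (laguerreWeight p * absVandermonde)` over the orthant. -/
lemma laguerreIntegral_integration_by_parts (p : Fin (n + 1) → ℕ) (i : Fin (n + 1)) :
    p i * laguerreIntegral (Function.update p i (p i - 1)) - laguerreIntegral p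
        + ∑ j, laguerreDivIntegral p i (i.succAbove j)
      = -(0 ^ p i * laguerreIntegral fun j ↦ p (i.succAbove j) + 1) := by
  have hi1 := (integrable_laguerreWeight_mul_absVandermonde
    (Function.update p i (p i - 1))).const_mul (p i : ℝ)
  have hi2 := integrable_laguerreWeight_mul_absVandermonde p
  have hi3 (j : Fin n) := integrable_laguerreWeight_mul_div p (i.succAbove_ne j).symm
  have hsum := integrable_finsetSum univ fun j _ ↦ hi3 j
  set F : (Fin (n + 1) → ℝ) → ℝ := fun x ↦
    p i * (laguerreWeight (Function.update p i (p i - 1)) x * absVandermonde x)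
      - laguerreWeight p x * absVandermonde x
      + ∑ j, laguerreWeight p x * (absVandermonde x / (x i - x (i.succAbove j))) with hF
  have hFint : Integrable F (orthantMeasure (n + 1)) := (hi1.sub hi2).add hsum
  have hFeq : ∫ x, F x ∂orthantMeasure (n + 1) =
      p i * laguerreIntegral (Function.update p i (p i - 1)) - laguerreIntegral p
        + ∑ j, laguerreDivIntegral p i (i.succAbove j) := by
    refine (integral_add (hi1.sub hi2) hsum).trans (congr_arg₂ _ ?_ ?_)
    · refine (integral_sub hi1 hi2).trans ?_
      rw [integral_const_mul]
      rfl
    · exact integral_finsetSum _ fun j _ ↦ hi3 j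
  have hmp := (measurePreserving_piFinSuccAbove
    (fun _ : Fin (n + 1) ↦ (volume : Measure ℝ).restrict (Set.Ioi 0)) i).symm
  have hFint' := (hmp.integrable_comp_emb (MeasurableEquiv.measurableEmbedding _)).2 hFint
  rw [← hFeq, orthantMeasure, ← hmp.integral_comp' F]
  refine (integral_prod_symm _ hFint').trans ?_
  rw [laguerreIntegral, ← integral_const_mul, ← integral_neg, orthantMeasure]
  refine integral_congr_ae ?_
  filter_upwards [ae_orthantMeasure_pos (n := n)] with y hy
  have hcalc (t : ℝ) : F ((MeasurableEquiv.piFinSuccAbove (fun _ ↦ ℝ) i).symm (t, y)) =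
      (p i * (t ^ (p i - 1) * exp (-t) * ∏ j, |t - y j|)
        - t ^ p i * exp (-t) * ∏ j, |t - y j|
        + ∑ j, t ^ p i * exp (-t) * ((∏ k, |t - y k|) / (t - y j))) *
      (laguerreWeight (fun j ↦ p (i.succAbove j)) y * absVandermonde y) := by
    simp only [hF, laguerreWeight_eq_mul_removeNth _ i, absVandermonde_eq_mul_removeNth i,
      MeasurableEquiv.piFinSuccAbove_symm_apply, Fin.insertNthEquiv_apply, Fin.insertNth_apply_same,
      Fin.insertNth_apply_succAbove, Function.update_self,
      Function.update_of_ne (i.succAbove_ne _), add_mul, sub_mul, sum_mul]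
    congr 1
    · ring
    · exact sum_congr rfl fun j _ ↦ by ring
  refine (integral_congr_ae (ae_of_all _ hcalc)).trans ?_
  rw [integral_mul_const, integral_Ioi_deriv_pow_mul_exp_mul, laguerreWeight_add_one,
    prod_congr rfl fun j _ ↦ abs_of_pos (hy j)]
  ring

lemma laguerreIntegral_zero_succ :
    laguerreIntegral (0 : Fin (n + 1) → ℕ) = laguerreIntegral fun _ : Fin n ↦ 1 := by
  have h := laguerreIntegral_integration_by_parts (0 : Fin (n + 1) → ℕ) 0
  have hz (j : Fin (n + 1)) : laguerreDivIntegral (0 : Fin (n + 1) → ℕ) 0 j = 0 :=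
    laguerreDivIntegral_eq_zero rfl
  simp [hz] at h
  linarith

lemma laguerreIntegral_update {p : Fin n → ℕ} {i : Fin n} (hp : ∀ j, p j = p i ∨ p j = p i + 1) :
    laguerreIntegral (Function.update p i (p i + 1)) =
      (p i + 1 + #{j | j ≠ i ∧ p j = p i} / 2) * laguerreIntegral p := by
  obtain _ | n := n
  · exact i.elim0
  have h := laguerreIntegral_integration_by_parts (Function.update p i (p i + 1)) i
  have hS (j : Fin n) : laguerreDivIntegral (Function.update p i (p i + 1)) i (i.succAbove j)
      = if p (i.succAbove j) = p i then laguerreIntegral p / 2 else 0 := by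
    split_ifs with hj
    · exact laguerreDivIntegral_update (i.succAbove_ne j).symm hj.symm
    · refine laguerreDivIntegral_eq_zero ?_
      rw [Function.update_self, Function.update_of_ne (i.succAbove_ne j)]
      exact ((hp _).resolve_left hj).symm
  have hcard : #{j | j ≠ i ∧ p j = p i} = #{j | p (i.succAbove j) = p i} := by
    rw [← card_map (i.succAboveEmb)]
    congr 1
    ext j
    simp only [mem_filter, mem_univ, true_and, mem_map, Fin.succAboveEmb_apply]
    constructor
    · rintro ⟨hj, h⟩
      obtain ⟨k, rfl⟩ := Fin.exists_succAbove_eq hj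
      exact ⟨k, h, rfl⟩
    · rintro ⟨k, h, rfl⟩
      exact ⟨i.succAbove_ne k, h⟩
  simp only [hS, ← sum_filter, sum_const, Function.update_self, Function.update_idem,
    Nat.add_sub_cancel, Function.update_eq_self, nsmul_eq_mul, ← hcard] at h
  simp at h
  rw [hcard]
  rw [hcard] at h
  linarith

lemma laguerreIntegral_const_succ (n m : ℕ) :
    laguerreIntegral (fun _ : Fin n ↦ m + 1) =
      (∏ j ∈ range n, ((m : ℝ) + 1 + j / 2)) * laguerreIntegral fun _ : Fin n ↦ m := by
  have h (r : ℕ) (hr : r ≤ n) : laguerreIntegral (fun k : Fin n ↦ if k.1 < r then m + 1 else m) =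
      (∏ j ∈ range r, ((m : ℝ) + 1 + (n - 1 - j : ℕ) / 2)) *
        laguerreIntegral fun _ : Fin n ↦ m := by
    induction r with
    | zero => simp
    | succ r ih =>
      have hu : (fun k : Fin n ↦ if k.1 < r + 1 then m + 1 else m) =
          Function.update (fun k : Fin n ↦ if k.1 < r then m + 1 else m) ⟨r, hr⟩ (m + 1) := by
        ext k
        rw [Function.update_apply]
        simp only [Fin.ext_iff]
        split_ifs <;> first | rfl | omega
      have := laguerreIntegral_update (p := fun k : Fin n ↦ if k.1 < r then m + 1 else m)
        (i := ⟨r, hr⟩) (fun j ↦ by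
          by_cases hj : j.1 < r <;> simp [hj])
      have hcard : #{j : Fin n | j ≠ ⟨r, hr⟩ ∧ (if j.1 < r then m + 1 else m) = m}
          = n - 1 - r := by
        have : ({j : Fin n | j ≠ ⟨r, hr⟩ ∧ (if j.1 < r then m + 1 else m) = m} : Finset (Fin n))
            = Ioi ⟨r, hr⟩ := by
          ext j
          simp only [mem_filter, mem_univ, true_and, mem_Ioi, Fin.lt_def, ne_eq, Fin.ext_iff]
          split_ifs <;> omega
        rw [this, Fin.card_Ioi]
      simp only [lt_irrefl, if_false, hcard] at this
      rw [hu, this, ih (by omega), prod_range_succ]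
      ring
  have h1 := h n le_rfl
  simp only [Fin.is_lt, if_true] at h1
  rw [h1, ← prod_range_reflect]
  congr 1
  refine prod_congr rfl fun j hj ↦ ?_
  have : n - 1 - (n - 1 - j) = j := by have := mem_range.1 hj; omega
  rw [this]

lemma laguerreIntegral_const (n m : ℕ) :
    laguerreIntegral (fun _ : Fin n ↦ m) =
      (∏ j ∈ range n, ∏ k ∈ range m, ((k : ℝ) + 1 + j / 2)) *
        laguerreIntegral (0 : Fin n → ℕ) := by
  induction m with
  | zero => simp; rfl
  | succ m ih =>
    rw [laguerreIntegral_const_succ, ih, ← mul_assoc, ← prod_mul_distrib]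
    simp only [prod_range_succ, mul_comm]

lemma laguerreIntegral_zero (n : ℕ) :
    laguerreIntegral (0 : Fin n → ℕ) = ∏ k ∈ range n, ∏ j ∈ range k, (1 + (j : ℝ) / 2) := by
  induction n with
  | zero => simp [laguerreIntegral, laguerreWeight, absVandermonde, orthantMeasure, measureReal_def]
  | succ n ih =>
    rw [laguerreIntegral_zero_succ, laguerreIntegral_const, ih, prod_range_succ, mul_comm]
    simp

end Recursion

section GaussianLimit

/-- The rescaled gamma density `(1 + t / √m) ^ m * exp (-√m * t)` on `t > -√m`, which tends to
`exp (-t ^ 2 / 2)`. -/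
noncomputable def rescaledGamma (m : ℕ) (t : ℝ) : ℝ :=
  if -√m < t then (1 + t / √m) ^ m * exp (-(√m * t)) else 0

lemma measurable_rescaledGamma (m : ℕ) : Measurable (rescaledGamma m) :=
  Measurable.ite measurableSet_Ioi (by fun_prop) measurable_const

lemma log_le_half_sub_inv {v : ℝ} (hv : 1 ≤ v) : log v ≤ (v - v⁻¹) / 2 := by
  rw [← sinh_log (by linarith)]
  exact self_le_sinh_iff.2 (log_nonneg hv)

lemma log_one_sub_le {x : ℝ} (hx : 0 ≤ x) (hx1 : x < 1) : log (1 - x) ≤ -x - x ^ 2 / 2 := by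
  have h := hasSum_pow_div_log_of_abs_lt_one (x := x) (by rwa [abs_of_nonneg hx])
  have := sum_le_hasSum (range 2) (fun i _ ↦ by positivity) h
  norm_num [sum_range_succ] at this
  linarith

lemma mul_log_one_add_sub_le {s u : ℝ} (hs : 1 ≤ s) (hu : -1 < u) :
    s ^ 2 * (log (1 + u) - u) ≤ 1 / 2 - |s * u| / 2 := by
  rcases le_or_gt 0 u with h | h
  · have h1 := log_le_half_sub_inv (v := 1 + u) (by linarith)
    have h2 : log (1 + u) - u ≤ -(u ^ 2 / (2 * (1 + u))) := by
      refine (sub_le_sub_right h1 u).trans (le_of_eq ?_)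
      field_simp
      ring
    have h3 : (s * u - 1) / 2 ≤ s ^ 2 * (u ^ 2 / (2 * (1 + u))) := by
      rw [← mul_div_assoc, div_le_div_iff₀ (by norm_num) (by linarith)]
      nlinarith [mul_nonneg h (sub_nonneg.2 hs), mul_nonneg (mul_nonneg h h) (sub_nonneg.2 hs),
        mul_nonneg (mul_nonneg (mul_nonneg h h) (sub_nonneg.2 hs)) (by linarith : 0 ≤ s)]
    rw [abs_of_nonneg (by positivity)]
    nlinarith [sq_nonneg s]
  · have h1 := log_one_sub_le (x := -u) (by linarith) (by linarith)
    rw [sub_neg_eq_add] at h1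
    have h2 : s ^ 2 * (log (1 + u) - u) ≤ s ^ 2 * (-(u ^ 2 / 2)) :=
      mul_le_mul_of_nonneg_left (by nlinarith) (sq_nonneg s)
    rw [abs_of_nonpos (by nlinarith)]
    nlinarith [sq_nonneg (s * u + 1)]

lemma one_add_pow_mul_exp {m : ℕ} (hm : m ≠ 0) {t : ℝ} (ht : -√m < t) :
    (1 + t / √m) ^ m * exp (-(√m * t)) = exp (√m ^ 2 * (log (1 + t / √m) - t / √m)) := by
  have hs : 0 < √(m : ℝ) := by positivity
  have h1 : 0 < 1 + t / √m := by
    rw [← neg_lt_iff_pos_add', lt_div_iff₀ hs]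
    linarith
  rw [mul_sub, sub_eq_add_neg, exp_add, sq_sqrt (Nat.cast_nonneg _), ← log_pow,
    exp_log (by positivity)]
  congr 3
  nth_rw 2 [← sq_sqrt (Nat.cast_nonneg (α := ℝ) m)]
  field_simp

lemma rescaledGamma_nonneg (m : ℕ) (t : ℝ) : 0 ≤ rescaledGamma m t := by
  rw [rescaledGamma]
  split_ifs with h
  · rcases eq_or_ne m 0 with rfl | hm
    · simp
    · rw [one_add_pow_mul_exp hm h]
      positivity
  · rfl

lemma rescaledGamma_le {m : ℕ} (hm : m ≠ 0) (t : ℝ) :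
    rescaledGamma m t ≤ exp (1 / 2) * exp (-(|t| / 2)) := by
  rw [rescaledGamma]
  split_ifs with h
  · have hs : 1 ≤ √(m : ℝ) := by
      rw [one_le_sqrt]
      exact_mod_cast Nat.one_le_iff_ne_zero.2 hm
    have hs0 : 0 < √(m : ℝ) := by linarith
    rw [one_add_pow_mul_exp hm h, ← exp_add, exp_le_exp]
    have := mul_log_one_add_sub_le (u := t / √m) hs (by
      rw [lt_div_iff₀ hs0]; linarith)
    rwa [mul_div_cancel₀ _ hs0.ne', sub_eq_add_neg] at this
  · positivity

lemma tendsto_rescaledGamma (t : ℝ) :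
    Filter.Tendsto (fun m : ℕ ↦ rescaledGamma m t) Filter.atTop (nhds (exp (-t ^ 2 / 2))) := by
  have hsqrt : Filter.Tendsto (fun m : ℕ ↦ √(m : ℝ)) Filter.atTop Filter.atTop :=
    tendsto_sqrt_atTop.comp tendsto_natCast_atTop_atTop
  have hexp : Filter.Tendsto (fun m : ℕ ↦ √(m : ℝ) ^ 2 * (log (1 + t / √m) - t / √m))
      Filter.atTop (nhds (-t ^ 2 / 2)) := by
    have h0 : Filter.Tendsto (fun m : ℕ ↦ 2 * |t| ^ 3 / √(m : ℝ)) Filter.atTop (nhds 0) :=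
      hsqrt.const_div_atTop _
    rw [tendsto_iff_norm_sub_tendsto_zero]
    refine squeeze_zero' (Filter.Eventually.of_forall fun _ ↦ norm_nonneg _) ?_ h0
    filter_upwards [hsqrt.eventually_ge_atTop (2 * |t| + 1)] with m hm
    have hs : 0 < √(m : ℝ) := by have := abs_nonneg t; linarith
    have hu : |-(t / √m)| ≤ 1 / 2 := by
      rw [abs_neg, abs_div, abs_of_pos hs, div_le_div_iff₀ hs (by norm_num)]
      linarith
    have h1 := abs_log_sub_add_sum_range_le (x := -(t / √m)) (by linarith) 2
    norm_num [sum_range_succ] at h1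
    rw [norm_eq_abs]
    have h2 : √(m : ℝ) ^ 2 * (log (1 + t / √m) - t / √m) - -t ^ 2 / 2 =
        √(m : ℝ) ^ 2 * (-(t / √m) + (t / √m) ^ 2 / 2 + log (1 + t / √m)) := by
      field_simp
      ring
    rw [abs_neg] at hu
    rw [h2, abs_mul, abs_of_nonneg (sq_nonneg _)]
    have h3 : |t / √m| ^ 3 / (1 - |t / √m|) ≤ 2 * |t / √m| ^ 3 := by
      rw [div_le_iff₀ (by linarith)]
      nlinarith [pow_nonneg (abs_nonneg (t / √m)) 3]
    calc _ ≤ √(m : ℝ) ^ 2 * (2 * |t / √m| ^ 3) := by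
          gcongr
          exact h1.trans h3
      _ = _ := by
          rw [abs_div, abs_of_pos hs]
          field_simp
  refine ((continuous_exp.tendsto _).comp hexp).congr' ?_
  filter_upwards [hsqrt.eventually_gt_atTop |t|, Filter.eventually_ne_atTop 0] with m hm hm0
  have ht : -√m < t := by have := neg_abs_le t; linarith
  rw [rescaledGamma, if_pos ht, one_add_pow_mul_exp hm0 ht]
  rfl

variable {n : ℕ}

lemma laguerreIntegral_eq_integral_volume (m : ℕ) :
    laguerreIntegral (fun _ : Fin n ↦ m) =
      ∫ x : Fin n → ℝ, (∏ i, if 0 < x i then x i ^ m * exp (-x i) else 0) * absVandermonde x := by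
  rw [laguerreIntegral, orthantMeasure, ← Measure.restrict_pi_pi, ← volume_pi,
    ← integral_indicator (MeasurableSet.univ_pi fun _ ↦ measurableSet_Ioi)]
  congr 1 with x
  by_cases hx : ∀ i, 0 < x i
  · rw [Set.indicator_of_mem (by simpa [Set.mem_pi] using hx)]
    simp [laguerreWeight, hx]
  · rw [Set.indicator_of_notMem (by simpa [Set.mem_pi] using hx)]
    push Not at hx
    obtain ⟨i, hi⟩ := hx
    rw [prod_eq_zero (mem_univ i) (if_neg (not_lt.2 hi)), zero_mul]

lemma integral_comp_smul_pi (f : (Fin n → ℝ) → ℝ) {r : ℝ} (hr : 0 < r) :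
    ∫ x, f x = r ^ n * ∫ x, f (r • x) := by
  rw [Measure.integral_comp_smul_of_nonneg volume f r (hR := hr.le)]
  simp [hr.ne']

lemma laguerreIntegral_eq_rescaled {m : ℕ} (hm : m ≠ 0) :
    laguerreIntegral (fun _ : Fin n ↦ m) =
      (∏ j ∈ range n, (√m * √m ^ j * (m ^ m * exp (-m)))) *
        ∫ x : Fin n → ℝ, (∏ i, rescaledGamma m (x i)) * absVandermonde x := by
  have hs : 0 < √(m : ℝ) := by positivity
  rw [laguerreIntegral_eq_integral_volume,
    ← integral_add_right_eq_self _ (fun _ : Fin n ↦ (m : ℝ)), integral_comp_smul_pi _ hs,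
    prod_mul_distrib, prod_mul_distrib, prod_pow_eq_pow_sum, prod_const, prod_const, card_range]
  simp only [← integral_const_mul]
  congr 1 with x
  have h1 (t : ℝ) : (if 0 < √m * t + m then (√m * t + m) ^ m * exp (-(√m * t + m)) else 0) =
      m ^ m * exp (-m) * rescaledGamma m t := by
    have hiff : 0 < √m * t + m ↔ -√m < t := by
      nth_rw 2 [← sq_sqrt (Nat.cast_nonneg (α := ℝ) m)]
      rw [sq, ← mul_add, mul_pos_iff_of_pos_left hs, neg_lt_iff_pos_add]
    rw [rescaledGamma]
    simp only [hiff]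
    split_ifs
    · have h2 : √m * t + m = m * (1 + t / √m) := by
        have := mul_self_sqrt (Nat.cast_nonneg (α := ℝ) m)
        field_simp
        nlinarith
      rw [neg_add, exp_add, h2, mul_pow]
      ring
    · simp
  have h2 : absVandermonde (√(m : ℝ) • x + fun _ ↦ (m : ℝ)) =
      √m ^ (∑ i ∈ range n, i) * absVandermonde x := by
    have := absVandermonde_add_const (m : ℝ) (√(m : ℝ) • x)
    rw [absVandermonde_smul, abs_of_pos hs] at this
    exact this
  rw [h2]
  simp only [Pi.add_apply, Pi.smul_apply, smul_eq_mul, h1, prod_mul_distrib, prod_const, card_univ,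
    Fintype.card_fin]
  ring

lemma tendsto_integral_rescaledGamma (n : ℕ) :
    Filter.Tendsto
      (fun m : ℕ ↦ ∫ x : Fin n → ℝ, (∏ i, rescaledGamma m (x i)) * absVandermonde x) Filter.atTop
      (nhds (∫ x : Fin n → ℝ, (∏ i, exp (-x i ^ 2 / 2)) * absVandermonde x)) := by
  refine tendsto_integral_filter_of_dominated_convergence
    (fun x ↦ ∏ i, exp (1 / 2) * ((1 + |x i|) ^ (2 * n) * exp (-(|x i| / 2)))) ?_ ?_ ?_ ?_
  · exact Filter.Eventually.of_forall fun m ↦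
      ((Finset.measurable_prod _ fun i _ ↦ (measurable_rescaledGamma m).comp
        (measurable_pi_apply i)).mul
          continuous_absVandermonde.measurable).aestronglyMeasurable
  · filter_upwards [Filter.eventually_ne_atTop 0] with m hm
    refine ae_of_all _ fun x ↦ ?_
    have h0 := prod_nonneg fun i (_ : i ∈ univ) ↦ rescaledGamma_nonneg m (x i)
    rw [norm_of_nonneg (mul_nonneg h0 (absVandermonde_nonneg x))]
    calc _ ≤ (∏ i, exp (1 / 2) * exp (-(|x i| / 2))) * ∏ i, (1 + |x i|) ^ (2 * n) :=
          mul_le_mul (prod_le_prod (fun _ _ ↦ rescaledGamma_nonneg _ _)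
            fun i _ ↦ rescaledGamma_le hm (x i)) (absVandermonde_le x)
            (absVandermonde_nonneg x) (by positivity)
      _ = _ := by
          rw [← prod_mul_distrib]
          exact prod_congr rfl fun i _ ↦ by ring
  · exact Integrable.fintype_prod
      (f := fun _ (t : ℝ) ↦ exp (1 / 2) * ((1 + |t|) ^ (2 * n) * exp (-(|t| / 2))))
      fun _ ↦ (integrable_one_add_abs_pow_mul_exp _).const_mul _
  · exact ae_of_all _ fun x ↦
      (tendsto_finsetProd _ fun i _ ↦ tendsto_rescaledGamma (x i)).mul_const _

lemma tendsto_prod_div_gamma (j : ℕ) :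
    Filter.Tendsto (fun m : ℕ ↦ (∏ k ∈ range m, ((k : ℝ) + 1 + j / 2)) /
      (√m * √m ^ j * (m ^ m * exp (-m)))) Filter.atTop (nhds (√(2 * π) / Gamma (1 + j / 2))) := by
  have h1 : Filter.Tendsto (fun m : ℕ ↦ √2 * Stirling.stirlingSeq m) Filter.atTop
      (nhds (√(2 * π))) := by
    rw [sqrt_mul (by norm_num)]
    exact Stirling.tendsto_stirlingSeq_sqrt_pi.const_mul _
  have h2 := GammaSeq_tendsto_Gamma (1 + (j : ℝ) / 2)
  have h3 : Filter.Tendsto (fun m : ℕ ↦ (m : ℝ) / (m + (1 + j / 2))) Filter.atTop (nhds 1) :=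
    tendsto_natCast_div_add_atTop _
  have h4 := h1.mul (h3.div h2 (Gamma_pos_of_pos (by positivity)).ne')
  rw [← mul_div_assoc, mul_one] at h4
  refine h4.congr' ?_
  filter_upwards [Filter.eventually_ne_atTop 0] with m hm
  have hm0 : (0 : ℝ) < m := by positivity
  have hpow : (m : ℝ) ^ (1 + (j : ℝ) / 2) = m * √m ^ j := by
    rw [rpow_add hm0, rpow_one, sqrt_eq_rpow, ← rpow_mul_natCast hm0.le]
    ring_nf
  have hprod : ∏ k ∈ range (m + 1), (1 + (j : ℝ) / 2 + k) =
      (∏ k ∈ range m, ((k : ℝ) + 1 + j / 2)) * (m + (1 + j / 2)) := by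
    rw [prod_range_succ, add_comm (m : ℝ)]
    congr 1
    exact prod_congr rfl fun k _ ↦ by ring
  have hP : 0 < ∏ k ∈ range m, ((k : ℝ) + 1 + j / 2) := prod_pos fun _ _ ↦ by positivity
  simp only [Pi.div_apply]
  rw [Stirling.stirlingSeq, GammaSeq, hpow, hprod, div_pow, sqrt_mul (by norm_num), exp_neg,
    ← exp_nat_mul, mul_one]
  have h2 : √(2 : ℝ) ≠ 0 := by positivity
  field_simp

end GaussianLimit

section Mehta

variable {n : ℕ}

lemma prod_div_Gamma_eq (k : ℕ) :
    (∏ j ∈ range k, (1 + (j : ℝ) / 2)) * (√(2 * π) / Gamma (1 + k / 2)) =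
      √(2 * π) * ((k + 1 : ℕ) * (Gamma (((k + 1 : ℕ) : ℝ) / 2) / Gamma (1 / 2))) := by
  have hfac : ∏ j ∈ range k, (1 + (j : ℝ) / 2) = (k + 1).factorial / 2 ^ k := by
    induction k with
    | zero => simp
    | succ k ih =>
      rw [prod_range_succ, ih, Nat.factorial_succ (k + 1)]
      push_cast
      field_simp
      ring
  have hdup := Gamma_mul_Gamma_add_half (((k + 1 : ℕ) : ℝ) / 2)
  have h1 : ((k + 1 : ℕ) : ℝ) / 2 + 1 / 2 = 1 + k / 2 := by push_cast; ring
  have h2 : 2 * (((k + 1 : ℕ) : ℝ) / 2) = k + 1 := by push_cast; ring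
  rw [h1, h2, Gamma_nat_eq_factorial, show (1 : ℝ) - (k + 1) = -(k : ℝ) by ring,
    rpow_neg (by norm_num), rpow_natCast] at hdup
  have hG : Gamma (1 + (k : ℝ) / 2) ≠ 0 := (Gamma_pos_of_pos (by positivity)).ne'
  rw [hfac, Gamma_one_half_eq, Nat.factorial_succ, eq_div_of_mul_eq hG hdup]
  push_cast
  have : √π ≠ 0 := by positivity
  field_simp

/-- The Mehta integral with exponent one. -/
theorem integral_gaussian_mul_absVandermonde (n : ℕ) :
    ∫ x : Fin n → ℝ, (∏ i, exp (-x i ^ 2 / 2)) * absVandermonde x =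
      √(2 * π) ^ n * (n.factorial * ∏ k ∈ Icc 1 n, Gamma ((k : ℝ) / 2) / Gamma (1 / 2)) := by
  have h1 : Filter.Tendsto (fun m : ℕ ↦ (∏ j ∈ range n, ((∏ k ∈ range m, ((k : ℝ) + 1 + j / 2)) /
      (√m * √m ^ j * (m ^ m * exp (-m))))) * laguerreIntegral (0 : Fin n → ℕ)) Filter.atTop
      (nhds ((∏ j ∈ range n, (√(2 * π) / Gamma (1 + j / 2))) *
        laguerreIntegral (0 : Fin n → ℕ))) :=
    (tendsto_finsetProd _ fun j _ ↦ tendsto_prod_div_gamma j).mul_const _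
  have h2 := tendsto_nhds_unique (tendsto_integral_rescaledGamma n) (h1.congr' ?_)
  · rw [h2, laguerreIntegral_zero, mul_comm, ← prod_mul_distrib,
      prod_congr rfl fun k _ ↦ prod_div_Gamma_eq k, prod_mul_distrib, prod_mul_distrib, prod_const,
      card_range, ← prod_range_add_one_eq_factorial, ← Ico_add_one_right_eq_Icc,
      prod_Ico_eq_prod_range, Nat.cast_prod]
    simp only [Nat.add_sub_cancel, add_comm 1]
  · filter_upwards [Filter.eventually_ne_atTop 0] with m hm
    have h3 := laguerreIntegral_eq_rescaled (n := n) hm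
    rw [laguerreIntegral_const] at h3
    rw [prod_div_distrib, div_mul_eq_mul_div, h3, mul_div_cancel_left₀]
    exact prod_ne_zero_iff.2 fun _ _ ↦ by positivity

end Mehta

section ChangeOfVariables

/-- The shear `x ↦ x + b * (∑ i, x i) * (1, …, 1)`, as a matrix. -/
noncomputable def shearMatrix (n : ℕ) (b : ℝ) : Matrix (Fin n) (Fin n) ℝ :=
  1 + Matrix.replicateCol Unit (fun _ ↦ b) * Matrix.replicateRow Unit (fun _ ↦ (1 : ℝ))

lemma det_shearMatrix (n : ℕ) (b : ℝ) : (shearMatrix n b).det = 1 + n * b := by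
  rw [shearMatrix, Matrix.det_one_add_replicateCol_mul_replicateRow]
  simp [dotProduct]

lemma shearMatrix_mulVec (n : ℕ) (b : ℝ) (x : Fin n → ℝ) (i : Fin n) :
    (shearMatrix n b).mulVec x i = x i + b * ∑ j, x j := by
  rw [shearMatrix, Matrix.add_mulVec, Matrix.one_mulVec, Pi.add_apply]
  simp [Matrix.mulVec, dotProduct, Matrix.mul_apply, mul_sum]

lemma integral_comp_shear {n : ℕ} {b : ℝ} (hb : 0 < 1 + n * b) (f : (Fin n → ℝ) → ℝ) :
    ∫ x, f x = (1 + n * b) * ∫ x : Fin n → ℝ, f fun i ↦ x i + b * ∑ j, x j := by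
  have hdet : (Matrix.toLin' (shearMatrix n b)).det ≠ 0 := by
    rw [LinearMap.det_toLin', det_shearMatrix]
    exact hb.ne'
  have hmap := map_linearMap_volume_pi_eq_smul_volume_pi hdet
  have hemb : MeasurableEmbedding (Matrix.toLin' (shearMatrix n b)) :=
    (LinearEquiv.ofIsUnitDet (f := Matrix.toLin' (shearMatrix n b)) (v := Pi.basisFun ℝ _)
      (v' := Pi.basisFun ℝ _) (by
        rw [LinearMap.det_toMatrix]
        exact hdet.isUnit)).toContinuousLinearEquiv.toHomeomorph.measurableEmbedding
  have h := hemb.integral_map (μ := volume) f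
  rw [hmap, integral_smul_measure, LinearMap.det_toLin', det_shearMatrix,
    abs_of_pos (inv_pos.2 hb), ENNReal.toReal_ofReal (inv_pos.2 hb).le, smul_eq_mul,
    inv_mul_eq_iff_eq_mul₀ hb.ne'] at h
  rw [h]
  congr 2 with x
  congr 1 with i
  rw [Matrix.toLin'_apply, shearMatrix_mulVec]

lemma integral_gaussian_mul_absVandermonde_tail (n : ℕ) {s : ℝ} (hs : 0 < s) :
    ∫ x : Fin (n + 1) → ℝ, exp (-(1 / (2 * s)) * ∑ i, x i ^ 2) *
        absVandermonde (fun j : Fin n ↦ x j.succ) =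
      √s * n.factorial * √(2 * π) ^ (n + 1) *
        (∏ k ∈ Icc 1 n, Gamma ((k : ℝ) / 2) / Gamma (1 / 2)) * √s ^ (∑ i ∈ range (n + 1), i) := by
  have hs' : 0 < √s := sqrt_pos.2 hs
  have hgauss : ∫ t : ℝ, exp (-t ^ 2 / 2) = √(2 * π) := by
    convert integral_gaussian (1 / 2) using 3
    · ring_nf
    · ring_nf
  have hsplit : ∫ x : Fin (n + 1) → ℝ, exp (-(1 / (2 * s)) * ∑ i, (√s * x i) ^ 2) *
      absVandermonde (fun j : Fin n ↦ x j.succ) =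
      (∫ t : ℝ, exp (-t ^ 2 / 2)) *
        ∫ y : Fin n → ℝ, (∏ i, exp (-y i ^ 2 / 2)) * absVandermonde y := by
    rw [← integral_prod_mul, ← Measure.volume_eq_prod,
      ← ((volume_preserving_piFinSuccAbove (fun _ ↦ ℝ) 0).integral_comp'
      (fun p : ℝ × (Fin n → ℝ) ↦ exp (-p.1 ^ 2 / 2) *
        ((∏ i, exp (-p.2 i ^ 2 / 2)) * absVandermonde p.2)))]
    congr 1 with x
    rw [← mul_assoc, ← exp_sum, ← exp_add]
    congr 2
    rw [Fin.sum_univ_succ, mul_add, mul_sum]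
    simp only [mul_pow, sq_sqrt hs.le]
    congr 1
    · simp
      field_simp
    · refine sum_congr rfl fun i _ ↦ ?_
      simp [Fin.tail]
      field_simp
  rw [integral_comp_smul_pi _ hs']
  have h (x : Fin (n + 1) → ℝ) : absVandermonde (fun j : Fin n ↦ (√s • x) j.succ) =
      √s ^ (∑ i ∈ range n, i) * absVandermonde (fun j : Fin n ↦ x j.succ) := by
    have := absVandermonde_smul √s (fun j : Fin n ↦ x j.succ)
    rwa [abs_of_pos hs'] at this
  simp only [h, mul_left_comm (exp _) (√s ^ (∑ i ∈ range n, i)), integral_const_mul]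
  simp only [Pi.smul_apply, smul_eq_mul]
  rw [hsplit, hgauss, integral_gaussian_mul_absVandermonde, sum_range_succ]
  ring

lemma integral_shifted_gaussian (n : ℕ) {s : ℝ} (hs : 0 < s) {α : ℝ}
    (hα : 0 < 1 + 2 * α * s * (n + 1 : ℕ)) :
    ∫ x : Fin (n + 1) → ℝ, exp (-α * (∑ i, x i) ^ 2 - (1 / (2 * s)) * ∑ i, x i ^ 2) *
        absVandermonde (fun j : Fin n ↦ x j.succ) =
      (√(1 + 2 * α * s * (n + 1 : ℕ)))⁻¹ *
        ∫ x : Fin (n + 1) → ℝ, exp (-(1 / (2 * s)) * ∑ i, x i ^ 2) *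
          absVandermonde (fun j : Fin n ↦ x j.succ) := by
  set u := (√(1 + 2 * α * s * (n + 1 : ℕ)))⁻¹ with hu
  have hu0 : 0 < u := by positivity
  have hu2 : u ^ 2 * (1 + 2 * α * s * (n + 1 : ℕ)) = 1 := by
    rw [hu, inv_pow, sq_sqrt hα.le, inv_mul_cancel₀ hα.ne']
  have hN : ((n + 1 : ℕ) : ℝ) ≠ 0 := by positivity
  have hb : 1 + (n + 1 : ℕ) * ((u - 1) / (n + 1 : ℕ)) = u := by field_simp; ring
  rw [integral_comp_shear (b := (u - 1) / (n + 1 : ℕ)) (by rwa [hb]), hb]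
  congr 2 with x
  rw [absVandermonde_add_const _ fun j : Fin n ↦ x j.succ]
  congr 2
  have h1 : ∑ i, (x i + (u - 1) / (n + 1 : ℕ) * ∑ j, x j) = u * ∑ j, x j := by
    rw [sum_add_distrib, sum_const, card_univ, Fintype.card_fin, nsmul_eq_mul, ← mul_assoc,
      mul_div_cancel₀ _ hN]
    ring
  have h2 : ∑ i, (x i + (u - 1) / (n + 1 : ℕ) * ∑ j, x j) ^ 2 =
      ∑ i, x i ^ 2 + (u ^ 2 - 1) / (n + 1 : ℕ) * (∑ j, x j) ^ 2 := by
    simp only [add_sq, sum_add_distrib, sum_const, card_univ, Fintype.card_fin, nsmul_eq_mul,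
      ← sum_mul, ← mul_sum]
    field_simp
    ring
  rw [h1, h2]
  generalize ((n + 1 : ℕ) : ℝ) = N at *
  field_simp
  linear_combination (-(∑ j, x j) ^ 2) * hu2

end ChangeOfVariables

/-- Variant of the Selberg-type Gaussian integral where the Vandermonde factor
omits the first variable (product over `2 ≤ i < j ≤ N` only). -/
theorem stmt_8 (N : ℕ) (hN : 2 ≤ N) (c : ℝ) (hc : -1 < c) (α : ℝ)
    (hα : 0 < 1 + 2 * α * (1 + c) * N) :
    (∫ lam : Fin N → ℝ,
        Real.exp (-α * (∑ i, lam i) ^ 2 - (1 / (2 * (1 + c))) * ∑ i, lam i ^ 2)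
          * ∏ i ∈ Finset.univ.filter fun i : Fin N => (⟨0, by omega⟩ : Fin N) < i,
              ∏ j ∈ Finset.univ.filter fun j => i < j, |lam j - lam i|)
      = Real.sqrt (1 + c) * ((N - 1).factorial : ℝ) * (2 * π) ^ ((N : ℝ) / 2)
          * (∏ k ∈ Finset.Icc 1 (N - 1), Real.Gamma ((k : ℝ) / 2) / Real.Gamma (1 / 2))
          * (1 + c) ^ ((N * (N - 1) : ℝ) / 4)
          / Real.sqrt (1 + 2 * α * (1 + c) * N) := by
  obtain ⟨n, rfl⟩ := Nat.exists_eq_add_of_le' (one_le_two.trans hN)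
  have hs : 0 < 1 + c := by linarith
  have hprod (x : Fin (n + 1) → ℝ) :
      (∏ i ∈ univ.filter fun i : Fin (n + 1) ↦ (⟨0, by omega⟩ : Fin (n + 1)) < i,
        ∏ j ∈ univ.filter fun j ↦ i < j, |x j - x i|) =
      absVandermonde (fun j : Fin n ↦ x j.succ) := by
    have h0 : (⟨0, by omega⟩ : Fin (n + 1)) = 0 := rfl
    simp only [h0, filter_lt_eq_Ioi, Fin.prod_Ioi_zero, Fin.prod_Ioi_succ]
    rfl
  have hsum : ((∑ i ∈ range (n + 1), i : ℕ) : ℝ) = (n + 1) * n / 2 := by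
    have := sum_range_id_mul_two (n + 1)
    rw [Nat.add_sub_cancel] at this
    rw [eq_div_iff two_ne_zero]
    exact_mod_cast this
  have hscale : √(1 + c) ^ (∑ i ∈ range (n + 1), i) =
      (1 + c) ^ ((((n + 1 : ℕ) : ℝ) * (((n + 1 : ℕ) : ℝ) - 1)) / 4) := by
    rw [sqrt_eq_rpow, ← rpow_mul_natCast hs.le, hsum]
    congr 1
    push_cast
    ring
  have hpi : √(2 * π) ^ (n + 1) = (2 * π) ^ (((n + 1 : ℕ) : ℝ) / 2) := by
    rw [sqrt_eq_rpow, ← rpow_mul_natCast two_pi_pos.le]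
    congr 1
    ring
  simp only [hprod]
  rw [integral_shifted_gaussian n hs hα, integral_gaussian_mul_absVandermonde_tail n hs, hscale,
    hpi, Nat.add_sub_cancel, inv_mul_eq_div]
end

section
/- Let N ≥ 2 and c > −1, and let dO denote the normalized Haar probability measure on the orthogonal group O_N(ℝ). Then as s → ∞, e^{−cs} ∫_{O_N(ℝ)} (O_{1,1})² e^{s(1+c)(O_{1,1})²} dO is asymptotically equivalent to (Γ(N/2)/Γ(1/2)) · e^{s} / ((1+c)^{(N−1)/2} s^{(N−1)/2}), i.e. the ratio of the two quantities tends to 1. -/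
open MeasureTheory Matrix Filter

instance matrixMeasurableSpace {m n α : Type*} [MeasurableSpace α] :
    MeasurableSpace (Matrix m n α) :=
  (inferInstance : MeasurableSpace (m → n → α))

open scoped Nat Topology

theorem integral_mul_exp_hasSum {Ω : Type*} [MeasurableSpace Ω] (μ : Measure Ω)
    [IsProbabilityMeasure μ] {Y : Ω → ℝ} (hY : Measurable Y)
    (hY' : ∀ᵐ ω ∂μ, 0 ≤ Y ω ∧ Y ω ≤ 1) (t : ℝ) :
    HasSum (fun k : ℕ => t ^ k / k ! * ∫ ω, Y ω ^ (k + 1) ∂μ)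
      (∫ ω, Y ω * Real.exp (t * Y ω) ∂μ) := by
  simp_rw [← integral_const_mul]
  refine hasSum_integral_of_dominated_convergence (fun k _ => |t| ^ k / k !)
    (fun k => by fun_prop) (fun k => ?_) ?_ (integrable_const _) ?_
  · filter_upwards [hY'] with ω hω
    rw [Real.norm_eq_abs, abs_mul, abs_div, abs_pow, Nat.abs_cast, abs_pow, abs_of_nonneg hω.1]
    exact mul_le_of_le_one_right (by positivity) (pow_le_one₀ hω.1 hω.2)
  · exact .of_forall fun _ => Real.summable_pow_div_factorial _
  · refine .of_forall fun ω => ?_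
    have h := (Real.exp_eq_exp_ℝ ▸ NormedSpace.expSeries_div_hasSum_exp (t * Y ω)).mul_left (Y ω)
    refine h.congr_fun fun k => ?_
    rw [mul_pow]
    ring

theorem integral_mul_exp_eq_of_moments {Ω Ω' : Type*} [MeasurableSpace Ω] [MeasurableSpace Ω']
    (μ : Measure Ω) [IsProbabilityMeasure μ] (ν : Measure Ω') [IsProbabilityMeasure ν]
    {Y : Ω → ℝ} (hY : Measurable Y) (hY' : ∀ᵐ ω ∂μ, 0 ≤ Y ω ∧ Y ω ≤ 1)
    {Z : Ω' → ℝ} (hZ : Measurable Z) (hZ' : ∀ᵐ ω ∂ν, 0 ≤ Z ω ∧ Z ω ≤ 1)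
    (h : ∀ k : ℕ, ∫ ω, Y ω ^ k ∂μ = ∫ ω, Z ω ^ k ∂ν) (t : ℝ) :
    ∫ ω, Y ω * Real.exp (t * Y ω) ∂μ = ∫ ω, Z ω * Real.exp (t * Z ω) ∂ν := by
  have h1 := integral_mul_exp_hasSum μ hY hY' t
  simp_rw [h] at h1
  exact h1.unique (integral_mul_exp_hasSum ν hZ hZ' t)

theorem measurable_betaPDF (a b : ℝ) : Measurable (ProbabilityTheory.betaPDF a b) :=
  (ProbabilityTheory.measurable_betaPDFReal a b).ennreal_ofReal

theorem ae_betaMeasure_mem_Icc (a b : ℝ) :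
    ∀ᵐ x ∂ProbabilityTheory.betaMeasure a b, 0 ≤ x ∧ x ≤ 1 := by
  rw [ProbabilityTheory.betaMeasure, ae_withDensity_iff (measurable_betaPDF a b)]
  refine .of_forall fun x hx => ⟨?_, ?_⟩
  · by_contra! h
    exact hx (ProbabilityTheory.betaPDF_eq_zero_of_nonpos h.le)
  · by_contra! h
    exact hx (ProbabilityTheory.betaPDF_eq_zero_of_one_le h.le)

theorem integral_betaMeasure {a b : ℝ} (ha : 0 < a) (hb : 0 < b) (g : ℝ → ℝ) :
    ∫ x, g x ∂ProbabilityTheory.betaMeasure a b =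
      (ProbabilityTheory.beta a b)⁻¹ *
        ∫ x in Set.Ioo 0 1, g x * (x ^ (a - 1) * (1 - x) ^ (b - 1)) := by
  rw [ProbabilityTheory.betaMeasure, integral_withDensity_eq_integral_toReal_smul
    (measurable_betaPDF a b) (.of_forall fun _ => ENNReal.ofReal_lt_top), ← integral_const_mul,
    ← integral_indicator measurableSet_Ioo]
  refine integral_congr_ae (.of_forall fun x => ?_)
  by_cases hx : x ∈ Set.Ioo (0 : ℝ) 1
  · have h := (ProbabilityTheory.betaPDFReal_pos hx.1 hx.2 ha hb).le
    simp only [Set.indicator_of_mem hx, ProbabilityTheory.betaPDF, ENNReal.toReal_ofReal h]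
    simp only [ProbabilityTheory.betaPDFReal, if_pos (show 0 < x ∧ x < 1 from hx), smul_eq_mul]
    ring
  · simp only [Set.indicator_of_notMem hx, ProbabilityTheory.betaPDF,
      ProbabilityTheory.betaPDFReal, if_neg (show ¬ (0 < x ∧ x < 1) from hx)]
    simp

theorem setIntegral_rpow_mul_rpow_eq_beta {a b : ℝ} (ha : 0 < a) (hb : 0 < b) :
    ∫ x in Set.Ioo (0 : ℝ) 1, x ^ (a - 1) * (1 - x) ^ (b - 1) = ProbabilityTheory.beta a b := by
  have := ProbabilityTheory.isProbabilityMeasureBeta ha hb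
  have h := integral_betaMeasure ha hb fun _ => 1
  simp only [integral_const, probReal_univ, one_mul, smul_eq_mul] at h
  have := (ProbabilityTheory.beta_pos ha hb).ne'
  field_simp at h
  exact h.symm

theorem moment_betaMeasure {a b : ℝ} (ha : 0 < a) (hb : 0 < b) (k : ℕ) :
    ∫ x, x ^ k ∂ProbabilityTheory.betaMeasure a b =
      ProbabilityTheory.beta (a + k) b / ProbabilityTheory.beta a b := by
  rw [integral_betaMeasure ha hb, ← setIntegral_rpow_mul_rpow_eq_beta (a := a + k) (by positivity) hb,
    div_eq_inv_mul]
  congr 1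
  refine setIntegral_congr_fun measurableSet_Ioo fun x hx => ?_
  rw [add_sub_right_comm, Real.rpow_add_natCast hx.1.ne']
  ring

theorem moment_betaMeasure_succ {a b : ℝ} (ha : 0 < a) (hb : 0 < b) (k : ℕ) :
    (a + b + k) * ∫ x, x ^ (k + 1) ∂ProbabilityTheory.betaMeasure a b =
      (a + k) * ∫ x, x ^ k ∂ProbabilityTheory.betaMeasure a b := by
  rw [moment_betaMeasure ha hb, moment_betaMeasure ha hb]
  simp only [ProbabilityTheory.beta, Nat.cast_add_one]
  rw [show a + ((k : ℝ) + 1) = a + k + 1 by ring, show a + k + 1 + b = a + k + b + 1 by ring,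
    Real.Gamma_add_one (s := a + k) (by positivity),
    Real.Gamma_add_one (s := a + k + b) (by positivity)]
  have := (Real.Gamma_pos_of_pos ha).ne'
  have := (Real.Gamma_pos_of_pos hb).ne'
  have := (Real.Gamma_pos_of_pos (add_pos ha hb)).ne'
  have := (Real.Gamma_pos_of_pos (show 0 < a + k + b by positivity)).ne'
  have : a + k + b ≠ 0 := by positivity
  field_simp
  ring

/-- Watson-type asymptotics at the endpoint `1` of the Beta density. -/
theorem tendsto_setIntegral_rpow_mul_exp {p b : ℝ} (hp : 0 ≤ p) (hb : 0 < b) :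
    Tendsto (fun t : ℝ => t ^ b * Real.exp (-t) *
      ∫ x in Set.Ioo (0 : ℝ) 1, x ^ p * (1 - x) ^ (b - 1) * Real.exp (t * x)) atTop
      (𝓝 (Real.Gamma b)) := by
  have key : ∀ t : ℝ, 0 < t → t ^ b * Real.exp (-t) *
      ∫ x in Set.Ioo (0 : ℝ) 1, x ^ p * (1 - x) ^ (b - 1) * Real.exp (t * x) =
      ∫ w in Set.Ioi (0 : ℝ), (Set.Iio t).indicator
        (fun w => (1 - w / t) ^ p * (Real.exp (-w) * w ^ (b - 1))) w := by
    intro t ht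
    rw [setIntegral_indicator measurableSet_Iio, Set.Ioi_inter_Iio, ← integral_Ioc_eq_integral_Ioo,
      ← integral_Ioc_eq_integral_Ioo, ← intervalIntegral.integral_of_le zero_le_one,
      ← intervalIntegral.integral_of_le ht.le]
    have h := intervalIntegral.integral_comp_sub_div
      (a := 0) (b := t) (fun x => x ^ p * (1 - x) ^ (b - 1) * Real.exp (t * x)) ht.ne' 1
    rw [zero_div, sub_zero, div_self ht.ne', sub_self, smul_eq_mul] at h
    have h2 : ∀ r : ℝ, t ^ b * Real.exp (-t) * r = t ^ (b - 1) * Real.exp (-t) * (t * r) := by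
      intro r
      rw [Real.rpow_sub_one ht.ne']
      field_simp
    rw [h2, ← h, ← intervalIntegral.integral_const_mul]
    refine intervalIntegral.integral_congr fun w hw => ?_
    rw [Set.uIcc_of_le ht.le] at hw
    have h3 : w ^ (b - 1) = t ^ (b - 1) * (w / t) ^ (b - 1) := by
      rw [← Real.mul_rpow ht.le (div_nonneg hw.1 ht.le), mul_div_cancel₀ _ ht.ne']
    have h4 : Real.exp (-w) = Real.exp (-t) * Real.exp (t * (1 - w / t)) := by
      rw [← Real.exp_add]
      congr 1
      field_simp
      ring
    simp only [h3, h4, sub_sub_cancel]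
    ring
  rw [Real.Gamma_eq_integral hb]
  refine Tendsto.congr' ((eventually_gt_atTop 0).mono fun t ht => (key t ht).symm) ?_
  refine tendsto_integral_filter_of_dominated_convergence
    (fun w => Real.exp (-w) * w ^ (b - 1)) ?_ ?_ (Real.GammaIntegral_convergent hb) ?_
  · exact .of_forall fun t => (Measurable.indicator (by fun_prop) measurableSet_Iio).aestronglyMeasurable
  · filter_upwards [eventually_gt_atTop 0] with t ht
    refine ae_restrict_of_forall_mem measurableSet_Ioi fun w (hw : 0 < w) => ?_
    have h0 : 0 ≤ Real.exp (-w) * w ^ (b - 1) := by positivity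
    by_cases h : w ∈ Set.Iio t
    · have h1 : w / t ≤ 1 := (div_le_one ht).2 (Set.mem_Iio.1 h).le
      have h2 : 0 ≤ w / t := by positivity
      rw [Set.indicator_of_mem h, Real.norm_eq_abs, abs_mul, abs_of_nonneg h0,
        abs_of_nonneg (Real.rpow_nonneg (by linarith) _)]
      exact mul_le_of_le_one_left h0 (Real.rpow_le_one (by linarith) (by linarith) hp)
    · simpa [Set.indicator_of_notMem h] using h0
  · refine ae_restrict_of_forall_mem measurableSet_Ioi fun w (hw : 0 < w) => ?_
    have h1 : Tendsto (fun t : ℝ => (1 - w / t) ^ p * (Real.exp (-w) * w ^ (b - 1))) atTop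
        (𝓝 ((1 - 0) ^ p * (Real.exp (-w) * w ^ (b - 1)))) :=
      ((tendsto_const_nhds.sub (tendsto_const_nhds.div_atTop tendsto_id)).rpow_const
        (Or.inr hp)).mul_const _
    rw [sub_zero, Real.one_rpow, one_mul] at h1
    refine h1.congr' ((eventually_gt_atTop w).mono fun t ht => ?_)
    exact (Set.indicator_of_mem (Set.mem_Iio.2 ht)
      fun w => (1 - w / t) ^ p * (Real.exp (-w) * w ^ (b - 1))).symm

theorem one_sub_two_smul_vecMulVec_mem_orthogonalGroup {n : Type*} [Fintype n] [DecidableEq n]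
    {u : n → ℝ} (hu : u ⬝ᵥ u = 1) :
    1 - (2 : ℝ) • vecMulVec u u ∈ Matrix.orthogonalGroup n ℝ := by
  rw [Matrix.mem_orthogonalGroup_iff, transpose_sub, transpose_one, transpose_smul,
    transpose_vecMulVec]
  simp only [mul_sub, sub_mul, mul_one, one_mul, smul_mul_assoc, mul_smul_comm,
    vecMulVec_mul_vecMulVec, hu, one_smul]
  module

section FirstColumn

theorem measurable_matrix_apply {n : Type*} (i j : n) : Measurable fun O : Matrix n n ℝ => O i j :=
  (measurable_pi_apply j).comp (measurable_pi_apply i)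

theorem measurable_matrix_mul_left {n : Type*} [Fintype n] (Q : Matrix n n ℝ) :
    Measurable fun O : Matrix n n ℝ => Q * O := by
  refine measurable_pi_lambda _ fun i => measurable_pi_lambda _ fun j => ?_
  simp only [Matrix.mul_apply]
  exact Finset.measurable_sum _ fun k _ => (measurable_matrix_apply k j).const_mul _

variable {n : Type*} [Fintype n] [DecidableEq n] {μ : Measure (Matrix n n ℝ)}

theorem ae_sum_sq_col_eq_one [IsProbabilityMeasure μ]
    (hμ : μ {O | O ∈ Matrix.orthogonalGroup n ℝ} = 1) (j : n) :
    ∀ᵐ O ∂μ, ∑ i, O i j ^ 2 = 1 := by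
  have hs : MeasurableSet {O : Matrix n n ℝ | ∑ i, O i j ^ 2 = 1} :=
    measurableSet_eq_fun
      (Finset.measurable_sum _ fun i _ => (measurable_matrix_apply i j).pow_const 2)
      measurable_const
  refine (mem_ae_iff_prob_eq_one hs).2 (le_antisymm prob_le_one ?_)
  rw [← hμ]
  refine measure_mono fun O hO => ?_
  have h := congr_fun₂ ((Matrix.mem_orthogonalGroup_iff' n ℝ).1 hO) j j
  simpa [Matrix.mul_apply, ← pow_two] using h

theorem ae_abs_apply_le_one [IsProbabilityMeasure μ]
    (hμ : μ {O | O ∈ Matrix.orthogonalGroup n ℝ} = 1) (i j : n) :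
    ∀ᵐ O ∂μ, |O i j| ≤ 1 := by
  filter_upwards [ae_sum_sq_col_eq_one hμ j] with O hO
  rw [← sq_le_one_iff_abs_le_one, ← hO]
  exact Finset.single_le_sum (f := fun i => O i j ^ 2) (fun _ _ => sq_nonneg _)
    (Finset.mem_univ i)

theorem integrable_pow_mul_pow [IsProbabilityMeasure μ]
    (hμ : μ {O | O ∈ Matrix.orthogonalGroup n ℝ} = 1) (i j l : n) (p q : ℕ) :
    Integrable (fun O : Matrix n n ℝ => O i l ^ p * O j l ^ q) μ := by
  refine Integrable.of_bound (C := 1) (((measurable_matrix_apply i l).pow_const p).mul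
    ((measurable_matrix_apply j l).pow_const q)).aestronglyMeasurable ?_
  filter_upwards [ae_abs_apply_le_one hμ i l, ae_abs_apply_le_one hμ j l] with O h1 h2
  rw [Real.norm_eq_abs, abs_mul, abs_pow, abs_pow]
  exact mul_le_one₀ (pow_le_one₀ (abs_nonneg _) h1) (by positivity)
    (pow_le_one₀ (abs_nonneg _) h2)

theorem integral_rotate
    (hμinv : ∀ Q ∈ Matrix.orthogonalGroup n ℝ, Measure.map (fun O => Q * O) μ = μ)
    {i j : n} (hij : i ≠ j) (l : n) {f : ℝ → ℝ → ℝ} (hf : Measurable (Function.uncurry f))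
    (θ : ℝ) :
    ∫ O, f (O i l) (O j l) ∂μ = ∫ O, f (-(Real.cos θ * O i l + Real.sin θ * O j l))
      (Real.cos θ * O j l - Real.sin θ * O i l) ∂μ := by
  set u : n → ℝ := Pi.single i (Real.cos (θ / 2)) + Pi.single j (Real.sin (θ / 2)) with hu
  have hui : u i = Real.cos (θ / 2) := by simp [hu, hij]
  have huj : u j = Real.sin (θ / 2) := by simp [hu, hij.symm]
  have hdot (v : n → ℝ) : u ⬝ᵥ v = Real.cos (θ / 2) * v i + Real.sin (θ / 2) * v j := by
    simp [hu, add_dotProduct]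
  have hQ := one_sub_two_smul_vecMulVec_mem_orthogonalGroup (u := u) (by
    rw [hdot, hui, huj, ← pow_two, ← pow_two, Real.cos_sq_add_sin_sq])
  have hmul (O : Matrix n n ℝ) (k : n) : ((1 - (2 : ℝ) • vecMulVec u u) * O) k l =
      O k l - 2 * u k * (Real.cos (θ / 2) * O i l + Real.sin (θ / 2) * O j l) := by
    rw [← hdot fun k => O k l]
    rw [sub_mul, one_mul, smul_mul_assoc]
    simp only [Matrix.sub_apply, Matrix.smul_apply, smul_eq_mul,
      Matrix.mul_apply, vecMulVec_apply, dotProduct, Finset.mul_sum, mul_assoc]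
  have hc : Real.cos θ = 2 * Real.cos (θ / 2) ^ 2 - 1 := by
    rw [← Real.cos_two_mul, mul_div_cancel₀ _ two_ne_zero]
  have hs : Real.sin θ = 2 * Real.sin (θ / 2) * Real.cos (θ / 2) := by
    rw [← Real.sin_two_mul, mul_div_cancel₀ _ two_ne_zero]
  have hcs := Real.cos_sq_add_sin_sq (θ / 2)
  have hmeas : Measurable fun O : Matrix n n ℝ => f (O i l) (O j l) :=
    hf.comp ((measurable_matrix_apply i l).prodMk (measurable_matrix_apply j l))
  conv_lhs => rw [← hμinv _ hQ]
  rw [integral_map (measurable_matrix_mul_left _).aemeasurable hmeas.aestronglyMeasurable]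
  congr 1 with O
  rw [hmul, hmul, hui, huj, hc, hs]
  congr 1
  · ring
  · linear_combination (-2 * O j l) * hcs

theorem integral_pow_mul_sq [IsProbabilityMeasure μ]
    (hμ : μ {O | O ∈ Matrix.orthogonalGroup n ℝ} = 1)
    (hμinv : ∀ Q ∈ Matrix.orthogonalGroup n ℝ, Measure.map (fun O => Q * O) μ = μ)
    {i j : n} (hij : i ≠ j) (l : n) (m : ℕ) :
    (m + 1) * ∫ O, O i l ^ m * O j l ^ 2 ∂μ = ∫ O, O i l ^ (m + 2) ∂μ := by
  let F : ℝ → Matrix n n ℝ → ℝ := fun θ O =>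
    (-(Real.cos θ * O i l + Real.sin θ * O j l)) ^ (m + 1) *
      (Real.cos θ * O j l - Real.sin θ * O i l)
  let F' : ℝ → Matrix n n ℝ → ℝ := fun θ O =>
    (m + 1) * (-(Real.cos θ * O i l + Real.sin θ * O j l)) ^ m *
      (-(Real.cos θ * O j l - Real.sin θ * O i l)) * (Real.cos θ * O j l - Real.sin θ * O i l) +
    (-(Real.cos θ * O i l + Real.sin θ * O j l)) ^ (m + 1) *
      (-(Real.cos θ * O i l + Real.sin θ * O j l))
  have hi := measurable_matrix_apply i l
  have hj := measurable_matrix_apply j l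
  have hFm (θ : ℝ) : Measurable (F θ) := by fun_prop
  have hFm' (θ : ℝ) : Measurable (F' θ) := by fun_prop
  have hb : ∀ᵐ O ∂μ, ∀ θ : ℝ, |Real.cos θ * O i l + Real.sin θ * O j l| ≤ 2 ∧
      |Real.cos θ * O j l - Real.sin θ * O i l| ≤ 2 := by
    filter_upwards [ae_abs_apply_le_one hμ i l, ae_abs_apply_le_one hμ j l] with O h1 h2 θ
    have h (a b : ℝ) (ha : |a| ≤ 1) (hb : |b| ≤ 1) : |a * b| ≤ 1 := by
      rw [abs_mul]
      exact mul_le_one₀ ha (abs_nonneg _) hb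
    have hc := Real.abs_cos_le_one θ
    have hs := Real.abs_sin_le_one θ
    constructor
    · exact (abs_add_le _ _).trans (by linarith [h _ _ hc h1, h _ _ hs h2])
    · exact (abs_sub _ _).trans (by linarith [h _ _ hc h2, h _ _ hs h1])
  have hint : Integrable (F 0) μ := by
    refine Integrable.of_bound (C := 2 ^ (m + 1) * 2) (hFm 0).aestronglyMeasurable ?_
    filter_upwards [hb] with O hO
    obtain ⟨h1, h2⟩ := hO 0
    simp only [F, Real.norm_eq_abs, abs_mul, abs_pow, abs_neg]
    gcongr
  have hder := (hasDerivAt_integral_of_dominated_loc_of_deriv_le (μ := μ) (F := F) (F' := F')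
    (x₀ := 0) (s := Set.univ)
    (bound := fun _ => (m + 1) * 2 ^ m * 2 * 2 + 2 ^ (m + 1) * 2) Filter.univ_mem
    (.of_forall fun θ => (hFm θ).aestronglyMeasurable) hint (hFm' 0).aestronglyMeasurable
    (by
      filter_upwards [hb] with O hO θ _
      obtain ⟨h1, h2⟩ := hO θ
      refine (norm_add_le _ _).trans ?_
      simp only [Real.norm_eq_abs, abs_mul, abs_pow, abs_neg]
      rw [abs_of_nonneg (by positivity : (0 : ℝ) ≤ m + 1)]
      gcongr)
    (integrable_const _)
    (.of_forall fun O θ _ => by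
      have h1 := (((Real.hasDerivAt_cos θ).mul_const (O i l)).add
        ((Real.hasDerivAt_sin θ).mul_const (O j l))).neg
      have h2 := ((Real.hasDerivAt_cos θ).mul_const (O j l)).sub
        ((Real.hasDerivAt_sin θ).mul_const (O i l))
      refine ((h1.pow (m + 1)).mul h2).congr_deriv ?_
      simp only [F', Pi.add_apply, Pi.neg_apply, Pi.sub_apply, Pi.pow_apply, Nat.cast_add_one,
        add_tsub_cancel_right]
      ring)).2
  have hconst : (fun θ => ∫ O, F θ O ∂μ) = fun _ => ∫ O, O i l ^ (m + 1) * O j l ∂μ := by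
    funext θ
    exact (integral_rotate hμinv hij l (f := fun x y => x ^ (m + 1) * y)
      (by unfold Function.uncurry; fun_prop) θ).symm
  rw [hconst] at hder
  have h0 := hder.unique (hasDerivAt_const _ _)
  have hF0 (O : Matrix n n ℝ) :
      F' 0 O = (-1) ^ m * (O i l ^ (m + 2) - (m + 1) * (O i l ^ m * O j l ^ 2)) := by
    simp only [F', Real.cos_zero, Real.sin_zero, one_mul, zero_mul, add_zero, sub_zero,
      neg_pow (O i l)]
    ring
  simp_rw [hF0] at h0
  have hi1 : Integrable (fun O : Matrix n n ℝ => O i l ^ (m + 2)) μ := by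
    simpa using integrable_pow_mul_pow hμ i i l (m + 2) 0
  rw [integral_const_mul, integral_sub hi1 ((integrable_pow_mul_pow hμ i j l m 2).const_mul _),
    integral_const_mul] at h0
  have := (mul_eq_zero.1 h0).resolve_left (pow_ne_zero _ (by norm_num))
  linarith

theorem moment_apply_succ [IsProbabilityMeasure μ]
    (hμ : μ {O | O ∈ Matrix.orthogonalGroup n ℝ} = 1)
    (hμinv : ∀ Q ∈ Matrix.orthogonalGroup n ℝ, Measure.map (fun O => Q * O) μ = μ)
    (i l : n) (m : ℕ) :
    (Fintype.card n + m) * ∫ O, O i l ^ (m + 2) ∂μ = (m + 1) * ∫ O, O i l ^ m ∂μ := by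
  have h1 : ∫ O, O i l ^ m ∂μ = ∑ j, ∫ O, O i l ^ m * O j l ^ 2 ∂μ := by
    rw [← integral_finsetSum _ fun j _ => integrable_pow_mul_pow hμ i j l m 2]
    refine integral_congr_ae ?_
    filter_upwards [ae_sum_sq_col_eq_one hμ l] with O hO
    rw [← Finset.mul_sum, hO, mul_one]
  have h2 : ∑ j ∈ Finset.univ.erase i, (m + 1) * ∫ O, O i l ^ m * O j l ^ 2 ∂μ =
      (Fintype.card n - 1) * ∫ O, O i l ^ (m + 2) ∂μ := by
    rw [Finset.sum_congr rfl fun j hj =>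
      integral_pow_mul_sq hμ hμinv (Finset.ne_of_mem_erase hj).symm l m, Finset.sum_const,
      nsmul_eq_mul, Finset.card_erase_of_mem (Finset.mem_univ i), Finset.card_univ,
      Nat.cast_pred (Fintype.card_pos_iff.2 ⟨i⟩)]
  rw [h1, ← Finset.add_sum_erase _ _ (Finset.mem_univ i), mul_add, Finset.mul_sum, h2]
  simp_rw [← pow_add]
  ring

theorem moment_apply_sq_eq_moment_betaMeasure [IsProbabilityMeasure μ]
    (hn : 2 ≤ Fintype.card n) (hμ : μ {O | O ∈ Matrix.orthogonalGroup n ℝ} = 1)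
    (hμinv : ∀ Q ∈ Matrix.orthogonalGroup n ℝ, Measure.map (fun O => Q * O) μ = μ)
    (i l : n) (k : ℕ) :
    ∫ O, (O i l ^ 2) ^ k ∂μ =
      ∫ x, x ^ k ∂ProbabilityTheory.betaMeasure (1 / 2) (((Fintype.card n : ℝ) - 1) / 2) := by
  have hn' : (2 : ℝ) ≤ Fintype.card n := by exact_mod_cast hn
  have hb : 0 < ((Fintype.card n : ℝ) - 1) / 2 := by linarith
  have := ProbabilityTheory.isProbabilityMeasureBeta (α := 1 / 2) (by norm_num) hb
  induction k with
  | zero => simp only [pow_zero, integral_const, probReal_univ]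
  | succ k ih =>
    have h1 := moment_apply_succ hμ hμinv i l (2 * k)
    have h2 := moment_betaMeasure_succ (a := 1 / 2) (by norm_num) hb k
    rw [← ih] at h2
    simp_rw [← pow_mul] at h2 ⊢
    rw [show 2 * (k + 1) = 2 * k + 2 by ring]
    push_cast at h1
    have h3 : (Fintype.card n : ℝ) + 2 * k ≠ 0 := by positivity
    refine mul_left_cancel₀ h3 ?_
    linear_combination h1 - 2 * h2

end FirstColumn

/-- Laplace asymptotics of the moment `∫_{O_N(ℝ)} O_{1,1}² e^{s(1+c)O_{1,1}²} dO`
with respect to the Haar probability measure on the orthogonal group: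
`e^{−cs} ∫ O_{1,1}² e^{s(1+c)O_{1,1}²} dO ∼ (Γ(N/2)/Γ(1/2)) e^s / ((1+c)^{(N−1)/2} s^{(N−1)/2})`
as `s → ∞`. -/
theorem stmt_10 (N : ℕ) (hN : 2 ≤ N) (c : ℝ) (hc : -1 < c)
    (μ : Measure (Matrix (Fin N) (Fin N) ℝ)) [IsProbabilityMeasure μ]
    (hμsupp : μ {O | O ∈ Matrix.orthogonalGroup (Fin N) ℝ} = 1)
    (hμinv : ∀ Q ∈ Matrix.orthogonalGroup (Fin N) ℝ,
        Measure.map (fun O => Q * O) μ = μ) :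
    Tendsto
      (fun s : ℝ =>
        (Real.exp (-c * s)
            * ∫ O, (O ⟨0, by omega⟩ ⟨0, by omega⟩) ^ 2
                * Real.exp (s * (1 + c) * (O ⟨0, by omega⟩ ⟨0, by omega⟩) ^ 2) ∂μ)
          / (Real.Gamma ((N : ℝ) / 2) / Real.Gamma (1 / 2) * Real.exp s
              / ((1 + c) ^ (((N : ℝ) - 1) / 2) * s ^ (((N : ℝ) - 1) / 2))))
      atTop (nhds 1) := by
  have hN' : (2 : ℝ) ≤ N := by exact_mod_cast hN
  have hc' : 0 < 1 + c := by linarith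
  set b : ℝ := ((N : ℝ) - 1) / 2 with hb_def
  have hb : 0 < b := by rw [hb_def]; linarith
  have ha : (0 : ℝ) < 1 / 2 := by norm_num
  have := ProbabilityTheory.isProbabilityMeasureBeta ha hb
  set i : Fin N := ⟨0, by omega⟩
  have hY' : ∀ᵐ O ∂μ, 0 ≤ O i i ^ 2 ∧ O i i ^ 2 ≤ 1 := by
    filter_upwards [ae_abs_apply_le_one hμsupp i i] with O hO
    exact ⟨sq_nonneg _, sq_le_one_iff_abs_le_one _ |>.2 hO⟩
  have hmom (k : ℕ) := moment_apply_sq_eq_moment_betaMeasure (by simpa using hN) hμsupp hμinv i i k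
  simp only [Fintype.card_fin] at hmom
  have hI (t : ℝ) : ∫ O, O i i ^ 2 * Real.exp (t * O i i ^ 2) ∂μ =
      (ProbabilityTheory.beta (1 / 2) b)⁻¹ * ∫ x in Set.Ioo (0 : ℝ) 1,
        x ^ (1 / 2 : ℝ) * (1 - x) ^ (b - 1) * Real.exp (t * x) := by
    rw [integral_mul_exp_eq_of_moments μ (ProbabilityTheory.betaMeasure (1 / 2) b)
      ((measurable_matrix_apply i i).pow_const 2) hY' measurable_id
      (ae_betaMeasure_mem_Icc _ _) hmom t]
    simp only [id]
    rw [integral_betaMeasure ha hb]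
    congr 1
    refine setIntegral_congr_fun measurableSet_Ioo fun x hx => ?_
    have : x ^ (1 / 2 : ℝ) = x * x ^ (1 / 2 - 1 : ℝ) := by
      rw [Real.rpow_sub_one hx.1.ne', mul_div_cancel₀ _ hx.1.ne']
    rw [this]
    ring
  have hlim := ((tendsto_setIntegral_rpow_mul_exp ha.le hb).comp
    (tendsto_id.atTop_mul_const hc')).div_const (Real.Gamma b)
  rw [div_self (Real.Gamma_pos_of_pos hb).ne'] at hlim
  refine hlim.congr' ((eventually_gt_atTop 0).mono fun s hs => ?_)
  have hG1 := (Real.Gamma_pos_of_pos hb).ne'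
  have hG2 := (Real.Gamma_pos_of_pos ha).ne'
  have hG3 := (Real.Gamma_pos_of_pos (show 0 < (N : ℝ) / 2 by linarith)).ne'
  have hsb : 1 / 2 + b = (N : ℝ) / 2 := by rw [hb_def]; ring
  have hexp : Real.exp (-(s * (1 + c))) = Real.exp (-c * s) / Real.exp s := by
    rw [← Real.exp_sub]
    congr 1
    ring
  have hp1 := (Real.rpow_pos_of_pos hs b).ne'
  have hp2 := (Real.rpow_pos_of_pos hc' b).ne'
  simp only [Function.comp, id, hI, hexp, Real.mul_rpow hs.le hc'.le, ProbabilityTheory.beta, hsb]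
  field_simp
end

section
/- Let d ≥ 1 be an integer, γ > 0 a real number, and k ≥ 2 an integer with kγ² < 2d. Then ∫_{B(0,1)^k} ∏_{1≤r<l≤k} |u_r − u_l|^{−γ²} du_1⋯du_k < ∞, where B(0,1) is the closed unit ball of ℝ^d and the integration is with respect to Lebesgue measure on (ℝ^d)^k. -/
open MeasureTheory Finset

/-- **Tonelli's theorem** for a product of functions of one coordinate each. -/
theorem lintegral_pi_prod_eq_prod {E : Type*} [MeasurableSpace E] (μ : Measure E) [SigmaFinite μ]
    {n : ℕ} (f : Fin n → E → ENNReal) (hf : ∀ i, Measurable (f i)) :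
    ∫⁻ x : Fin n → E, ∏ i, f i (x i) ∂(Measure.pi fun _ => μ) = ∏ i, ∫⁻ y, f i y ∂μ := by
  induction n with
  | zero => simp
  | succ n ih =>
    rw [← (measurePreserving_piFinSuccAbove (fun _ : Fin (n + 1) => μ) 0).symm.lintegral_comp
      (by fun_prop), lintegral_prod _ (by fun_prop), Fin.prod_univ_succ,
      ← ih _ fun i => hf i.succ, ← lintegral_mul_const _ (hf 0)]
    refine lintegral_congr fun y => ?_
    rw [← lintegral_const_mul _ (by fun_prop)]
    refine lintegral_congr fun z => ?_
    simp [MeasurableEquiv.piFinSuccAbove_symm_apply, Fin.insertNthEquiv, Fin.prod_univ_succ]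

/-- A product over unordered pairs is the geometric mean of the products over stars, hence at most
their arithmetic mean. -/
theorem prod_pairs_rpow_le_sum_star {k : ℕ} (hk : 0 < k) (p : ℝ) (a : Fin k → Fin k → ℝ)
    (ha : ∀ r l, 0 ≤ a r l) (hsymm : ∀ r l, a r l = a l r) :
    ∏ r, ∏ l ∈ univ.filter (fun l => r < l), a r l ^ (-p) ≤
      ∑ r, ∏ l ∈ ({r}ᶜ : Finset (Fin k)), a r l ^ (-(k * p / 2)) := by
  have hk' : (0 : ℝ) < k := by exact_mod_cast hk
  have hnonneg : ∀ r, 0 ≤ ∏ l ∈ ({r}ᶜ : Finset (Fin k)), a r l ^ (-(k * p / 2)) := fun r =>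
    prod_nonneg fun l _ => Real.rpow_nonneg (ha r l) _
  have hstar : ∀ r, (∏ l ∈ ({r}ᶜ : Finset (Fin k)), a r l ^ (-(k * p / 2))) ^ ((k : ℝ)⁻¹) =
      (∏ l ∈ univ.filter (fun l => r < l), a r l ^ (-(p / 2))) *
        ∏ l ∈ univ.filter (fun l => l < r), a r l ^ (-(p / 2)) := by
    intro r
    have hunion : ({r}ᶜ : Finset (Fin k)) =
        univ.filter (fun l => r < l) ∪ univ.filter (fun l => l < r) := by
      ext l
      simp only [mem_compl, mem_singleton, mem_union, mem_filter, mem_univ, true_and]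
      grind
    have hdisj : Disjoint (univ.filter fun l : Fin k => r < l) (univ.filter fun l => l < r) :=
      disjoint_filter.2 fun l _ h => h.le.not_gt
    rw [← Real.finsetProd_rpow _ _ fun l _ => Real.rpow_nonneg (ha r l) _,
      ← prod_union hdisj, ← hunion]
    refine prod_congr rfl fun l _ => ?_
    rw [← Real.rpow_mul (ha r l)]
    congr 1
    field_simp
  have hswap : ∏ r, ∏ l ∈ univ.filter (fun l => l < r), a r l ^ (-(p / 2)) =
      ∏ r, ∏ l ∈ univ.filter (fun l => r < l), a r l ^ (-(p / 2)) := by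
    simp_rw [prod_filter]
    rw [prod_comm]
    simp_rw [hsymm]
  have hgeom : ∏ r, ∏ l ∈ univ.filter (fun l => r < l), a r l ^ (-p) =
      ∏ r, (∏ l ∈ ({r}ᶜ : Finset (Fin k)), a r l ^ (-(k * p / 2))) ^ ((k : ℝ)⁻¹) := by
    simp_rw [hstar]
    rw [prod_mul_distrib, hswap, ← prod_mul_distrib]
    refine prod_congr rfl fun r _ => ?_
    rw [← prod_mul_distrib]
    refine prod_congr rfl fun l _ => ?_
    rw [← sq, ← Real.rpow_mul_natCast (ha r l)]
    congr 1
    push_cast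
    ring
  rw [hgeom]
  refine (Real.geom_mean_le_arith_mean_weighted univ (fun _ => (k : ℝ)⁻¹) _
    (fun _ _ => by positivity) (by simp [hk'.ne']) fun r _ => hnonneg r).trans ?_
  refine sum_le_sum fun r _ => mul_le_of_le_one_left (hnonneg r) (inv_le_one_of_one_le₀ ?_)
  exact_mod_cast hk

section

variable {E : Type*} [NormedAddCommGroup E] [NormedSpace ℝ E] [FiniteDimensional ℝ E]
  [MeasurableSpace E] [BorelSpace E]

theorem lintegral_ball_norm_rpow_lt_top (μ : Measure E) [μ.IsAddHaarMeasure]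
    (hd : 1 ≤ Module.finrank ℝ E) {s : ℝ} (hs : s < Module.finrank ℝ E) (R : ℝ) :
    ∫⁻ w in Metric.ball (0 : E) R, ENNReal.ofReal (‖w‖ ^ (-s)) ∂μ < ⊤ := by
  have h : IntegrableOn (fun w : E => ‖w‖ ^ (-s)) (Metric.ball 0 R) μ :=
    integrableOn_ball_of_norm_le_rpow (C := 1) hd hs
      (Filter.Eventually.of_forall fun w => by
        rw [one_mul, Real.norm_of_nonneg (Real.rpow_nonneg (norm_nonneg w) _)])
      (Measurable.aestronglyMeasurable (by fun_prop))
  exact h.lintegral_lt_top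

theorem lintegral_closedBall_norm_sub_rpow_le (μ : Measure E) [μ.IsAddHaarMeasure] (s : ℝ) {x : E}
    (hx : x ∈ Metric.closedBall (0 : E) 1) :
    ∫⁻ v in Metric.closedBall (0 : E) 1, ENNReal.ofReal (‖x - v‖ ^ (-s)) ∂μ ≤
      ∫⁻ w in Metric.ball (0 : E) 3, ENNReal.ofReal (‖w‖ ^ (-s)) ∂μ := by
  rw [← lintegral_indicator measurableSet_closedBall, ← lintegral_indicator measurableSet_ball,
    ← lintegral_sub_left_eq_self ((Metric.ball (0 : E) 3).indicator _) x]
  refine lintegral_mono fun v => ?_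
  by_cases hv : v ∈ Metric.closedBall (0 : E) 1
  · have hxv : x - v ∈ Metric.ball (0 : E) 3 := by
      rw [mem_closedBall_zero_iff] at hx hv
      rw [mem_ball_zero_iff]
      linarith [norm_sub_le x v]
    simp [Set.indicator_of_mem hv, Set.indicator_of_mem hxv]
  · simp [Set.indicator_of_notMem hv]

theorem lintegral_star_norm_sub_rpow_lt_top (μ : Measure E) [μ.IsAddHaarMeasure]
    (hd : 1 ≤ Module.finrank ℝ E) {s : ℝ} (hs : s < Module.finrank ℝ E) {k : ℕ} (r : Fin k) :
    ∫⁻ u : Fin k → E, ∏ l ∈ ({r}ᶜ : Finset (Fin k)), ENNReal.ofReal (‖u r - u l‖ ^ (-s))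
      ∂(Measure.pi fun _ => μ.restrict (Metric.closedBall 0 1)) < ⊤ := by
  obtain _ | n := k
  · exact r.elim0
  set ν := μ.restrict (Metric.closedBall (0 : E) 1) with hν
  have : IsFiniteMeasure ν :=
    isFiniteMeasure_restrict.2 measure_closedBall_lt_top.ne
  have hball := lintegral_ball_norm_rpow_lt_top μ hd hs 3
  set C := ∫⁻ w in Metric.ball (0 : E) 3, ENNReal.ofReal (‖w‖ ^ (-s)) ∂μ
  rw [← (measurePreserving_piFinSuccAbove (fun _ : Fin (n + 1) => ν) r).symm.lintegral_comp
      (by fun_prop), lintegral_prod _ (by fun_prop)]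
  calc _ ≤ ∫⁻ _ : E, C ^ n ∂ν := by
        refine lintegral_mono_ae ?_
        filter_upwards [ae_restrict_mem measurableSet_closedBall] with x hx
        calc _ = ∫⁻ z : Fin n → E, ∏ i, ENNReal.ofReal (‖x - z i‖ ^ (-s))
                ∂(Measure.pi fun _ => ν) := by
              refine lintegral_congr fun z => ?_
              rw [← Fin.image_succAbove_univ, prod_image r.succAbove_right_injective.injOn]
              simp [MeasurableEquiv.piFinSuccAbove_symm_apply, Fin.insertNthEquiv]
          _ = ∏ _i : Fin n, ∫⁻ v, ENNReal.ofReal (‖x - v‖ ^ (-s)) ∂ν :=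
              lintegral_pi_prod_eq_prod ν (fun _ v => ENNReal.ofReal (‖x - v‖ ^ (-s)))
                fun _ => by fun_prop
          _ ≤ ∏ _i : Fin n, C :=
              prod_le_prod' fun _ _ => lintegral_closedBall_norm_sub_rpow_le μ s hx
          _ = C ^ n := by simp
    _ < ⊤ := by
        rw [lintegral_const]
        exact ENNReal.mul_lt_top (ENNReal.pow_lt_top hball) (measure_lt_top _ _)

end

/-- Finiteness of the `k`-point Riesz-type integral over unit balls:
if `k γ² < 2d` then `∫_{B(0,1)^k} ∏_{r<l} |u_r − u_l|^{−γ²} du < ∞`. -/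
theorem stmt_13 (d : ℕ) (hd : 1 ≤ d) (γ : ℝ) (hγ : 0 < γ) (k : ℕ) (hk : 2 ≤ k)
    (hkγ : k * γ ^ 2 < 2 * d) :
    (∫⁻ u : Fin k → EuclideanSpace ℝ (Fin d) in
        Set.univ.pi fun _ => Metric.closedBall (0 : EuclideanSpace ℝ (Fin d)) 1,
        ENNReal.ofReal
          (∏ r, ∏ l ∈ Finset.univ.filter fun l => r < l,
            ‖u r - u l‖ ^ (-(γ ^ 2)))) < ⊤ := by
  have hs : k * γ ^ 2 / 2 < (Module.finrank ℝ (EuclideanSpace ℝ (Fin d)) : ℝ) := by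
    rw [finrank_euclideanSpace_fin]
    linarith
  rw [volume_pi, Measure.restrict_pi_pi]
  refine (lintegral_mono (g := fun u => ∑ r, ∏ l ∈ ({r}ᶜ : Finset (Fin k)),
    ENNReal.ofReal (‖u r - u l‖ ^ (-(k * γ ^ 2 / 2)))) fun u => ?_).trans_lt ?_
  · refine (ENNReal.ofReal_le_ofReal (prod_pairs_rpow_le_sum_star (by lia) (γ ^ 2)
      (fun r l => ‖u r - u l‖) (fun _ _ => norm_nonneg _) fun _ _ => norm_sub_rev _ _)).trans_eq ?_
    rw [ENNReal.ofReal_sum_of_nonneg fun r _ =>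
      prod_nonneg fun l _ => Real.rpow_nonneg (norm_nonneg _) _]
    exact sum_congr rfl fun r _ =>
      ENNReal.ofReal_prod_of_nonneg fun l _ => Real.rpow_nonneg (norm_nonneg _) _
  · rw [lintegral_finsetSum _ fun r _ => by fun_prop]
    exact ENNReal.sum_lt_top.2 fun r _ =>
      lintegral_star_norm_sub_rpow_lt_top volume (by simpa using hd) hs r
end
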